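/- Let K and L be convex bodies in ℝ³, both centrally symmetric about the origin O, with L contained in the interior of K and L strictly convex. Suppose that for every point z on the boundary of K the graze Σ(L,z) is contained in a plane Δ_z, and that K is almost free with respect to L. Then for every unit vector u ∈ S² there exists a unit vector v(u) ∈ S² such that for every x ∈ u^⊥ ∩ bd K, the plane Δ_x is parallel to v(u), i.e., v(u) lies in the direction (the 2-dimensional linear subspace of which Δ_x is a translate) of Δ_x. -/

import Mathlib

open Metric Set

noncomputable section

/-- The ambient space ℝ³. -/
abbrev E3 := EuclideanSpace ℝ (Fin 3)

/-- The cone generated by `L` with apex `x`: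
`C(L,x) = {x + λ (y - x) : y ∈ L, λ ≥ 0}`. -/
def coneGen (L : Set E3) (x : E3) : Set E3 :=
  {p | ∃ y ∈ L, ∃ l : ℝ, 0 ≤ l ∧ p = x + l • (y - x)}

/-- The support cone `S(L,x)` of `L` from `x`, the boundary of `C(L,x)`. -/
def suppCone (L : Set E3) (x : E3) : Set E3 := frontier (coneGen L x)

/-- The graze `Σ(L,x) = S(L,x) ∩ bd L`. -/
def graze (L : Set E3) (x : E3) : Set E3 := suppCone L x ∩ frontier L

/-- An affine subspace of `ℝ³` is a plane if its direction is 2-dimensional. -/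
def IsPlane (P : AffineSubspace ℝ E3) : Prop :=
  Module.finrank ℝ P.direction = 2

/-- The line through two points. -/
def lineThrough (a b : E3) : Set E3 := ↑(affineSpan ℝ ({a, b} : Set E3))

/-- `K` is almost free with respect to `L` (given the planes `Δ z` containing the
grazes `Σ(L,z)` for `z ∈ bd K`): for every `z ∈ bd K` and every
`w ∈ Π_z ∩ bd K`, where `Π_z` is the plane through the origin parallel to `Δ z`,
the line through `z` and `w` does not meet `L`. -/
def AlmostFree (K L : Set E3) (Δ : E3 → AffineSubspace ℝ E3) : Prop :=
  ∀ z ∈ frontier K, ∀ w ∈ (↑(Δ z).direction : Set E3) ∩ frontier K,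
    Disjoint (lineThrough z w) L

/-!
Write `Π_z` for the plane through the origin parallel to `Δ z`. The heart of the matter is the
symmetry `w ∈ Π_z ↔ z ∈ Π_w` for `z`, `w` in `bd K`. Given it, choose `z ∈ bd K` in `Π_x ∩ Π_y` for
two independent `x`, `y` in `u^⊥ ∩ bd K`: then `Π_z = u^⊥`, hence `z ∈ Π_x` for every
`x ∈ u^⊥ ∩ bd K`.

For the symmetry, represent `Δ z` by its pole, the vector `a z` with `⟪a z, ·⟫ = 1` on `Δ z`. If a
support plane of `L` through `z` and `y` touches `L` at `p`, then `a y - a z` is orthogonal to `p`.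
At a smooth point `z` of `bd K`, letting `y` tend to `z` turns this into a bilinear relation on the
tangent plane between directions and contact points, and integrating that relation shows that the
support cone of `L` from `z` is quadratic, with a polar form `B`.

By almost freeness, two support planes of `L` pass through each of the lines from `z` in the
directions `w - z` and `w + z`, where `w ∈ Π_z ∩ bd K`. The two chords joining their contact points
are parallel to `Π_w`, and `w`, `z` and their common direction are pairwise conjugate with respect
to `B`. If `p`, `p'` are contact points for the two lines and `m` is the point of `Δ z` on the line
`Oz`, then `p + p' - 2 m` is conjugate to `w`, hence parallel to the chords. The pole of `Δ w` takes
the values `1` and `-1` at `p` and `p'`, so `m`, and with it `z`, lies in `Π_w`. Smooth points are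
dense in `bd K` and the poles vary continuously, which gives all `z`.
-/

open Filter Topology
open scoped RealInnerProductSpace

/-! ### The cross product -/

section Cross

/-- The cross product of `ℝ³`, carried over from `Fin 3 → ℝ` to the Euclidean space `E3`. -/
@[irreducible] def cross : E3 →ₗ[ℝ] E3 →ₗ[ℝ] E3 :=
  ((crossProduct (R := ℝ)).compl₁₂ (WithLp.linearEquiv 2 ℝ (Fin 3 → ℝ)).toLinearMap
    (WithLp.linearEquiv 2 ℝ (Fin 3 → ℝ)).toLinearMap).compr₂
    (WithLp.linearEquiv 2 ℝ (Fin 3 → ℝ)).symm.toLinearMap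

lemma cross_eq (u v : E3) :
    cross u v = !₂[u 1 * v 2 - u 2 * v 1, u 2 * v 0 - u 0 * v 2, u 0 * v 1 - u 1 * v 0] := by
  simp [cross, cross_apply]

lemma inner_eq_sum (u v : E3) : ⟪u, v⟫ = u 0 * v 0 + u 1 * v 1 + u 2 * v 2 := by
  simp [PiLp.inner_apply, Fin.sum_univ_three, mul_comm]

@[simp] lemma inner_cross_left (u v : E3) : ⟪cross u v, u⟫ = 0 := by
  simp [inner_eq_sum, cross_eq]; ring

@[simp] lemma inner_cross_right (u v : E3) : ⟪cross u v, v⟫ = 0 := by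
  simp [inner_eq_sum, cross_eq]; ring

@[simp] lemma cross_self_eq_zero (u : E3) : cross u u = 0 := by
  ext i; fin_cases i <;> simp [cross_eq] <;> ring

lemma cross_swap (u v : E3) : cross u v = -cross v u := by
  ext i; fin_cases i <;> simp [cross_eq] <;> ring

lemma cross_cross_eq (u v w : E3) : cross u (cross v w) = ⟪u, w⟫ • v - ⟪u, v⟫ • w := by
  ext i; fin_cases i <;> simp [inner_eq_sum, cross_eq] <;> ring

lemma inner_cross_smul_eq (u v w x : E3) :
    ⟪cross u v, w⟫ • x = ⟪x, u⟫ • cross v w + ⟪x, v⟫ • cross w u + ⟪x, w⟫ • cross u v := by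
  ext i; fin_cases i <;> simp [inner_eq_sum, cross_eq] <;> ring

lemma continuous_cross : Continuous fun x : E3 × E3 ↦ cross x.1 x.2 := by
  simp only [cross_eq]
  refine (PiLp.continuous_toLp 2 _).comp (continuous_pi fun i ↦ ?_)
  fin_cases i <;> dsimp <;> fun_prop

variable {u v w x : E3}

lemma exists_eq_smul_of_cross_eq_zero (hu : u ≠ 0) (h : cross u v = 0) : ∃ t : ℝ, v = t • u := by
  have huu : ⟪u, u⟫ ≠ 0 := inner_self_ne_zero.mpr hu
  have key : ⟪u, v⟫ • u = ⟪u, u⟫ • v := by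
    simpa [h, sub_eq_zero, eq_comm] using cross_cross_eq u u v
  exact ⟨⟪u, u⟫⁻¹ * ⟪u, v⟫, by rw [mul_smul, key, inv_smul_smul₀ huu]⟩

lemma exists_eq_smul_cross (h : cross u v ≠ 0) (hu : ⟪x, u⟫ = 0) (hv : ⟪x, v⟫ = 0) :
    ∃ t : ℝ, x = t • cross u v := by
  have hc : ⟪cross u v, cross u v⟫ ≠ 0 := inner_self_ne_zero.mpr h
  have key := inner_cross_smul_eq u v (cross u v) x
  rw [hu, hv, zero_smul, zero_smul, zero_add, zero_add] at key
  exact ⟨_, by rw [← inv_smul_smul₀ hc x, key, smul_smul]⟩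

lemma exists_eq_smul_add_smul (h : cross u v ≠ 0) (hx : ⟪cross u v, x⟫ = 0) :
    ∃ s t : ℝ, x = s • u + t • v := by
  have hc : ⟪cross u v, cross u v⟫ ≠ 0 := inner_self_ne_zero.mpr h
  have key := inner_cross_smul_eq u v (cross u v) x
  rw [real_inner_comm x] at hx
  rw [hx, cross_swap (cross u v) u, cross_cross_eq, cross_cross_eq] at key
  set c := ⟪cross u v, cross u v⟫
  refine ⟨c⁻¹ * (⟪x, u⟫ * ⟪v, v⟫ - ⟪x, v⟫ * ⟪u, v⟫), c⁻¹ * (⟪x, v⟫ * ⟪u, u⟫ - ⟪x, u⟫ * ⟪v, u⟫),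
    ((eq_inv_smul_iff₀ hc).mpr key).trans ?_⟩
  module

lemma eq_zero_of_inner_eq_zero (h : ⟪cross u v, w⟫ ≠ 0) (hu : ⟪x, u⟫ = 0) (hv : ⟪x, v⟫ = 0)
    (hw : ⟪x, w⟫ = 0) : x = 0 := by
  simpa [hu, hv, hw, h] using inner_cross_smul_eq u v w x

lemma exists_ne_zero_orthogonal (u v : E3) : ∃ g : E3, g ≠ 0 ∧ ⟪u, g⟫ = 0 ∧ ⟪v, g⟫ = 0 := by
  have hrank : Module.finrank ℝ (Submodule.span ℝ {u, v}) ≤ 2 := by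
    have := finrank_span_finset_le_card (R := ℝ) ({u, v} : Finset E3)
    rw [Finset.coe_pair] at this
    exact this.trans Finset.card_le_two
  have hne : (Submodule.span ℝ {u, v})ᗮ ≠ ⊥ := by
    intro h
    have := Submodule.finrank_add_finrank_orthogonal (Submodule.span ℝ {u, v})
    rw [h, finrank_bot, finrank_euclideanSpace_fin] at this
    omega
  obtain ⟨g, hg, hg0⟩ := Submodule.exists_mem_ne_zero_of_ne_bot hne
  exact ⟨g, hg0, hg u (Submodule.subset_span (by simp)), hg v (Submodule.subset_span (by simp))⟩

lemma tendsto_cross {ι : Type*} {F : Filter ι} {u v : ι → E3} {u' v' : E3}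
    (hu : Tendsto u F (𝓝 u')) (hv : Tendsto v F (𝓝 v')) :
    Tendsto (fun i ↦ cross (u i) (v i)) F (𝓝 (cross u' v')) := by
  have h : Tendsto (fun x : E3 × E3 ↦ cross x.1 x.2) (𝓝 (u', v')) (𝓝 (cross u' v')) :=
    continuous_cross.tendsto _
  exact h.comp (hu.prodMk_nhds hv)

lemma inner_cross_sub_sub (u v w : E3) :
    ⟪cross (v - u) (w - u), u⟫ = ⟪cross u v, w⟫ := by
  simp [inner_eq_sum, cross_eq]; ring

lemma tendsto_of_tendsto_inner {ι : Type*} {F : Filter ι} {u v w x : ι → E3}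
    {u' v' w' : E3} {α β γ : ℝ} (hu : Tendsto u F (𝓝 u')) (hv : Tendsto v F (𝓝 v'))
    (hw : Tendsto w F (𝓝 w')) (h : ⟪cross u' v', w'⟫ ≠ 0)
    (hxu : Tendsto (fun i ↦ ⟪x i, u i⟫) F (𝓝 α)) (hxv : Tendsto (fun i ↦ ⟪x i, v i⟫) F (𝓝 β))
    (hxw : Tendsto (fun i ↦ ⟪x i, w i⟫) F (𝓝 γ)) :
    Tendsto x F (𝓝 (⟪cross u' v', w'⟫⁻¹ •
      (α • cross v' w' + β • cross w' u' + γ • cross u' v'))) := by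
  have hdet : Tendsto (fun i ↦ ⟪cross (u i) (v i), w i⟫) F (𝓝 ⟪cross u' v', w'⟫) :=
    (tendsto_cross hu hv).inner hw
  refine ((hdet.inv₀ h).smul (((hxu.smul (tendsto_cross hv hw)).add
    (hxv.smul (tendsto_cross hw hu))).add (hxw.smul (tendsto_cross hu hv)))).congr' ?_
  filter_upwards [hdet.eventually_ne h] with i hi
  rw [← inner_cross_smul_eq, inv_smul_smul₀ hi]

end Cross

lemma tendsto_add_smul_nhdsGT_zero {E : Type*} [NormedAddCommGroup E] [NormedSpace ℝ E]
    (x v : E) : Tendsto (fun ε : ℝ ↦ x + ε • v) (𝓝[>] 0) (𝓝 x) := by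
  have h : Continuous fun ε : ℝ ↦ x + ε • v := by fun_prop
  simpa using (h.tendsto 0).mono_left nhdsWithin_le_nhds

/-! ### Support planes -/

section Contact

variable {E : Type*} [NormedAddCommGroup E] [InnerProductSpace ℝ E] {L : Set E} {n p l x e : E}

/-- `IsContact L n p`: the hyperplane `⟪n, ·⟫ = 1` supports `L` at the point `p`. Support planes
of a body around the origin miss the origin, so each has exactly one such equation. -/
structure IsContact (L : Set E) (n p : E) : Prop where
  mem : p ∈ L
  inner_eq : ⟪n, p⟫ = 1
  inner_le : ∀ l ∈ L, ⟪n, l⟫ ≤ 1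

/-- The line through `x` in direction `e` misses `L`. -/
def AvoidsLine (L : Set E) (x e : E) : Prop :=
  ∀ s : ℝ, x + s • e ∉ L

lemma inner_lt_of_mem_interior {b : ℝ} (hb : ∀ l ∈ L, ⟪n, l⟫ ≤ b) (hn : n ≠ 0)
    (hx : x ∈ interior L) : ⟪n, x⟫ < b := by
  obtain ⟨t, ht, ht0 : 0 < t⟩ :=
    (((tendsto_add_smul_nhdsGT_zero x n).eventually
      (mem_interior_iff_mem_nhds.mp hx)).and self_mem_nhdsWithin).exists
  have hle := hb _ ht
  rw [inner_add_right, inner_smul_right] at hle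
  nlinarith [real_inner_self_pos.mpr hn]

lemma exists_pos_smul_mem (h0 : 0 ∈ interior L) (x : E) : ∃ t : ℝ, 0 < t ∧ t • x ∈ L := by
  have hlim := tendsto_add_smul_nhdsGT_zero 0 x
  simp only [zero_add] at hlim
  obtain ⟨t, ht, ht0⟩ :=
    ((hlim.eventually (mem_interior_iff_mem_nhds.mp h0)).and self_mem_nhdsWithin).exists
  exact ⟨t, ht0, ht⟩

namespace IsContact

lemma ne_zero (h : IsContact L n p) : n ≠ 0 := by
  rintro rfl
  simpa using h.inner_eq

lemma inner_lt (hL : StrictConvex ℝ L) (h : IsContact L n p) (hl : l ∈ L) (hlp : l ≠ p) :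
    ⟪n, l⟫ < 1 := by
  have hmid : (1 / 2 : ℝ) • l + (1 / 2 : ℝ) • p ∈ interior L :=
    hL hl h.mem hlp (by norm_num) (by norm_num) (by norm_num)
  have hlt := inner_lt_of_mem_interior h.inner_le h.ne_zero hmid
  rw [inner_add_right, inner_smul_right, inner_smul_right, h.inner_eq] at hlt
  linarith

lemma eq_of_inner_eq (hL : StrictConvex ℝ L) (h : IsContact L n p) (hl : l ∈ L)
    (h1 : ⟪n, l⟫ = 1) : l = p := by
  by_contra hlp
  exact (h.inner_lt hL hl hlp).ne h1

protected lemma neg (hL : L = -L) (h : IsContact L n p) : IsContact L (-n) (-p) where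
  mem := by rw [hL]; simpa using h.mem
  inner_eq := by simpa using h.inner_eq
  inner_le l hl := by simpa using h.inner_le (-l) (by rw [hL] at hl; exact hl)

end IsContact

lemma exists_norm_le_of_inner_le_one (h0 : 0 ∈ interior L) :
    ∃ R, ∀ n : E, (∀ l ∈ L, ⟪n, l⟫ ≤ 1) → ‖n‖ ≤ R := by
  obtain ⟨r, hr, hball⟩ := nhds_basis_closedBall.mem_iff.mp (mem_interior_iff_mem_nhds.mp h0)
  refine ⟨1 / r, fun n h ↦ ?_⟩
  rcases eq_or_ne n 0 with rfl | hn0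
  · rw [norm_zero]
    positivity
  have hn : 0 < ‖n‖ := norm_pos_iff.mpr hn0
  have hmem : (r / ‖n‖) • n ∈ L := hball <| by
    simp [norm_smul, abs_of_pos hr, div_mul_cancel₀ _ hn.ne']
  have hle := h _ hmem
  rw [inner_smul_right, real_inner_self_eq_norm_sq] at hle
  rw [le_div_iff₀ hr]
  calc ‖n‖ * r = r / ‖n‖ * ‖n‖ ^ 2 := by field_simp
    _ ≤ 1 := hle

lemma isContact_of_tendsto (hL : IsClosed L) {ι : Type*} {F : Filter ι} [F.NeBot] {n p : ι → E}
    {n' p' : E} (hn : Tendsto n F (𝓝 n')) (hp : Tendsto p F (𝓝 p'))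
    (h : ∀ᶠ i in F, IsContact L (n i) (p i)) : IsContact L n' p' where
  mem := hL.mem_of_tendsto hp (h.mono fun _ hi ↦ hi.mem)
  inner_eq := tendsto_nhds_unique (hn.inner hp)
    (tendsto_const_nhds.congr' (h.mono fun _ hi ↦ hi.inner_eq.symm))
  inner_le l hl := le_of_tendsto (hn.inner tendsto_const_nhds) (h.mono fun _ hi ↦ hi.inner_le l hl)

namespace AvoidsLine

lemma notMem (h : AvoidsLine L x e) : x ∉ L := by simpa using h 0

lemma smul (h : AvoidsLine L x e) (t : ℝ) : AvoidsLine L x (t • e) := fun s ↦ by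
  rw [smul_smul]; exact h _

protected lemma neg (h : AvoidsLine L x e) : AvoidsLine L x (-e) := by simpa using h.smul (-1)

lemma exists_separating [CompleteSpace E] (hL : IsCompact L) (hconv : Convex ℝ L) (h0 : 0 ∈ L)
    (h : AvoidsLine L x e) :
    ∃ n : E, ⟪n, x⟫ = 1 ∧ ⟪n, e⟫ = 0 ∧ ∃ c < 1, ∀ l ∈ L, ⟪n, l⟫ ≤ c := by
  let A : AffineSubspace ℝ E := AffineSubspace.mk' x (ℝ ∙ e)
  have hA (s : ℝ) : x + s • e ∈ A := by
    simp [A, AffineSubspace.mem_mk', Submodule.mem_span_singleton]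
  have hdisj : Disjoint L (A : Set E) := Set.disjoint_left.mpr fun y hy hyA ↦ by
    obtain ⟨s, hs⟩ : ∃ s : ℝ, s • e = y - x := by
      simpa [A, AffineSubspace.mem_mk', Submodule.mem_span_singleton] using hyA
    exact h s (by rwa [hs, add_sub_cancel])
  have : FiniteDimensional ℝ A.direction := by
    rw [AffineSubspace.direction_mk']; infer_instance
  obtain ⟨f, a, b, hLa, hab, hbA⟩ := geometric_hahn_banach_compact_closed hconv hL A.convex
    (AffineSubspace.closed_of_finiteDimensional A) hdisj
  have ha : 0 < a := by simpa using hLa 0 h0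
  have hline (s : ℝ) : b < f x + s * f e := by simpa using hbA _ (hA s)
  have hfe : f e = 0 := by
    by_contra hne
    have := hline ((b - f x) / f e)
    rw [div_mul_cancel₀ _ hne] at this
    linarith
  have hfx : b < f x := by simpa using hline 0
  have hfx0 : 0 < f x := by linarith
  have hn (y : E) : ⟪(f x)⁻¹ • (InnerProductSpace.toDual ℝ E).symm f, y⟫ = (f x)⁻¹ * f y := by
    rw [real_inner_smul_left, InnerProductSpace.toDual_symm_apply]
  refine ⟨_, (hn x).trans (inv_mul_cancel₀ hfx0.ne'), (hn e).trans (by rw [hfe, mul_zero]),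
    (f x)⁻¹ * a, ?_, fun l hl ↦ (hn l).trans_le ?_⟩
  · rw [inv_mul_lt_iff₀ hfx0]; linarith
  · exact mul_le_mul_of_nonneg_left (hLa l hl).le (inv_nonneg.mpr hfx0.le)

lemma eventually [CompleteSpace E] (hL : IsCompact L) (hconv : Convex ℝ L) (h0 : 0 ∈ L)
    (h : AvoidsLine L x e) (he : e ≠ 0) {ι : Type*} {F : Filter ι} {x' e' : ι → E}
    (hx' : Tendsto x' F (𝓝 x)) (he' : Tendsto e' F (𝓝 e)) :
    ∀ᶠ i in F, AvoidsLine L (x' i) (e' i) := by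
  obtain ⟨n, hnx, hne, c, hc, hnL⟩ := h.exists_separating hL hconv h0
  obtain ⟨R, hR⟩ := hL.isBounded.exists_norm_le
  have hlim : Tendsto (fun i ↦ ⟪n, x' i⟫ - (R + ‖x' i‖) / ‖e' i‖ * |⟪n, e' i⟫|) F (𝓝 1) := by
    have := ((tendsto_const_nhds (x := n)).inner (𝕜 := ℝ) hx').sub
      ((((tendsto_const_nhds (x := R)).add hx'.norm).div he'.norm (norm_ne_zero_iff.mpr he)).mul
        ((tendsto_const_nhds (x := n)).inner (𝕜 := ℝ) he').abs)
    simpa [hnx, hne] using this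
  filter_upwards [hlim.eventually (lt_mem_nhds hc), he'.eventually_ne he] with i hi hei s hs
  have hs_bound : |s| ≤ (R + ‖x' i‖) / ‖e' i‖ := by
    rw [le_div_iff₀ (norm_pos_iff.mpr hei), ← Real.norm_eq_abs, ← norm_smul]
    calc ‖s • e' i‖ = ‖x' i + s • e' i - x' i‖ := by rw [add_sub_cancel_left]
      _ ≤ ‖x' i + s • e' i‖ + ‖x' i‖ := norm_sub_le _ _
      _ ≤ R + ‖x' i‖ := by gcongr; exact hR _ hs
  have hle := hnL _ hs
  rw [inner_add_right, inner_smul_right] at hle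
  have habs := neg_abs_le (s * ⟪n, e' i⟫)
  rw [abs_mul] at habs
  have := mul_le_mul_of_nonneg_right hs_bound (abs_nonneg ⟪n, e' i⟫)
  linarith

end AvoidsLine

end Contact

section LineContact

variable {L : Set E3} {x e n p m q : E3}

/-- `IsLineContact L x e n p`: the support plane `⟪n, ·⟫ = 1` of `L` at `p` contains the line
through `x` in direction `e`. A line avoiding `L` lies in two support planes; the sign condition
selects one of them, and reversing `e` selects the other. -/
structure IsLineContact (L : Set E3) (x e n p : E3) : Prop extends IsContact L n p where
  inner_base : ⟪n, x⟫ = 1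
  inner_dir : ⟪n, e⟫ = 0
  pos : 0 < ⟪cross x e, p⟫

lemma AvoidsLine.cross_ne_zero (h0 : 0 ∈ L) (h : AvoidsLine L x e) (he : e ≠ 0) :
    cross x e ≠ 0 := by
  intro hcross
  have hx : x ≠ 0 := by
    rintro rfl
    exact h.notMem h0
  obtain ⟨t, rfl⟩ := exists_eq_smul_of_cross_eq_zero hx hcross
  have ht : t ≠ 0 := by rintro rfl; simp at he
  refine h (-t⁻¹) ?_
  rwa [smul_smul, neg_mul, inv_mul_cancel₀ ht, neg_one_smul, add_neg_cancel]

lemma IsContact.inner_cross_ne_zero (h : IsContact L n p) (hx : ⟪n, x⟫ = 1) (he : ⟪n, e⟫ = 0)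
    (hline : AvoidsLine L x e) (hcross : cross x e ≠ 0) : ⟪cross x e, p⟫ ≠ 0 := by
  intro h0
  obtain ⟨s, t, rfl⟩ := exists_eq_smul_add_smul hcross h0
  have hs : s = 1 := by
    simpa [inner_add_right, inner_smul_right, hx, he] using h.inner_eq
  exact hline t (by simpa [hs] using h.mem)

lemma IsContact.isLineContact_or_neg (h : IsContact L n p) (hx : ⟪n, x⟫ = 1) (he : ⟪n, e⟫ = 0)
    (hline : AvoidsLine L x e) (hcross : cross x e ≠ 0) :
    IsLineContact L x e n p ∨ IsLineContact L x (-e) n p := by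
  rcases (h.inner_cross_ne_zero hx he hline hcross).lt_or_gt with hneg | hpos
  · exact .inr ⟨h, hx, by simpa using he, by simpa using hneg⟩
  · exact .inl ⟨h, hx, he, hpos⟩

namespace IsLineContact

lemma shift (h : IsLineContact L x e n p) (s : ℝ) : IsLineContact L (x + s • e) e n p :=
  ⟨h.toIsContact, by simp [inner_add_right, inner_smul_right, h.inner_base, h.inner_dir],
    h.inner_dir, by simpa using h.pos⟩

lemma ne_of_neg (h : IsLineContact L x e n p) (h' : IsLineContact L x (-e) m q) : p ≠ q := by
  rintro rfl
  have := h'.pos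
  rw [map_neg, inner_neg_left] at this
  linarith [h.pos]

lemma cross_ne_zero (h : IsLineContact L x e n p) : cross x e ≠ 0 := fun h0 ↦ by
  simpa [h0] using h.pos

lemma unique (hL : StrictConvex ℝ L) (h : IsLineContact L x e n p) (h' : IsLineContact L x e m q) :
    n = m ∧ p = q := by
  obtain ⟨t, ht⟩ := exists_eq_smul_cross (x := n - m) h.cross_ne_zero
    (by rw [inner_sub_left, h.inner_base, h'.inner_base, sub_self])
    (by rw [inner_sub_left, h.inner_dir, h'.inner_dir, sub_self])
  have hp : 1 - ⟪m, p⟫ = t * ⟪cross x e, p⟫ := by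
    rw [← h.inner_eq, ← inner_sub_left, ht, real_inner_smul_left]
  have hq : ⟪n, q⟫ - 1 = t * ⟪cross x e, q⟫ := by
    rw [← h'.inner_eq, ← inner_sub_left, ht, real_inner_smul_left]
  have ht0 : t = 0 := by
    nlinarith [h.inner_le q h'.mem, h'.inner_le p h.mem, h.pos, h'.pos]
  have hnm : n = m := by rwa [ht0, zero_smul, sub_eq_zero] at ht
  exact ⟨hnm, h'.eq_of_inner_eq hL h.mem (hnm ▸ h.inner_eq)⟩

end IsLineContact

/-- The support plane is found in the pencil of planes through the line by rotating a separating
plane `⟪n₀, ·⟫ = 1` until it touches `L`, i.e. by maximizing `⟪cross x e, ·⟫ / (1 - ⟪n₀, ·⟫)`. -/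
lemma AvoidsLine.exists_isLineContact (hL : IsCompact L) (hconv : Convex ℝ L)
    (h0 : 0 ∈ interior L) (h : AvoidsLine L x e) (he : e ≠ 0) :
    ∃ n p, IsLineContact L x e n p := by
  obtain ⟨n₀, hx, hne, c, hc, hnc⟩ := h.exists_separating hL hconv (interior_subset h0)
  have hpos : ∀ l ∈ L, 0 < 1 - ⟪n₀, l⟫ := fun l hl ↦ by linarith [hnc l hl]
  have hcross := h.cross_ne_zero (interior_subset h0) he
  obtain ⟨p, hp, hmax⟩ := hL.exists_isMaxOn (f := fun l ↦ ⟪cross x e, l⟫ / (1 - ⟪n₀, l⟫))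
    ⟨0, interior_subset h0⟩
    (ContinuousOn.div (by fun_prop) (by fun_prop) fun l hl ↦ (hpos l hl).ne')
  have hratio (l) (hl : l ∈ L) :
      ⟪cross x e, l⟫ * (1 - ⟪n₀, p⟫) ≤ ⟪cross x e, p⟫ * (1 - ⟪n₀, l⟫) :=
    (div_le_div_iff₀ (hpos l hl) (hpos p hp)).mp (hmax hl)
  have hcp : 0 < ⟪cross x e, p⟫ := by
    obtain ⟨t, ht, htL⟩ := exists_pos_smul_mem h0 (cross x e)
    have := hratio _ htL
    have hlt : 0 < ⟪cross x e, t • cross x e⟫ := by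
      rw [inner_smul_right]; exact mul_pos ht (real_inner_self_pos.mpr hcross)
    exact pos_of_mul_pos_left ((mul_pos hlt (hpos p hp)).trans_le this) (hpos _ htL).le
  refine ⟨n₀ + ((1 - ⟪n₀, p⟫) / ⟪cross x e, p⟫) • cross x e, p, ⟨hp, ?_, fun l hl ↦ ?_⟩,
    ?_, ?_, hcp⟩
  · rw [inner_add_left, real_inner_smul_left, div_mul_cancel₀ _ hcp.ne']; ring
  · have hle : (1 - ⟪n₀, p⟫) * ⟪cross x e, l⟫ / ⟪cross x e, p⟫ ≤ 1 - ⟪n₀, l⟫ := by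
      rw [div_le_iff₀ hcp]; linarith [hratio l hl]
    rw [inner_add_left, real_inner_smul_left, div_mul_eq_mul_div]
    linarith
  · simp [inner_add_left, real_inner_smul_left, hx]
  · simp [inner_add_left, real_inner_smul_left, hne]

lemma AvoidsLine.exists_isLineContact_pair (hL : IsCompact L) (hconv : Convex ℝ L)
    (h0 : 0 ∈ interior L) (h : AvoidsLine L x e) (he : e ≠ 0) :
    ∃ n p m q, IsLineContact L x e n p ∧ IsLineContact L x (-e) m q ∧ p ≠ q := by
  obtain ⟨n, p, hp⟩ := h.exists_isLineContact hL hconv h0 he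
  obtain ⟨m, q, hq⟩ := h.neg.exists_isLineContact hL hconv h0 (neg_ne_zero.mpr he)
  exact ⟨n, p, m, q, hp, hq, hp.ne_of_neg hq⟩

section Tendsto

variable {ι : Type*} {F : Filter ι} {x' e' : ι → E3}

lemma isLineContact_of_tendsto [F.NeBot] (hL : IsClosed L) (hline : AvoidsLine L x e)
    (hcross : cross x e ≠ 0) (hx : Tendsto x' F (𝓝 x)) (he : Tendsto e' F (𝓝 e)) {n' p' : ι → E3}
    (hn : Tendsto n' F (𝓝 n)) (hp : Tendsto p' F (𝓝 p))
    (h : ∀ᶠ i in F, IsLineContact L (x' i) (e' i) (n' i) (p' i)) : IsLineContact L x e n p := by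
  have hc : IsContact L n p := isContact_of_tendsto hL hn hp (h.mono fun _ hi ↦ hi.toIsContact)
  have hbase : ⟪n, x⟫ = 1 := tendsto_nhds_unique (hn.inner hx)
    (tendsto_const_nhds.congr' (h.mono fun _ hi ↦ hi.inner_base.symm))
  have hdir : ⟪n, e⟫ = 0 := tendsto_nhds_unique (hn.inner he)
    (tendsto_const_nhds.congr' (h.mono fun _ hi ↦ hi.inner_dir.symm))
  have hnonneg : 0 ≤ ⟪cross x e, p⟫ :=
    ge_of_tendsto ((tendsto_cross hx he).inner hp) (h.mono fun _ hi ↦ hi.pos.le)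
  exact ⟨hc, hbase, hdir, hnonneg.lt_of_ne (hc.inner_cross_ne_zero hbase hdir hline hcross).symm⟩

lemma IsLineContact.exists_tendsto (hL : IsCompact L) (hstrict : StrictConvex ℝ L)
    (h0 : 0 ∈ interior L) (hline : AvoidsLine L x e) (h : IsLineContact L x e n p)
    (hx : Tendsto x' F (𝓝 x)) (he : Tendsto e' F (𝓝 e)) :
    ∃ n' p' : ι → E3, (∀ᶠ i in F, IsLineContact L (x' i) (e' i) (n' i) (p' i)) ∧
      Tendsto n' F (𝓝 n) ∧ Tendsto p' F (𝓝 p) := by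
  have he0 : e ≠ 0 := by rintro rfl; simpa using h.pos
  have hex : ∀ᶠ i in F, ∃ y : E3 × E3, IsLineContact L (x' i) (e' i) y.1 y.2 := by
    filter_upwards [hline.eventually hL hstrict.convex (interior_subset h0) he0 hx he,
      he.eventually_ne he0] with i hi hei
    simpa using hi.exists_isLineContact hL hstrict.convex h0 hei
  obtain ⟨y, hy⟩ := Filter.skolem.mp hex
  obtain ⟨R, hR⟩ := exists_norm_le_of_inner_le_one h0
  have hlim : Tendsto y F (𝓝 (n, p)) := by
    refine ((isCompact_closedBall (0 : E3) R).prod hL).tendsto_nhds_of_unique_mapClusterPt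
      (hy.mono fun i hi ↦ ⟨by simpa using hR _ hi.inner_le, hi.mem⟩) fun z _ hz ↦ ?_
    obtain ⟨U, hU, hUz⟩ := mapClusterPt_iff_ultrafilter.mp hz
    have hz : IsLineContact L x e z.1 z.2 :=
      isLineContact_of_tendsto hL.isClosed hline h.cross_ne_zero (hx.mono_left hU)
        (he.mono_left hU) ((continuous_fst.tendsto z).comp hUz)
        ((continuous_snd.tendsto z).comp hUz) (hU hy)
    exact Prod.ext_iff.mpr (hz.unique hstrict h)
  exact ⟨_, _, hy, (continuous_fst.tendsto (n, p)).comp hlim,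
    (continuous_snd.tendsto (n, p)).comp hlim⟩

end Tendsto

lemma IsContact.mem_graze (h : IsContact L n p) (hx : ⟪n, x⟫ = 1) : p ∈ graze L x := by
  have hp : p ∈ coneGen L x := ⟨p, h.mem, 1, zero_le_one, by simp⟩
  have hcone : ∀ y ∈ coneGen L x, ⟪n, y⟫ ≤ 1 := by
    rintro _ ⟨y, hy, t, ht, rfl⟩
    rw [inner_add_right, inner_smul_right, inner_sub_right, hx]
    nlinarith [h.inner_le y hy]
  exact ⟨⟨subset_closure hp, fun hi ↦ (inner_lt_of_mem_interior hcone h.ne_zero hi).ne h.inner_eq⟩,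
    ⟨subset_closure h.mem, fun hi ↦
      (inner_lt_of_mem_interior h.inner_le h.ne_zero hi).ne h.inner_eq⟩⟩

end LineContact

section ContactSet

variable {L : Set E3} {x e n p q r m k : E3}

/-- The points at which the support planes of `L` through `x` touch `L`. For `x ∉ L` this is the
graze of `L` from `x`. -/
def contactSet (L : Set E3) (x : E3) : Set E3 :=
  {p | ∃ n, IsContact L n p ∧ ⟪n, x⟫ = 1}

lemma contactSet_subset_graze (L : Set E3) (x : E3) : contactSet L x ⊆ graze L x :=
  fun _ ⟨_, hn, hx⟩ ↦ hn.mem_graze hx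

lemma IsLineContact.mem_contactSet (h : IsLineContact L x e n p) : p ∈ contactSet L x :=
  ⟨n, h.toIsContact, h.inner_base⟩

lemma avoidsLine_of_inner_lt (hx : ⟪n, x⟫ = 1) (he : ⟪n, e⟫ = 0) (hL : ∀ l ∈ L, ⟪n, l⟫ < 1) :
    AvoidsLine L x e := fun s hs ↦ by
  simpa [inner_add_right, inner_smul_right, hx, he] using hL _ hs

lemma exists_avoidsLine_of_notMem (hL : IsCompact L) (hconv : Convex ℝ L) (h0 : 0 ∈ L)
    (hx : x ∉ L) (V : Submodule ℝ E3) (hV : 1 < Module.finrank ℝ V) :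
    ∃ e ∈ V, e ≠ 0 ∧ AvoidsLine L x e := by
  obtain ⟨n, hnx, -, c, hc, hnL⟩ :=
    AvoidsLine.exists_separating (x := x) (e := 0) hL hconv h0 fun s ↦ by simpa using hx
  have hker : LinearMap.ker ((innerₗ E3 n).domRestrict V) ≠ ⊥ :=
    LinearMap.ker_ne_bot_of_finrank_lt (by simpa using hV)
  obtain ⟨⟨e, heV⟩, he, he0⟩ := Submodule.exists_mem_ne_zero_of_ne_bot hker
  exact ⟨e, heV, by simpa using he0, avoidsLine_of_inner_lt hnx (by simpa using he)
    fun l hl ↦ (hnL l hl).trans_lt hc⟩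

/-- A suitable convex combination of the two normals separates the line from `L`. -/
lemma avoidsLine_sub_of_isContact (hL : StrictConvex ℝ L) (hp : IsContact L n p)
    (hq : IsContact L m q) (hnx : ⟪n, x⟫ = 1) (hmx : ⟪m, x⟫ = 1) (hpq : p ≠ q) :
    AvoidsLine L x (p - q) := by
  have hnq : 0 < 1 - ⟪n, q⟫ := by linarith [hp.inner_lt hL hq.mem hpq.symm]
  have hmp : 0 < 1 - ⟪m, p⟫ := by linarith [hq.inner_lt hL hp.mem hpq]
  have hsum : 0 < 1 - ⟪n, q⟫ + (1 - ⟪m, p⟫) := by linarith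
  set N := (1 - ⟪m, p⟫) • n + (1 - ⟪n, q⟫) • m with hN
  have hinner (y : E3) : ⟪N, y⟫ = (1 - ⟪m, p⟫) * ⟪n, y⟫ + (1 - ⟪n, q⟫) * ⟪m, y⟫ := by
    rw [hN, inner_add_left, real_inner_smul_left, real_inner_smul_left]
  refine avoidsLine_of_inner_lt (n := (1 - ⟪n, q⟫ + (1 - ⟪m, p⟫))⁻¹ • N) ?_ ?_ fun l hl ↦ ?_ <;>
    rw [real_inner_smul_left, hinner]
  · rw [hnx, hmx, inv_mul_eq_one₀ hsum.ne']; ring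
  · rw [inner_sub_right, inner_sub_right, hp.inner_eq, hq.inner_eq]; ring
  · rw [inv_mul_lt_iff₀ hsum]
    rcases eq_or_ne l p with rfl | hlp
    · rw [hp.inner_eq]; nlinarith
    · nlinarith [hp.inner_lt hL hl hlp, hq.inner_le l hl]

lemma IsContact.not_sbtw (hL : StrictConvex ℝ L) (hp : p ∈ L) (hq : q ∈ L)
    (hr : IsContact L k r) : ¬ Sbtw ℝ p r q := fun h ↦ by
  obtain ⟨t, ht, htr⟩ := h.mem_image_Ioo
  have hint : r ∈ interior L := hL.openSegment_subset hp hq h.left_ne_right <| by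
    rw [openSegment_eq_image_lineMap]; exact ⟨t, ht, htr⟩
  exact (inner_lt_of_mem_interior hr.inner_le hr.ne_zero hint).ne hr.inner_eq

lemma cross_sub_sub_ne_zero_of_isContact (hL : StrictConvex ℝ L) (hp : IsContact L n p)
    (hq : IsContact L m q) (hr : IsContact L k r) (hpq : p ≠ q) (hpr : p ≠ r) (hqr : q ≠ r) :
    cross (q - p) (r - p) ≠ 0 := fun h ↦ by
  obtain ⟨t, ht⟩ := exists_eq_smul_of_cross_eq_zero (sub_ne_zero.mpr hpq.symm) h
  have hcol : Collinear ℝ {p, q, r} := by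
    refine (collinear_iff_of_mem (Set.mem_insert p _)).mpr ⟨q - p, ?_⟩
    rintro _ (rfl | rfl | rfl)
    exacts [⟨0, by simp⟩, ⟨1, by simp⟩, ⟨t, by simp [← ht]⟩]
  rcases hcol.wbtw_or_wbtw_or_wbtw with h | h | h
  · exact hq.not_sbtw hL hp.mem hr.mem ⟨h, hpq.symm, hqr⟩
  · exact hr.not_sbtw hL hq.mem hp.mem ⟨h, hqr.symm, hpr.symm⟩
  · exact hp.not_sbtw hL hr.mem hq.mem ⟨h, hpr, hpq⟩

lemma exists_three_contacts (hL : IsCompact L) (hstrict : StrictConvex ℝ L)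
    (h0 : 0 ∈ interior L) (hx : x ∉ L) :
    ∃ p ∈ contactSet L x, ∃ q ∈ contactSet L x, ∃ r ∈ contactSet L x,
      cross (q - p) (r - p) ≠ 0 := by
  obtain ⟨e, -, he, hline⟩ := exists_avoidsLine_of_notMem hL hstrict.convex (interior_subset h0) hx
    ⊤ (by simp)
  obtain ⟨n, p, m, q, hp, hq, hpq⟩ := hline.exists_isLineContact_pair hL hstrict.convex h0 he
  have hline' := avoidsLine_sub_of_isContact hstrict hq.toIsContact hp.toIsContact hq.inner_base
    hp.inner_base hpq.symm
  obtain ⟨n', p', m', q', hp', hq', -⟩ :=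
    hline'.exists_isLineContact_pair hL hstrict.convex h0 (sub_ne_zero.mpr hpq.symm)
  by_contra! hcol
  have hproj (r) (hr : r ∈ contactSet L x) : ⟪cross x (q - p), r⟫ = ⟪cross x (q - p), p⟫ := by
    obtain ⟨t, ht⟩ := exists_eq_smul_of_cross_eq_zero (sub_ne_zero.mpr hpq.symm)
      (hcol p hp.mem_contactSet q hq.mem_contactSet r hr)
    rw [← sub_eq_zero, ← inner_sub_right, ht, inner_smul_right, inner_cross_right, mul_zero]
  have h1 := hp'.pos
  have h2 := hq'.pos
  rw [map_neg, inner_neg_left, hproj q' hq'.mem_contactSet] at h2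
  rw [hproj p' hp'.mem_contactSet] at h1
  linarith

lemma IsContact.exists_isLineContact (hL : StrictConvex ℝ L) (h0 : 0 ∈ L) (hx : x ∉ L)
    (h : IsContact L n p) (hnx : ⟪n, x⟫ = 1) :
    ∃ e, AvoidsLine L x e ∧ IsLineContact L x e n p := by
  have hpx : p - x ≠ 0 := sub_ne_zero.mpr (by rintro rfl; exact hx h.mem)
  have hnpx : ⟪n, p - x⟫ = 0 := by rw [inner_sub_right, h.inner_eq, hnx, sub_self]
  set e := cross n (p - x)
  have he0 : e ≠ 0 := fun h0 ↦ by
    obtain ⟨t, ht⟩ := exists_eq_smul_of_cross_eq_zero h.ne_zero h0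
    rw [ht, inner_smul_right, mul_eq_zero, or_iff_left (inner_self_ne_zero.mpr h.ne_zero)] at hnpx
    exact hpx (by rw [ht, hnpx, zero_smul])
  have hne : ⟪n, e⟫ = 0 := by rw [real_inner_comm, inner_cross_left]
  have hline : AvoidsLine L x e := fun s hs ↦ by
    have hps : p - x = s • e := by
      rw [← h.eq_of_inner_eq hL hs (by simp [inner_add_right, inner_smul_right, hnx, hne]),
        add_sub_cancel_left]
    refine hpx (inner_self_eq_zero (𝕜 := ℝ).mp ?_)
    nth_rewrite 1 [hps]
    rw [real_inner_smul_left, inner_cross_right, mul_zero]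
  rcases h.isLineContact_or_neg hnx hne hline (hline.cross_ne_zero h0 he0) with h | h
  exacts [⟨e, hline, h⟩, ⟨-e, hline.neg, h⟩]

lemma exists_tendsto_mem_contactSet (hL : IsCompact L) (hstrict : StrictConvex ℝ L)
    (h0 : 0 ∈ interior L) (hx : x ∉ L) {ι : Type*} {F : Filter ι} {x' : ι → E3}
    (hx' : Tendsto x' F (𝓝 x)) (hp : p ∈ contactSet L x) :
    ∃ p' : ι → E3, (∀ᶠ i in F, p' i ∈ contactSet L (x' i)) ∧ Tendsto p' F (𝓝 p) := by
  obtain ⟨n, hn, hnx⟩ := hp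
  obtain ⟨e, hline, he⟩ := hn.exists_isLineContact hstrict (interior_subset h0) hx hnx
  obtain ⟨n', p', hev, -, hp'⟩ := he.exists_tendsto hL hstrict h0 hline hx' tendsto_const_nhds
  exact ⟨p', hev.mono fun _ hi ↦ hi.mem_contactSet, hp'⟩

end ContactSet

section Planes

variable {u v p q r d : E3} {P Q : AffineSubspace ℝ E3}

lemma mem_iff_inner_cross_eq_zero {V : Submodule ℝ E3} (hV : Module.finrank ℝ V = 2) (hu : u ∈ V)
    (hv : v ∈ V) (h : cross u v ≠ 0) : d ∈ V ↔ ⟪cross u v, d⟫ = 0 := by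
  have hle : (ℝ ∙ cross u v)ᗮ ≤ V := fun d hd ↦ by
    obtain ⟨s, t, rfl⟩ :=
      exists_eq_smul_add_smul h (Submodule.mem_orthogonal_singleton_iff_inner_right.mp hd)
    exact V.add_mem (V.smul_mem s hu) (V.smul_mem t hv)
  have hrank : Module.finrank ℝ (ℝ ∙ cross u v)ᗮ = 2 := by
    have : Fact (Module.finrank ℝ E3 = 2 + 1) := ⟨by simp⟩
    exact Submodule.finrank_orthogonal_span_singleton h
  rw [← Submodule.eq_of_le_of_finrank_eq hle (hrank.trans hV.symm),
    Submodule.mem_orthogonal_singleton_iff_inner_right]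

namespace IsPlane

lemma mem_direction_iff (hP : IsPlane P) (hp : p ∈ P) (hq : q ∈ P) (hr : r ∈ P)
    (h : cross (q - p) (r - p) ≠ 0) : d ∈ P.direction ↔ ⟪cross (q - p) (r - p), d⟫ = 0 :=
  mem_iff_inner_cross_eq_zero hP (AffineSubspace.vsub_mem_direction hq hp)
    (AffineSubspace.vsub_mem_direction hr hp) h

lemma eq_of_mem (hP : IsPlane P) (hQ : IsPlane Q) (hp : p ∈ P) (hq : q ∈ P) (hr : r ∈ P)
    (hp' : p ∈ Q) (hq' : q ∈ Q) (hr' : r ∈ Q) (h : cross (q - p) (r - p) ≠ 0) : P = Q :=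
  AffineSubspace.ext_of_direction_eq (Submodule.ext fun _ ↦ by
    rw [hP.mem_direction_iff hp hq hr h, hQ.mem_direction_iff hp' hq' hr' h]) ⟨p, hp, hp'⟩

end IsPlane

end Planes

/-! ### Radial projection -/

section RadialProjection

lemma neg_mem_frontier {E : Type*} [NormedAddCommGroup E] {K : Set E} {x : E} (hK : K = -K)
    (hx : x ∈ frontier K) : -x ∈ frontier K := by
  have h := (Homeomorph.neg E).image_frontier K
  rw [Homeomorph.coe_neg, Set.image_neg_eq_neg, Set.image_neg_eq_neg, ← hK] at h
  rwa [← h, Set.neg_mem_neg]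

variable {E : Type*} [NormedAddCommGroup E] [NormedSpace ℝ E] {K : Set E} {x y p : E} {s : ℝ}

/-- The central projection of `x ≠ 0` from the origin onto the boundary of `K`. -/
def radialProj (K : Set E) (x : E) : E :=
  (gauge K x)⁻¹ • x

lemma gauge_pos_of_ne_zero (h0 : K ∈ 𝓝 0) (hb : Bornology.IsBounded K) (hx : x ≠ 0) :
    0 < gauge K x :=
  (gauge_pos (absorbent_nhds_zero h0) (NormedSpace.isVonNBounded_of_isBounded ℝ hb)).mpr hx

lemma radialProj_mem_frontier (hK : Convex ℝ K) (h0 : K ∈ 𝓝 0) (hb : Bornology.IsBounded K)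
    (hx : x ≠ 0) : radialProj K x ∈ frontier K := by
  have hpos := gauge_pos_of_ne_zero h0 hb hx
  rw [← gauge_eq_one_iff_mem_frontier hK h0, radialProj,
    gauge_smul_of_nonneg (inv_nonneg.mpr hpos.le), smul_eq_mul, inv_mul_cancel₀ hpos.ne']

lemma radialProj_of_mem_frontier (hK : Convex ℝ K) (h0 : K ∈ 𝓝 0) (hx : x ∈ frontier K) :
    radialProj K x = x := by
  rw [radialProj, (gauge_eq_one_iff_mem_frontier hK h0).mpr hx, inv_one, one_smul]

lemma continuousAt_radialProj (hK : Convex ℝ K) (h0 : K ∈ 𝓝 0) (hb : Bornology.IsBounded K)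
    (hx : x ≠ 0) : ContinuousAt (radialProj K) x :=
  ((continuous_gauge hK h0).continuousAt.inv₀ (gauge_pos_of_ne_zero h0 hb hx).ne').smul
    continuousAt_id

lemma exists_continuousOn_ray_frontier (hK : Convex ℝ K) (hb : Bornology.IsBounded K)
    (hp : p ∈ interior K) : ∃ X : E → E, ContinuousOn X {0}ᶜ ∧ ∀ d ≠ 0, X d ∈ frontier K ∧
      ∃ t : ℝ, 0 < t ∧ X d = p + t • d := by
  set K' : Set E := Homeomorph.addLeft p ⁻¹' K with hK'
  have hconv : Convex ℝ K' := hK.translate_preimage_right p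
  have h0 : K' ∈ 𝓝 0 := (Homeomorph.addLeft p).continuous.continuousAt.preimage_mem_nhds <| by
    simpa using mem_interior_iff_mem_nhds.mp hp
  have hb' : Bornology.IsBounded K' := by
    rw [hK', ← Homeomorph.image_symm]
    exact (LipschitzWith.of_dist_le_mul (K := 1) fun x y ↦ by
      simp [Homeomorph.addLeft_symm]).isBounded_image hb
  refine ⟨fun d ↦ p + radialProj K' d, continuousOn_const.add fun d hd ↦
    (continuousAt_radialProj hconv h0 hb' hd).continuousWithinAt, fun d hd ↦
    ⟨?_, _, inv_pos.mpr (gauge_pos_of_ne_zero h0 hb' hd), rfl⟩⟩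
  have h := radialProj_mem_frontier hconv h0 hb' hd
  rwa [← Homeomorph.preimage_frontier] at h

lemma mem_Ioo_of_add_smul_sub_mem_interior (hK : Convex ℝ K) (hx : x ∈ frontier K)
    (hy : y ∈ frontier K) (h : x + s • (y - x) ∈ interior K) : s ∈ Ioo 0 1 := by
  constructor <;> by_contra! hs
  · refine hx.2 ?_
    have hs' : 0 < 1 - s := by linarith
    convert hK.combo_interior_closure_mem_interior (a := 1 / (1 - s)) (b := -s / (1 - s)) h
      hy.1 (by positivity) (div_nonneg (by linarith) hs'.le) (by field_simp; ring) using 1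
    match_scalars <;> field_simp <;> ring
  · refine hy.2 ?_
    have hs' : 0 < s := by linarith
    convert hK.combo_interior_closure_mem_interior (a := 1 / s) (b := (s - 1) / s) h
      hx.1 (by positivity) (div_nonneg (by linarith) hs'.le) (by field_simp; ring) using 1
    match_scalars <;> field_simp
    ring

lemma exists_forall_dist_lt_avoidsLine {E : Type*} [NormedAddCommGroup E] [InnerProductSpace ℝ E]
    {K L : Set E} (hK : Convex ℝ K) (hL : IsCompact L) (hLK : L ⊆ interior K) :
    ∃ δ > 0, ∀ x ∈ frontier K, ∀ y ∈ frontier K, dist x y < δ → AvoidsLine L x (y - x) := by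
  obtain ⟨δ, hδ, hsub⟩ := hL.exists_thickening_subset_open isOpen_interior hLK
  refine ⟨δ, hδ, fun x hx y hy hd s hs ↦ ?_⟩
  obtain ⟨hs0, hs1⟩ := mem_Ioo_of_add_smul_sub_mem_interior hK hx hy (hLK hs)
  refine hx.2 (hsub (mem_thickening_iff.mpr ⟨_, hs, ?_⟩))
  rw [dist_self_add_right, norm_smul, Real.norm_of_nonneg hs0.le, ← dist_eq_norm']
  nlinarith [dist_nonneg (x := x) (y := y)]

end RadialProjection

section CoplanarContacts

variable {L : Set E3} {w n p m q k r : E3} {P : AffineSubspace ℝ E3}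

lemma IsContact.cross_sub_sub_ne_zero (hL : StrictConvex ℝ L) (hw : w ∉ L) (hp : IsContact L n p)
    (hq : q ∈ L) (hnw : ⟪n, w⟫ = 1) (hpq : p ≠ q) : cross (p - w) (q - w) ≠ 0 := fun h0 ↦ by
  have hpw : p - w ≠ 0 := sub_ne_zero.mpr (by rintro rfl; exact hw hp.mem)
  obtain ⟨t, ht⟩ := exists_eq_smul_of_cross_eq_zero hpw h0
  have hnq : ⟪n, q - w⟫ = 0 := by
    rw [ht, inner_smul_right, inner_sub_right, hp.inner_eq, hnw, sub_self, mul_zero]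
  rw [inner_sub_right, hnw, sub_eq_zero] at hnq
  exact hpq (hp.eq_of_inner_eq hL hq hnq).symm

/-- Write `r - w` in terms of `p - w` and `q - w`: its coefficients are nonnegative by the normals
`n` and `m`, and `k` shows that they cannot both be positive. -/
lemma eq_or_eq_of_inner_cross_eq_zero (hL : StrictConvex ℝ L) (hw : w ∉ L) (hp : IsContact L n p)
    (hq : IsContact L m q) (hr : IsContact L k r) (hnw : ⟪n, w⟫ = 1) (hmw : ⟪m, w⟫ = 1)
    (hkw : ⟪k, w⟫ = 1) (hpq : p ≠ q) (h : ⟪cross (p - w) (q - w), r - w⟫ = 0) :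
    r = p ∨ r = q := by
  obtain ⟨s, t, hst⟩ := exists_eq_smul_add_smul (hp.cross_sub_sub_ne_zero hL hw hq.mem hnw hpq) h
  obtain rfl : r = w + (s • (p - w) + t • (q - w)) := by rw [← hst]; abel
  have hnr := hp.inner_le _ hr.mem
  have hmr := hq.inner_le _ hr.mem
  have hkr := hr.inner_eq
  simp only [inner_add_right, inner_smul_right, inner_sub_right, hp.inner_eq, hq.inner_eq, hnw, hmw,
    hkw] at hnr hmr hkr
  have ht : 0 ≤ t := by nlinarith [hp.inner_lt hL hq.mem hpq.symm]
  have hs : 0 ≤ s := by nlinarith [hq.inner_lt hL hp.mem hpq]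
  by_contra! hne
  have hkp := sub_pos.mpr (hr.inner_lt hL hp.mem hne.1.symm)
  have hkq := sub_pos.mpr (hr.inner_lt hL hq.mem hne.2.symm)
  have hs0 : s = 0 := by nlinarith [mul_nonneg hs hkp.le, mul_nonneg ht hkq.le]
  have ht0 : t = 0 := by nlinarith [mul_nonneg hs hkp.le, mul_nonneg ht hkq.le]
  exact hw (by simpa [hs0, ht0] using hr.mem)

lemma IsPlane.eq_or_eq_of_isContact (hP : IsPlane P) (hL : StrictConvex ℝ L) (hw : w ∉ L)
    (hwP : w ∈ P) (hp : IsContact L n p) (hq : IsContact L m q) (hr : IsContact L k r)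
    (hnw : ⟪n, w⟫ = 1) (hmw : ⟪m, w⟫ = 1) (hkw : ⟪k, w⟫ = 1) (hpq : p ≠ q) (hpP : p ∈ P)
    (hqP : q ∈ P) (hrP : r ∈ P) : r = p ∨ r = q :=
  eq_or_eq_of_inner_cross_eq_zero hL hw hp hq hr hnw hmw hkw hpq <|
    (hP.mem_direction_iff hwP hpP hqP (hp.cross_sub_sub_ne_zero hL hw hq.mem hnw hpq)).mp
      (AffineSubspace.vsub_mem_direction hrP hwP)

end CoplanarContacts

lemma AvoidsLine.exists_isContact_pair {L : Set E3} {x y : E3} (hL : IsCompact L)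
    (hconv : Convex ℝ L) (h0 : 0 ∈ interior L) (h : AvoidsLine L x (y - x)) (hxy : x ≠ y) :
    ∃ n p m q, IsContact L n p ∧ IsContact L m q ∧ p ≠ q ∧ ⟪n, x⟫ = 1 ∧ ⟪n, y⟫ = 1 ∧
      ⟪m, x⟫ = 1 ∧ ⟪m, y⟫ = 1 := by
  obtain ⟨n, p, m, q, hp, hq, hpq⟩ := h.exists_isLineContact_pair hL hconv h0
    (sub_ne_zero.mpr hxy.symm)
  refine ⟨n, p, m, q, hp.toIsContact, hq.toIsContact, hpq, hp.inner_base, ?_, hq.inner_base, ?_⟩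
  · simpa using (hp.shift 1).inner_base
  · simpa using (hq.shift (-1)).inner_base

/-! ### Almost free pairs -/

/-- Bodies `K`, `L` and planes `Δ` as in the theorem: `K` and `L` are symmetric about the origin,
`L` is strictly convex and lies in the interior of `K`, the plane `Δ z` contains the graze of `L`
from `z ∈ bd K`, and `K` is almost free with respect to `L`. -/
structure AlmostFreePair (K L : Set E3) (Δ : E3 → AffineSubspace ℝ E3) : Prop where
  isCompact_outer : IsCompact K
  convex_outer : Convex ℝ K
  symm_outer : K = -K
  isCompact_inner : IsCompact L
  strictConvex_inner : StrictConvex ℝ L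
  symm_inner : L = -L
  zero_mem_interior : 0 ∈ interior L
  subset_interior : L ⊆ interior K
  isPlane : ∀ z ∈ frontier K, IsPlane (Δ z)
  graze_subset : ∀ z ∈ frontier K, graze L z ⊆ Δ z
  almostFree : AlmostFree K L Δ

namespace AlmostFreePair

variable {K L : Set E3} {Δ : E3 → AffineSubspace ℝ E3} {x y z w p : E3}

lemma mem_nhds_zero (S : AlmostFreePair K L Δ) : K ∈ 𝓝 0 :=
  mem_interior_iff_mem_nhds.mp (S.subset_interior (interior_subset S.zero_mem_interior))

lemma notMem (S : AlmostFreePair K L Δ) (hz : z ∈ frontier K) : z ∉ L :=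
  fun h ↦ hz.2 (S.subset_interior h)

lemma ne_zero (S : AlmostFreePair K L Δ) (hz : z ∈ frontier K) : z ≠ 0 := by
  rintro rfl
  exact S.notMem hz (interior_subset S.zero_mem_interior)

lemma radialProj_mem (S : AlmostFreePair K L Δ) (hx : x ≠ 0) : radialProj K x ∈ frontier K :=
  radialProj_mem_frontier S.convex_outer S.mem_nhds_zero S.isCompact_outer.isBounded hx

lemma tendsto_radialProj (S : AlmostFreePair K L Δ) (hz : z ∈ frontier K) {ι : Type*}
    {F : Filter ι} {f : ι → E3} (hf : Tendsto f F (𝓝 z)) :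
    Tendsto (fun i ↦ radialProj K (f i)) F (𝓝 z) := by
  have h := (continuousAt_radialProj S.convex_outer S.mem_nhds_zero S.isCompact_outer.isBounded
    (S.ne_zero hz)).tendsto.comp hf
  rwa [radialProj_of_mem_frontier S.convex_outer S.mem_nhds_zero hz] at h

lemma contactSet_subset (S : AlmostFreePair K L Δ) (hz : z ∈ frontier K) :
    contactSet L z ⊆ Δ z :=
  (contactSet_subset_graze L z).trans (S.graze_subset z hz)

lemma avoidsLine (S : AlmostFreePair K L Δ) (hz : z ∈ frontier K) (hw : w ∈ frontier K)
    (hzw : w ∈ (Δ z).direction) : AvoidsLine L z (w - z) := fun s ↦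
  Set.disjoint_left.mp (S.almostFree z hz w ⟨hzw, hw⟩) <| by
    have h := AffineMap.lineMap_mem_affineSpan_pair s z w
    rwa [AffineMap.lineMap_apply, vsub_eq_sub, vadd_eq_add, add_comm] at h

lemma self_notMem_direction (S : AlmostFreePair K L Δ) (hz : z ∈ frontier K) :
    z ∉ (Δ z).direction := fun h ↦ by
  have hline := S.avoidsLine hz (neg_mem_frontier S.symm_outer hz) (Submodule.neg_mem _ h)
  refine hline (1 / 2) ?_
  rw [show z + (1 / 2 : ℝ) • (-z - z) = 0 by module]
  exact interior_subset S.zero_mem_interior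

lemma ne_of_mem_direction (S : AlmostFreePair K L Δ) (hz : z ∈ frontier K)
    (hw : w ∈ (Δ z).direction) : z ≠ w := by
  rintro rfl
  exact S.self_notMem_direction hz hw

lemma self_notMem (S : AlmostFreePair K L Δ) (hz : z ∈ frontier K) : z ∉ Δ z := fun hzΔ ↦ by
  obtain ⟨e, heΔ, he0, he⟩ := exists_avoidsLine_of_notMem S.isCompact_inner
    S.strictConvex_inner.convex (interior_subset S.zero_mem_interior) (S.notMem hz)
    (Δ z).direction (by rw [S.isPlane z hz]; norm_num)
  obtain ⟨n, p, m, q, hp, hq, hpq⟩ := he.exists_isLineContact_pair S.isCompact_inner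
    S.strictConvex_inner.convex S.zero_mem_interior he0
  have hcross : cross e (p - z) ≠ 0 := fun h0 ↦ by
    obtain ⟨t, ht⟩ := exists_eq_smul_of_cross_eq_zero he0 h0
    exact he t (by rw [← ht, add_sub_cancel]; exact hp.mem)
  have hdir {r : E3} (hr : r ∈ contactSet L z) : r - z ∈ (Δ z).direction :=
    AffineSubspace.vsub_mem_direction (S.contactSet_subset hz hr) hzΔ
  obtain ⟨s, t, hst⟩ := exists_eq_smul_add_smul hcross <|
    (mem_iff_inner_cross_eq_zero (S.isPlane z hz) heΔ (hdir hp.mem_contactSet) hcross).mp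
      (hdir hq.mem_contactSet)
  have hnq : ⟪n, q⟫ = 1 := by
    rw [← sub_add_cancel q z, hst, inner_add_right, inner_add_right, inner_smul_right,
      inner_smul_right, inner_sub_right, hp.inner_dir, hp.inner_eq, hp.inner_base]
    ring
  exact hpq (hp.eq_of_inner_eq S.strictConvex_inner hq.mem hnq).symm

/-- The two support planes of `L` through the line `xy` and `p` itself give three non-collinear
points common to the two planes. -/
lemma plane_eq_of_mem_contactSet (S : AlmostFreePair K L Δ) (hx : x ∈ frontier K)
    (hy : y ∈ frontier K) (hxy : AvoidsLine L x (y - x)) (hpx : p ∈ contactSet L x)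
    (hpy : p ∈ contactSet L y) (hno : ∀ m, IsContact L m p → ⟪m, x⟫ = 1 → ⟪m, y⟫ ≠ 1) :
    Δ x = Δ y := by
  obtain ⟨n, hn, hnx⟩ := hpx
  have hne : x ≠ y := by
    rintro rfl
    exact hno n hn hnx hnx
  obtain ⟨n₁, p₁, n₂, p₂, h₁, h₂, h₁₂, h₁x, h₁y, h₂x, h₂y⟩ := hxy.exists_isContact_pair
    S.isCompact_inner S.strictConvex_inner.convex S.zero_mem_interior hne
  have hp₁ : p ≠ p₁ := by
    rintro rfl
    exact hno _ h₁ h₁x h₁y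
  have hp₂ : p ≠ p₂ := by
    rintro rfl
    exact hno _ h₂ h₂x h₂y
  exact (S.isPlane x hx).eq_of_mem (S.isPlane y hy) (S.contactSet_subset hx ⟨n, hn, hnx⟩)
    (S.contactSet_subset hx ⟨n₁, h₁, h₁x⟩) (S.contactSet_subset hx ⟨n₂, h₂, h₂x⟩)
    (S.contactSet_subset hy hpy) (S.contactSet_subset hy ⟨n₁, h₁, h₁y⟩)
    (S.contactSet_subset hy ⟨n₂, h₂, h₂y⟩)
    (cross_sub_sub_ne_zero_of_isContact S.strictConvex_inner hn h₁ h₂ hp₁ hp₂ h₁₂)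

lemma plane_eq_of_tendsto (S : AlmostFreePair K L Δ) {ι : Type*} {F : Filter ι} [F.NeBot]
    {f : ι → E3} (hz : z ∈ frontier K) (hf : Tendsto f F (𝓝 z)) (hfK : ∀ᶠ i in F, f i ∈ frontier K)
    {P : AffineSubspace ℝ E3} (hP : ∀ᶠ i in F, Δ (f i) = P) : Δ z = P := by
  obtain ⟨p, hp, q, hq, r, hr, hcross⟩ := exists_three_contacts S.isCompact_inner
    S.strictConvex_inner S.zero_mem_interior (S.notMem hz)
  have hmem {p : E3} (hp : p ∈ contactSet L z) : p ∈ P := by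
    obtain ⟨p', hp', hlim⟩ := exists_tendsto_mem_contactSet S.isCompact_inner
      S.strictConvex_inner S.zero_mem_interior (S.notMem hz) hf hp
    refine P.closed_of_finiteDimensional.mem_of_tendsto hlim ?_
    filter_upwards [hp', hfK, hP] with i hi hiK hiP
    rw [← hiP]
    exact S.contactSet_subset hiK hi
  obtain ⟨i, hiP, hiK⟩ := (hP.and hfK).exists
  have hPplane : IsPlane P := hiP ▸ S.isPlane _ hiK
  exact (S.isPlane z hz).eq_of_mem hPplane (S.contactSet_subset hz hp) (S.contactSet_subset hz hq)
    (S.contactSet_subset hz hr) (hmem hp) (hmem hq) (hmem hr) hcross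

end AlmostFreePair

/-! ### Smoothness of the inner body -/

section Smoothness

variable {K L : Set E3} {Δ : E3 → AffineSubspace ℝ E3} {n₁ n₂ p d d' : E3} {t t' : ℝ}

lemma IsContact.exists_inner_eq_zero (h₁ : IsContact L n₁ p) (h₂ : IsContact L n₂ p)
    (hd₁ : 0 < ⟪n₁, d⟫) (hd₂ : ⟪n₂, d⟫ < 0) : ∃ n, IsContact L n p ∧ ⟪n, d⟫ = 0 := by
  have hs : 0 < ⟪n₁, d⟫ - ⟪n₂, d⟫ := by linarith
  have ha : 0 ≤ -⟪n₂, d⟫ / (⟪n₁, d⟫ - ⟪n₂, d⟫) := div_nonneg (by linarith) hs.le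
  have hb : 0 ≤ ⟪n₁, d⟫ / (⟪n₁, d⟫ - ⟪n₂, d⟫) := div_nonneg hd₁.le hs.le
  have hab : -⟪n₂, d⟫ / (⟪n₁, d⟫ - ⟪n₂, d⟫) + ⟪n₁, d⟫ / (⟪n₁, d⟫ - ⟪n₂, d⟫) = 1 := by
    field_simp
    ring
  refine ⟨(-⟪n₂, d⟫ / (⟪n₁, d⟫ - ⟪n₂, d⟫)) • n₁ + (⟪n₁, d⟫ / (⟪n₁, d⟫ - ⟪n₂, d⟫)) • n₂,
    ⟨h₁.mem, ?_, fun l hl ↦ ?_⟩, ?_⟩ <;>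
    rw [inner_add_left, real_inner_smul_left, real_inner_smul_left]
  · rw [h₁.inner_eq, h₂.inner_eq, mul_one, mul_one, hab]
  · nlinarith [h₁.inner_le l hl, h₂.inner_le l hl]
  · field_simp
    ring

lemma IsContact.mem_contactSet_add_smul {n : E3} (h : IsContact L n p) (hd : ⟪n, d⟫ = 0) :
    p ∈ contactSet L (p + t • d) :=
  ⟨n, h, by rw [inner_add_right, inner_smul_right, h.inner_eq, hd, mul_zero, add_zero]⟩

lemma IsContact.inner_eq_zero_of_inner_add_smul {n : E3} (h : IsContact L n p) (ht : 0 < t)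
    (h1 : ⟪n, p + t • d⟫ = 1) : ⟪n, d⟫ = 0 := by
  rw [inner_add_right, inner_smul_right, h.inner_eq, add_eq_left] at h1
  exact (mul_eq_zero.mp h1).resolve_left ht.ne'

lemma AlmostFreePair.plane_add_smul_eq (S : AlmostFreePair K L Δ) (h₁ : IsContact L n₁ p)
    (h₂ : IsContact L n₂ p) (hd : 0 < ⟪n₁, d⟫ ∧ ⟪n₂, d⟫ < 0) (hd' : 0 < ⟪n₁, d'⟫ ∧ ⟪n₂, d'⟫ < 0)
    (ht : 0 < t) (ht' : 0 < t') (hx : p + t • d ∈ frontier K) (hy : p + t' • d' ∈ frontier K)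
    (hxy : AvoidsLine L (p + t • d) (p + t' • d' - (p + t • d)))
    (hno : ∀ m, IsContact L m p → ⟪m, d⟫ = 0 → ⟪m, d'⟫ ≠ 0) :
    Δ (p + t • d) = Δ (p + t' • d') := by
  obtain ⟨n, hn, hnd⟩ := h₁.exists_inner_eq_zero h₂ hd.1 hd.2
  obtain ⟨n', hn', hnd'⟩ := h₁.exists_inner_eq_zero h₂ hd'.1 hd'.2
  exact S.plane_eq_of_mem_contactSet hx hy hxy (hn.mem_contactSet_add_smul hnd)
    (hn'.mem_contactSet_add_smul hnd') fun m hm hmx hmy ↦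
    hno m hm (hm.inner_eq_zero_of_inner_add_smul ht hmx)
      (hm.inner_eq_zero_of_inner_add_smul ht' hmy)

/-- For directions `d`, `d'` close together, both are compared with `d + ε • p`, where `ε` is large
compared to `‖d' - d‖`: no support plane at `p` contains both of `d'` and `d + ε • p`. -/
lemma AlmostFreePair.eventually_plane_ray_eq (S : AlmostFreePair K L Δ) (h₁ : IsContact L n₁ p)
    (h₂ : IsContact L n₂ p) {X : E3 → E3} (hXc : ContinuousOn X {0}ᶜ)
    (hX : ∀ d ≠ 0, X d ∈ frontier K ∧ ∃ t : ℝ, 0 < t ∧ X d = p + t • d)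
    (hd : 0 < ⟪n₁, d⟫ ∧ ⟪n₂, d⟫ < 0) : ∀ᶠ d' in 𝓝 d, Δ (X d') = Δ (X d) := by
  have hne {d : E3} (hd : 0 < ⟪n₁, d⟫ ∧ ⟪n₂, d⟫ < 0) : d ≠ 0 := by
    rintro rfl
    simp at hd
  have hC : ∀ᶠ d' in 𝓝 d, 0 < ⟪n₁, d'⟫ ∧ ⟪n₂, d'⟫ < 0 :=
    ((continuous_const.inner continuous_id).continuousAt.eventually (lt_mem_nhds hd.1)).and
      ((continuous_const.inner continuous_id).continuousAt.eventually (gt_mem_nhds hd.2))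
  obtain ⟨δ, hδ, hline⟩ := exists_forall_dist_lt_avoidsLine S.convex_outer S.isCompact_inner
    S.subset_interior
  obtain ⟨R, hR⟩ := exists_norm_le_of_inner_le_one S.zero_mem_interior
  have hball : ∀ᶠ d' in 𝓝 d, dist (X d') (X d) < δ / 2 :=
    (hXc.continuousAt (isOpen_compl_singleton.mem_nhds (hne hd))).eventually
      (ball_mem_nhds _ (half_pos hδ))
  obtain ⟨ε, ⟨hεC, hεball⟩, hε : 0 < ε⟩ := (((tendsto_add_smul_nhdsGT_zero d p).eventually
    (hC.and hball)).and self_mem_nhdsWithin).exists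
  have key {d' : E3} (hd' : 0 < ⟪n₁, d'⟫ ∧ ⟪n₂, d'⟫ < 0) (hdist : dist (X d') (X d) < δ / 2)
      (hR' : R * ‖d - d'‖ < ε) : Δ (X d') = Δ (X (d + ε • p)) := by
    obtain ⟨hx, t, ht, hxt⟩ := hX d' (hne hd')
    obtain ⟨hy, t', ht', hyt⟩ := hX (d + ε • p) (hne hεC)
    have hxy := hline _ hx _ hy (by linarith [dist_triangle_right (X d') (X (d + ε • p)) (X d)])
    rw [hxt, hyt] at hxy ⊢
    refine S.plane_add_smul_eq h₁ h₂ hd' hεC ht ht' (hxt ▸ hx) (hyt ▸ hy) hxy fun m hm hmd' h0 ↦ ?_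
    have hmd : ⟪m, d - d'⟫ = -ε := by
      rw [inner_add_right, inner_smul_right, hm.inner_eq] at h0
      rw [inner_sub_right, hmd']
      linarith
    have hle := (neg_le_abs _).trans (abs_real_inner_le_norm m (d - d'))
    rw [hmd] at hle
    nlinarith [hR m hm.inner_le, norm_nonneg (d - d')]
  have hsmall : ∀ᶠ d' in 𝓝 d, R * ‖d - d'‖ < ε := by
    have : Continuous fun d' ↦ R * ‖d - d'‖ := by fun_prop
    exact this.continuousAt.eventually (gt_mem_nhds (by simpa using hε))
  filter_upwards [hC, hball, hsmall] with d' hd' hdist hR'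
  rw [key hd' hdist hR', key hd (by simpa using hδ) (by simpa using hε)]

lemma IsContact.exists_inner_pos_neg (h₁ : IsContact L n₁ p) (h₂ : IsContact L n₂ p)
    (hne : n₁ ≠ n₂) : ∃ d, 0 < ⟪n₁, d⟫ ∧ ⟪n₂, d⟫ < 0 := by
  have hpos : 0 < ⟪n₁ - n₂, n₁ - n₂⟫ := real_inner_self_pos.mpr (sub_ne_zero.mpr hne)
  rw [inner_sub_left] at hpos
  refine ⟨n₁ - n₂ - ((⟪n₁, n₁ - n₂⟫ + ⟪n₂, n₁ - n₂⟫) / 2) • p, ?_, ?_⟩ <;>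
    rw [inner_sub_right, inner_smul_right]
  · rw [h₁.inner_eq]; linarith
  · rw [h₂.inner_eq]; linarith

lemma exists_mem_ne_zero_inner_nonneg_nonpos {V : Submodule ℝ E3} (hV : 1 < Module.finrank ℝ V)
    (n₁ n₂ : E3) : ∃ g ∈ V, g ≠ 0 ∧ 0 ≤ ⟪n₁, g⟫ ∧ ⟪n₂, g⟫ ≤ 0 := by
  have hker : LinearMap.ker ((innerₗ E3 n₂).domRestrict V) ≠ ⊥ :=
    LinearMap.ker_ne_bot_of_finrank_lt (by simpa using hV)
  obtain ⟨⟨g, hgV⟩, hg, hg0⟩ := Submodule.exists_mem_ne_zero_of_ne_bot hker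
  have hg0 : g ≠ 0 := by simpa using hg0
  have hg : ⟪n₂, g⟫ = 0 := by simpa using hg
  rcases le_total 0 ⟪n₁, g⟫ with h | h
  · exact ⟨g, hgV, hg0, h, hg.le⟩
  · exact ⟨-g, V.neg_mem hgV, neg_ne_zero.mpr hg0, by simpa using h, by simp [hg]⟩

/-- If `n₁ ≠ n₂` supported `L` at `p`, then `Δ` would be constant, say `P`, along all rays from `p`
in the nonempty open cone between the two support planes, hence also on its closure. But that
closure contains a direction parallel to `P`, whose ray meets `bd K` at a point of `P`. -/
lemma AlmostFreePair.normal_unique (S : AlmostFreePair K L Δ) (h₁ : IsContact L n₁ p)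
    (h₂ : IsContact L n₂ p) : n₁ = n₂ := by
  by_contra hne
  obtain ⟨X, hXc, hX⟩ := exists_continuousOn_ray_frontier S.convex_outer
    S.isCompact_outer.isBounded (S.subset_interior h₁.mem)
  set C : Set E3 := {d | 0 < ⟪n₁, d⟫} ∩ {d | ⟪n₂, d⟫ < 0}
  have hCconv : Convex ℝ C := (convex_halfSpace_gt (innerₗ E3 n₁).isLinear 0).inter
    (convex_halfSpace_lt (innerₗ E3 n₂).isLinear 0)
  have hC0 : ∀ d ∈ C, d ≠ 0 := by
    rintro d hd rfl
    simp [C] at hd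
  obtain ⟨d₀, hd₀⟩ : C.Nonempty := h₁.exists_inner_pos_neg h₂ hne
  have hconst : ∀ d ∈ C, Δ (X d) = Δ (X d₀) := fun d hd ↦
    hCconv.isPreconnected.induction₂ (fun d d' ↦ Δ (X d) = Δ (X d'))
      (fun d hd ↦ ((S.eventually_plane_ray_eq h₁ h₂ hXc hX hd).mono fun _ h ↦ h.symm).filter_mono
        nhdsWithin_le_nhds) (fun _ _ _ _ _ _ ↦ Eq.trans) (fun _ _ _ _ ↦ Eq.symm) hd hd₀
  have hd₀K := (hX d₀ (hC0 d₀ hd₀)).1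
  have hp : p ∈ Δ (X d₀) := by
    obtain ⟨n, hn, hnd⟩ := h₁.exists_inner_eq_zero h₂ hd₀.1 hd₀.2
    obtain ⟨t, -, ht⟩ := (hX d₀ (hC0 d₀ hd₀)).2
    exact S.contactSet_subset hd₀K (ht ▸ hn.mem_contactSet_add_smul hnd)
  obtain ⟨g, hgΔ, hg0, hg₁, hg₂⟩ := exists_mem_ne_zero_inner_nonneg_nonpos
    (V := (Δ (X d₀)).direction) (by rw [S.isPlane _ hd₀K]; norm_num) n₁ n₂
  obtain ⟨hgK, t, -, ht⟩ := hX g hg0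
  have hlim : Tendsto (fun ε : ℝ ↦ X (g + ε • d₀)) (𝓝[>] 0) (𝓝 (X g)) :=
    (hXc.continuousAt (isOpen_compl_singleton.mem_nhds hg0)).tendsto.comp
      (tendsto_add_smul_nhdsGT_zero g d₀)
  have hmem : ∀ᶠ ε : ℝ in 𝓝[>] 0, g + ε • d₀ ∈ C := by
    filter_upwards [self_mem_nhdsWithin] with ε (hε : 0 < ε)
    constructor <;> rw [mem_ofPred_eq, inner_add_right, inner_smul_right]
    · linarith [mul_pos hε hd₀.1]
    · linarith [mul_neg_of_pos_of_neg hε hd₀.2]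
  have hgΔ' := S.plane_eq_of_tendsto hgK hlim (hmem.mono fun _ h ↦ (hX _ (hC0 _ h)).1)
    (hmem.mono fun _ h ↦ hconst _ h)
  refine S.self_notMem hgK (hgΔ' ▸ ?_)
  rw [ht, add_comm]
  exact AffineSubspace.vadd_mem_of_mem_direction (Submodule.smul_mem _ _ hgΔ) hp

end Smoothness

/-! ### Poles -/

/-- The pole of a plane `P` not containing the origin: the vector `a` such that `P` is the set of
all `x` with `⟪a, x⟫ = 1`. For other planes the value is arbitrary. -/
def pole (P : AffineSubspace ℝ E3) : E3 :=
  Classical.epsilon fun a ↦ ∀ x, x ∈ P ↔ ⟪a, x⟫ = 1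

lemma IsPlane.mem_iff_inner_pole_eq_one {P : AffineSubspace ℝ E3} (hP : IsPlane P) (h0 : 0 ∉ P)
    (x : E3) : x ∈ P ↔ ⟪pole P, x⟫ = 1 := by
  suffices h : ∃ a : E3, ∀ x, x ∈ P ↔ ⟪a, x⟫ = 1 from Classical.epsilon_spec h x
  have hrank := P.direction.finrank_add_finrank_orthogonal
  rw [show Module.finrank ℝ P.direction = 2 from hP, finrank_euclideanSpace_fin] at hrank
  obtain ⟨⟨n, hnP⟩, hn, hspan⟩ := finrank_eq_one_iff'.mp (Nat.add_left_cancel hrank)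
  have hmem (d : E3) : d ∈ P.direction ↔ ⟪n, d⟫ = 0 := by
    rw [← P.direction.orthogonal_orthogonal, Submodule.mem_orthogonal]
    refine ⟨fun h ↦ h n hnP, fun h u hu ↦ ?_⟩
    obtain ⟨c, hc⟩ := hspan ⟨u, hu⟩
    rw [show u = c • n from (congrArg Subtype.val hc).symm, real_inner_smul_left, h, mul_zero]
  obtain ⟨p, hp⟩ : (P : Set E3).Nonempty := by
    rw [AffineSubspace.nonempty_iff_ne_bot]
    rintro rfl
    rw [IsPlane, AffineSubspace.direction_bot, finrank_bot] at hP
    exact two_ne_zero hP.symm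
  have hnp : ⟪n, p⟫ ≠ 0 := fun h ↦ h0 <| by
    simpa using AffineSubspace.vadd_mem_of_mem_direction
      (P.direction.neg_mem ((hmem p).mpr h)) hp
  refine ⟨⟪n, p⟫⁻¹ • n, fun x ↦ ?_⟩
  rw [← AffineSubspace.vsub_right_mem_direction_iff_mem hp, hmem, vsub_eq_sub, inner_sub_right,
    real_inner_smul_left, inv_mul_eq_one₀ hnp, sub_eq_zero, eq_comm]

namespace AlmostFreePair

variable {K L : Set E3} {Δ : E3 → AffineSubspace ℝ E3} {z w p n : E3}

lemma exists_mem_frontier (S : AlmostFreePair K L Δ) {V : Submodule ℝ E3} (hV : V ≠ ⊥) :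
    ∃ w ∈ frontier K, w ∈ V := by
  obtain ⟨w, hw, hw0⟩ := Submodule.exists_mem_ne_zero_of_ne_bot hV
  exact ⟨radialProj K w, S.radialProj_mem hw0, V.smul_mem _ hw⟩

lemma exists_mem_frontier_direction (S : AlmostFreePair K L Δ) (hz : z ∈ frontier K) :
    ∃ w ∈ frontier K, w ∈ (Δ z).direction :=
  S.exists_mem_frontier fun h ↦ two_ne_zero <| by
    rw [← S.isPlane z hz, h, finrank_bot]

lemma exists_isContact_pair (S : AlmostFreePair K L Δ) (hz : z ∈ frontier K)
    (hw : w ∈ frontier K) (hzw : w ∈ (Δ z).direction) :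
    ∃ n p m q, IsContact L n p ∧ IsContact L m q ∧ p ≠ q ∧ ⟪n, z⟫ = 1 ∧ ⟪n, w⟫ = 1 ∧
      ⟪m, z⟫ = 1 ∧ ⟪m, w⟫ = 1 :=
  (S.avoidsLine hz hw hzw).exists_isContact_pair S.isCompact_inner S.strictConvex_inner.convex
    S.zero_mem_interior (S.ne_of_mem_direction hz hzw)

/-- If `0 ∈ Δ z`, then `Δ z` contains `w ∈ Π_z ∩ bd K`, and with `-p'` for the contacts `p'` of the
line through `z` and `-w` it contains a third contact point seen from `w`. -/
lemma zero_notMem_plane (S : AlmostFreePair K L Δ) (hz : z ∈ frontier K) : 0 ∉ Δ z := fun h0 ↦ by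
  have hdir {d : E3} (hd : d ∈ (Δ z).direction) : d ∈ Δ z := by
    simpa using AffineSubspace.vadd_mem_of_mem_direction hd h0
  obtain ⟨w, hw, hzw⟩ := S.exists_mem_frontier_direction hz
  obtain ⟨n, p, m, q, hp, hq, hpq, hnz, hnw, hmz, hmw⟩ := S.exists_isContact_pair hz hw hzw
  obtain ⟨k, r, -, -, hr, -, -, hkz, hkw, -⟩ := S.exists_isContact_pair hz
    (neg_mem_frontier S.symm_outer hw) (Submodule.neg_mem _ hzw)
  have hrΔ : -r ∈ Δ z := hdir <| Submodule.neg_mem _ <| by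
    simpa using AffineSubspace.vsub_mem_direction (S.contactSet_subset hz ⟨k, hr, hkz⟩) h0
  have hr' := hr.neg S.symm_inner
  have hne {n p : E3} (hp : IsContact L n p) (hnz : ⟪n, z⟫ = 1) : -r ≠ p := by
    rintro rfl
    rw [S.normal_unique hp hr', inner_neg_left, hkz] at hnz
    norm_num at hnz
  rcases (S.isPlane z hz).eq_or_eq_of_isContact S.strictConvex_inner (S.notMem hw) (hdir hzw) hp hq
    hr' hnw hmw (by simpa using hkw) hpq (S.contactSet_subset hz ⟨n, hp, hnz⟩)
    (S.contactSet_subset hz ⟨m, hq, hmz⟩) hrΔ with h | h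
  exacts [hne hp hnz h, hne hq hmz h]

lemma mem_plane_iff (S : AlmostFreePair K L Δ) (hz : z ∈ frontier K) :
    p ∈ Δ z ↔ ⟪pole (Δ z), p⟫ = 1 :=
  (S.isPlane z hz).mem_iff_inner_pole_eq_one (S.zero_notMem_plane hz) p

lemma inner_pole (S : AlmostFreePair K L Δ) (hz : z ∈ frontier K) (hp : p ∈ contactSet L z) :
    ⟪pole (Δ z), p⟫ = 1 :=
  (S.mem_plane_iff hz).mp (S.contactSet_subset hz hp)

lemma mem_direction_iff (S : AlmostFreePair K L Δ) (hz : z ∈ frontier K) :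
    w ∈ (Δ z).direction ↔ ⟪pole (Δ z), w⟫ = 0 := by
  obtain ⟨p, hp, -⟩ := exists_three_contacts S.isCompact_inner S.strictConvex_inner
    S.zero_mem_interior (S.notMem hz)
  rw [← AffineSubspace.vadd_mem_iff_mem_direction w (S.contactSet_subset hz hp), vadd_eq_add,
    S.mem_plane_iff hz, inner_add_right, S.inner_pole hz hp, add_eq_right]

lemma inner_pole_self_ne_zero (S : AlmostFreePair K L Δ) (hz : z ∈ frontier K) :
    ⟪pole (Δ z), z⟫ ≠ 0 :=
  fun h ↦ S.self_notMem_direction hz ((S.mem_direction_iff hz).mpr h)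

lemma inner_pole_self_ne_one (S : AlmostFreePair K L Δ) (hz : z ∈ frontier K) :
    ⟪pole (Δ z), z⟫ ≠ 1 :=
  fun h ↦ S.self_notMem hz ((S.mem_plane_iff hz).mpr h)

/-- Let `v` be the point of `Δ z` on the line `zw`. If `Δ (f i) = Δ z`, then a support plane through
`v` and `f i` touches `L` in `Δ z`, hence is one of the two support planes through `zw`. -/
lemma eventually_exists_inner_eq_one (S : AlmostFreePair K L Δ) (hz : z ∈ frontier K)
    (hw : w ∈ frontier K) (hzw : w ∈ (Δ z).direction) {ι : Type*} {F : Filter ι} {f : ι → E3}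
    (hf : Tendsto f F (𝓝 z)) (hfK : ∀ᶠ i in F, f i ∈ frontier K)
    (hΔ : ∀ᶠ i in F, Δ (f i) = Δ z) :
    ∀ᶠ i in F, ∃ n, ⟪n, z⟫ = 1 ∧ ⟪n, w⟫ = 1 ∧ ⟪n, f i⟫ = 1 := by
  obtain ⟨n, p, m, q, hp, hq, hpq, hnz, hnw, hmz, hmw⟩ := S.exists_isContact_pair hz hw hzw
  have hκ : 1 - ⟪pole (Δ z), z⟫⁻¹ ≠ 0 := by
    rw [sub_ne_zero, ne_comm, inv_ne_one]
    exact S.inner_pole_self_ne_one hz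
  set v := z + (1 - ⟪pole (Δ z), z⟫⁻¹) • (w - z) with hv
  have hvL : v ∉ L := S.avoidsLine hz hw hzw _
  have hvΔ : v ∈ Δ z := by
    rw [S.mem_plane_iff hz, hv, inner_add_right, inner_smul_right, inner_sub_right,
      (S.mem_direction_iff hz).mp hzw]
    field_simp [S.inner_pole_self_ne_zero hz]
    ring
  have hinner {n : E3} (hnz : ⟪n, z⟫ = 1) (hnw : ⟪n, w⟫ = 1) : ⟪n, v⟫ = 1 := by
    rw [hv, inner_add_right, inner_smul_right, inner_sub_right, hnz, hnw, sub_self, mul_zero,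
      add_zero]
  have hvz : v - z ≠ 0 := by
    rw [hv, add_sub_cancel_left]
    exact smul_ne_zero hκ (sub_ne_zero.mpr (S.ne_of_mem_direction hz hzw).symm)
  have hlim : Tendsto (fun i ↦ v - f i) F (𝓝 (v - z)) := tendsto_const_nhds.sub hf
  have hline : AvoidsLine L z (v - z) := by
    rw [hv, add_sub_cancel_left]
    exact (S.avoidsLine hz hw hzw).smul _
  filter_upwards [hline.eventually S.isCompact_inner S.strictConvex_inner.convex
    (interior_subset S.zero_mem_interior) hvz hf hlim, hlim.eventually_ne hvz, hfK, hΔ]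
    with i hi hne hiK hiΔ
  obtain ⟨k, r, -, -, hr, -, -, hkf, hkv, -⟩ := hi.exists_isContact_pair S.isCompact_inner
    S.strictConvex_inner.convex S.zero_mem_interior (sub_ne_zero.mp hne).symm
  rcases (S.isPlane z hz).eq_or_eq_of_isContact S.strictConvex_inner hvL hvΔ hp hq hr
    (hinner hnz hnw) (hinner hmz hmw) hkv hpq (S.contactSet_subset hz ⟨n, hp, hnz⟩)
    (S.contactSet_subset hz ⟨m, hq, hmz⟩) (hiΔ ▸ S.contactSet_subset hiK ⟨k, hr, hkf⟩)
    with rfl | rfl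
  · exact ⟨n, hnz, hnw, S.normal_unique hr hp ▸ hkf⟩
  · exact ⟨m, hmz, hmw, S.normal_unique hr hq ▸ hkf⟩

/-- Otherwise the gauge of `K` at `z + ε • w` would be both `1 + ε` and `1 - ε`. -/
lemma not_eventually_plane_eq (S : AlmostFreePair K L Δ) (hz : z ∈ frontier K) :
    ¬ ∀ᶠ y in 𝓝[frontier K] z, Δ y = Δ z := fun hΔ ↦ by
  obtain ⟨w, hw, hzw⟩ := S.exists_mem_frontier_direction hz
  set f : ℝ → E3 := fun ε ↦ radialProj K (z + ε • w)
  have hne : ∀ᶠ ε : ℝ in 𝓝[>] 0, z + ε • w ≠ 0 :=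
    (tendsto_add_smul_nhdsGT_zero z w).eventually_ne (S.ne_zero hz)
  have hf : Tendsto f (𝓝[>] 0) (𝓝 z) :=
    S.tendsto_radialProj hz (tendsto_add_smul_nhdsGT_zero z w)
  have hfK : ∀ᶠ ε : ℝ in 𝓝[>] 0, f ε ∈ frontier K := hne.mono fun _ h ↦ S.radialProj_mem h
  have hfΔ := (tendsto_nhdsWithin_iff.mpr ⟨hf, hfK⟩).eventually hΔ
  obtain ⟨ε, ⟨⟨⟨n, hnz, hnw, hn⟩, m, hmz, hmw, hm⟩, hε⟩, hε0 : 0 < ε⟩ :=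
    ((((S.eventually_exists_inner_eq_one hz hw hzw hf hfK hfΔ).and
      (S.eventually_exists_inner_eq_one hz (neg_mem_frontier S.symm_outer hw)
        (Submodule.neg_mem _ hzw) hf hfK hfΔ)).and hne).and self_mem_nhdsWithin).exists
  have hpos := gauge_pos_of_ne_zero S.mem_nhds_zero S.isCompact_outer.isBounded hε
  have hgauge {k : E3} (hk : ⟪k, f ε⟫ = 1) : gauge K (z + ε • w) = ⟪k, z⟫ + ε * ⟪k, w⟫ := by
    rw [← inner_smul_right, ← inner_add_right]
    rwa [show f ε = (gauge K (z + ε • w))⁻¹ • (z + ε • w) from rfl, inner_smul_right,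
      inv_mul_eq_one₀ hpos.ne'] at hk
  rw [inner_neg_right] at hmw
  have h := (hgauge hn).symm.trans (hgauge hm)
  rw [hnz, hnw, hmz] at h
  nlinarith

end AlmostFreePair

section GaugeGradient

variable {E : Type*} [NormedAddCommGroup E] [InnerProductSpace ℝ E] [CompleteSpace E]
  {K : Set E} {k z x : E} {ι : Type*} {F : Filter ι} {h : ι → ℝ} {x' : ι → E}

lemma tendsto_slope_of_hasGradientAt {f : E → ℝ} (hk : HasGradientAt f k z)
    (hh : Tendsto h F (𝓝[≠] 0)) (hx : Tendsto x' F (𝓝 x)) :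
    Tendsto (fun i ↦ (h i)⁻¹ * (f (z + h i • x' i) - f z)) F (𝓝 ⟪k, x⟫) := by
  rw [tendsto_nhdsWithin_iff] at hh
  refine hk.hasFDerivAt.hasFDerivWithinAt.lim (s := univ) ?_ (by simp) (hx.congr' ?_)
  · simpa using hh.1.smul hx
  · filter_upwards [hh.2] with i hi
    rw [inv_smul_smul₀ hi]

lemma inner_self_eq_gauge (hk : HasGradientAt (gauge K) k z) : ⟪k, z⟫ = gauge K z := by
  have hh : Tendsto (fun t : ℝ ↦ t) (𝓝[>] 0) (𝓝[≠] 0) :=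
    tendsto_id.mono_left (nhdsWithin_mono _ fun _ ht ↦ ne_of_gt ht)
  refine tendsto_nhds_unique (tendsto_slope_of_hasGradientAt hk hh (tendsto_const_nhds (x := z)))
    (tendsto_const_nhds.congr' ?_)
  filter_upwards [self_mem_nhdsWithin] with t (ht : 0 < t)
  rw [show z + t • z = (1 + t) • z by module, gauge_smul_of_nonneg (by positivity), smul_eq_mul]
  field_simp
  ring

lemma inner_le_gauge (hK : Convex ℝ K) (h0 : K ∈ 𝓝 0) (hk : HasGradientAt (gauge K) k z) (x : E) :
    ⟪k, x⟫ ≤ gauge K x := by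
  have hh : Tendsto (fun t : ℝ ↦ t) (𝓝[>] 0) (𝓝[≠] 0) :=
    tendsto_id.mono_left (nhdsWithin_mono _ fun _ ht ↦ ne_of_gt ht)
  refine le_of_tendsto (tendsto_slope_of_hasGradientAt hk hh (tendsto_const_nhds (x := x))) ?_
  filter_upwards [self_mem_nhdsWithin] with t (ht : 0 < t)
  have hadd := gauge_add_le hK (absorbent_nhds_zero h0) z (t • x)
  rw [gauge_smul_of_nonneg ht.le, smul_eq_mul] at hadd
  rw [inv_mul_le_iff₀ ht]
  linarith

lemma tendsto_slope_radialProj (hk : HasGradientAt (gauge K) k z) (hz : gauge K z = 1)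
    (hh : Tendsto h F (𝓝[≠] 0)) (hx : Tendsto x' F (𝓝 x)) (hkx : ⟪k, x⟫ = 0) :
    Tendsto (fun i ↦ (h i)⁻¹ • (radialProj K (z + h i • x' i) - z)) F (𝓝 x) := by
  obtain ⟨hh0, hne⟩ := tendsto_nhdsWithin_iff.mp hh
  set g : ι → ℝ := fun i ↦ gauge K (z + h i • x' i)
  have hslope : Tendsto (fun i ↦ (h i)⁻¹ * (g i - 1)) F (𝓝 0) := by
    simpa only [hz, hkx] using tendsto_slope_of_hasGradientAt hk hh hx
  have hg1 : Tendsto g F (𝓝 1) := by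
    have hlim : Tendsto (fun i ↦ z + h i • x' i) F (𝓝 z) := by
      simpa using tendsto_const_nhds.add (hh0.smul hx)
    exact hz ▸ hk.differentiableAt.continuousAt.tendsto.comp hlim
  have hinv : Tendsto (fun i ↦ (g i)⁻¹) F (𝓝 1) := by simpa using hg1.inv₀ one_ne_zero
  have hlim := (hinv.smul hx).sub ((hinv.mul hslope).smul_const z)
  rw [one_smul, mul_zero, zero_smul, sub_zero] at hlim
  refine hlim.congr' ?_
  filter_upwards [hne, hg1.eventually_ne one_ne_zero] with i (hi : h i ≠ 0) hgi
  rw [radialProj, show gauge K (z + h i • x' i) = g i from rfl]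
  match_scalars <;> field_simp
  ring

end GaugeGradient

lemma dense_differentiableAt_gauge {E : Type*} [NormedAddCommGroup E] [NormedSpace ℝ E]
    [FiniteDimensional ℝ E] {K : Set E} (hK : Convex ℝ K) (h0 : K ∈ 𝓝 0) :
    Dense {x | DifferentiableAt ℝ (gauge K) x} := by
  obtain ⟨r, hr, hrK⟩ := Metric.mem_nhds_iff.mp h0
  let _ : MeasurableSpace E := borel E
  have _ : BorelSpace E := ⟨rfl⟩
  exact MeasureTheory.Measure.dense_of_ae (μ := MeasureTheory.Measure.addHaar)
    (LipschitzWith.ae_differentiableAt (hK.lipschitzWith_gauge (r := ⟨r, hr.le⟩) hr hrK))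

lemma differentiableAt_gauge_smul {E : Type*} [NormedAddCommGroup E] [NormedSpace ℝ E] {K : Set E}
    {x : E} {c : ℝ} (hc : 0 < c) (hx : DifferentiableAt ℝ (gauge K) x) :
    DifferentiableAt ℝ (gauge K) (c • x) := by
  have heq : gauge K = fun y ↦ c * gauge K (c⁻¹ • y) := by
    funext y
    rw [← smul_eq_mul, ← gauge_smul_of_nonneg hc.le, smul_inv_smul₀ hc.ne']
  rw [← inv_smul_smul₀ hc.ne' x] at hx
  rw [heq]
  exact (hx.comp (c • x) (differentiableAt_id.const_smul c⁻¹)).const_mul c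

namespace AlmostFreePair

variable {K L : Set E3} {Δ : E3 → AffineSubspace ℝ E3} {z p q r k : E3}

lemma gauge_eq_one (S : AlmostFreePair K L Δ) (hz : z ∈ frontier K) : gauge K z = 1 :=
  (gauge_eq_one_iff_mem_frontier S.convex_outer S.mem_nhds_zero).mpr hz

lemma inner_gradient_self (S : AlmostFreePair K L Δ) (hz : z ∈ frontier K)
    (hk : HasGradientAt (gauge K) k z) : ⟪k, z⟫ = 1 := by
  rw [inner_self_eq_gauge hk, S.gauge_eq_one hz]

lemma inner_gradient_lt_one (S : AlmostFreePair K L Δ) (hk : HasGradientAt (gauge K) k z)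
    {l : E3} (hl : l ∈ L) : ⟪k, l⟫ < 1 :=
  (inner_le_gauge S.convex_outer S.mem_nhds_zero hk l).trans_lt
    (interior_subset_gauge_lt_one K (S.subset_interior hl))

lemma mem_closure_differentiableAt (S : AlmostFreePair K L Δ) (hz : z ∈ frontier K) :
    z ∈ closure {y ∈ frontier K | DifferentiableAt ℝ (gauge K) y} := by
  have hdense := (dense_differentiableAt_gauge S.convex_outer S.mem_nhds_zero).inter_of_isOpen_right
    (dense_compl_singleton 0) isOpen_compl_singleton
  have hcont := continuousAt_radialProj S.convex_outer S.mem_nhds_zero S.isCompact_outer.isBounded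
    (S.ne_zero hz)
  have hmem := hcont.continuousWithinAt.mem_closure (hdense z)
    (t := {y ∈ frontier K | DifferentiableAt ℝ (gauge K) y}) fun x ⟨hx, hx0⟩ ↦
      ⟨S.radialProj_mem hx0, differentiableAt_gauge_smul (inv_pos.mpr
        (gauge_pos_of_ne_zero S.mem_nhds_zero S.isCompact_outer.isBounded hx0)) hx⟩
  rwa [radialProj_of_mem_frontier S.convex_outer S.mem_nhds_zero hz] at hmem

lemma inner_cross_ne_zero (S : AlmostFreePair K L Δ) (hz : z ∈ frontier K)
    (hp : p ∈ contactSet L z) (hq : q ∈ contactSet L z) (hr : r ∈ contactSet L z)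
    (h : cross (q - p) (r - p) ≠ 0) : ⟪cross p q, r⟫ ≠ 0 := by
  have hdir {p q : E3} (hp : p ∈ contactSet L z) (hq : q ∈ contactSet L z) :
      ⟪pole (Δ z), q - p⟫ = 0 := by
    rw [inner_sub_right, S.inner_pole hz hp, S.inner_pole hz hq, sub_self]
  obtain ⟨t, ht⟩ := exists_eq_smul_cross h (hdir hp hq) (hdir hp hr)
  intro h0
  have hone := S.inner_pole hz hp
  rw [ht, real_inner_smul_left, inner_cross_sub_sub, h0, mul_zero] at hone
  exact zero_ne_one hone

lemma tendsto_pole (S : AlmostFreePair K L Δ) (hz : z ∈ frontier K) {ι : Type*} {F : Filter ι}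
    {f : ι → E3} (hf : Tendsto f F (𝓝 z)) (hfK : ∀ᶠ i in F, f i ∈ frontier K) :
    Tendsto (fun i ↦ pole (Δ (f i))) F (𝓝 (pole (Δ z))) := by
  obtain ⟨p, hp, q, hq, r, hr, hcross⟩ := exists_three_contacts S.isCompact_inner
    S.strictConvex_inner S.zero_mem_interior (S.notMem hz)
  have hdet := S.inner_cross_ne_zero hz hp hq hr hcross
  have hlim {p : E3} (hp : p ∈ contactSet L z) : ∃ p' : ι → E3, Tendsto p' F (𝓝 p) ∧
      Tendsto (fun i ↦ ⟪pole (Δ (f i)), p' i⟫) F (𝓝 ⟪pole (Δ z), p⟫) := by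
    obtain ⟨p', hp', hpp⟩ := exists_tendsto_mem_contactSet S.isCompact_inner
      S.strictConvex_inner S.zero_mem_interior (S.notMem hz) hf hp
    refine ⟨p', hpp, tendsto_const_nhds.congr' ?_⟩
    filter_upwards [hp', hfK] with i hi hiK
    rw [S.inner_pole hz hp, S.inner_pole hiK hi]
  obtain ⟨p', hpp, hp'⟩ := hlim hp
  obtain ⟨q', hqq, hq'⟩ := hlim hq
  obtain ⟨r', hrr, hr'⟩ := hlim hr
  have h := tendsto_of_tendsto_inner hpp hqq hrr hdet hp' hq' hr'
  rwa [← inner_cross_smul_eq, inv_smul_smul₀ hdet] at h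

end AlmostFreePair

lemma radialProj_smul {K : Set E3} {x : E3} {t : ℝ} (ht : 0 < t) :
    radialProj K (t • x) = radialProj K x := by
  rw [radialProj, gauge_smul_of_nonneg ht.le, smul_eq_mul, mul_inv_rev, smul_smul, mul_assoc,
    inv_mul_cancel₀ ht.ne', mul_one, radialProj]

lemma eq_of_inner_eq_one {u v n k z : E3} (h : cross u v ≠ 0) (hnu : ⟪n, u⟫ = 0)
    (hnv : ⟪n, v⟫ = 0) (hku : ⟪k, u⟫ = 0) (hkv : ⟪k, v⟫ = 0) (hnz : ⟪n, z⟫ = 1)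
    (hkz : ⟪k, z⟫ = 1) : n = k := by
  obtain ⟨s, rfl⟩ := exists_eq_smul_cross h hnu hnv
  obtain ⟨t, rfl⟩ := exists_eq_smul_cross h hku hkv
  rw [real_inner_smul_left] at hnz hkz
  rw [mul_right_cancel₀ (right_ne_zero_of_mul_eq_one hnz) (hnz.trans hkz.symm)]

lemma IsContact.exists_tendsto {L : Set E3} {x e n p : E3} {ι : Type*} {F : Filter ι}
    {x' e' : ι → E3} (hp : IsContact L n p) (hL : IsCompact L) (hstrict : StrictConvex ℝ L)
    (h0 : 0 ∈ interior L) (hline : AvoidsLine L x e) (he0 : e ≠ 0) (hnx : ⟪n, x⟫ = 1)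
    (hne : ⟪n, e⟫ = 0) (hx : Tendsto x' F (𝓝 x)) (he : Tendsto e' F (𝓝 e)) :
    ∃ n' p' : ι → E3, Tendsto p' F (𝓝 p) ∧ ∀ᶠ i in F, IsContact L (n' i) (p' i) ∧
      ⟪n' i, x' i⟫ = 1 ∧ ⟪n' i, e' i⟫ = 0 := by
  rcases hp.isLineContact_or_neg hnx hne hline (hline.cross_ne_zero (interior_subset h0) he0)
    with h | h
  · obtain ⟨n', p', hev, -, hlim⟩ := h.exists_tendsto hL hstrict h0 hline hx he
    exact ⟨n', p', hlim, hev.mono fun i hi ↦ ⟨hi.toIsContact, hi.inner_base, hi.inner_dir⟩⟩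
  · obtain ⟨n', p', hev, -, hlim⟩ := h.exists_tendsto hL hstrict h0 hline.neg hx he.neg
    exact ⟨n', p', hlim, hev.mono fun i hi ↦
      ⟨hi.toIsContact, hi.inner_base, by simpa using hi.inner_dir⟩⟩

lemma AvoidsLine.exists_isContact_pair_dir {L : Set E3} {x e : E3} (hL : IsCompact L)
    (hconv : Convex ℝ L) (h0 : 0 ∈ interior L) (h : AvoidsLine L x e) (he : e ≠ 0) :
    ∃ n p m q, IsContact L n p ∧ IsContact L m q ∧ p ≠ q ∧ ⟪n, x⟫ = 1 ∧ ⟪n, e⟫ = 0 ∧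
      ⟪m, x⟫ = 1 ∧ ⟪m, e⟫ = 0 := by
  obtain ⟨n, p, m, q, hp, hq, hpq⟩ := h.exists_isLineContact_pair hL hconv h0 he
  exact ⟨n, p, m, q, hp.toIsContact, hq.toIsContact, hpq, hp.inner_base, hp.inner_dir,
    hq.inner_base, by simpa using hq.inner_dir⟩

/-! ### First-order variation of the pole -/

/-- The scaled increment `c • (pole (Δ y) - pole (Δ z))` of the poles between `z` and the boundary
point `y` of `K` on the ray through `z + h • x`. -/
def poleIncrement (K : Set E3) (Δ : E3 → AffineSubspace ℝ E3) (z : E3) (h c : ℝ) (x : E3) : E3 :=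
  c • (pole (Δ (radialProj K (z + h • x))) - pole (Δ z))

/-- Asymptotic form of the relation between the poles at two points `y₁ y₂` of `bd K` near `z`: if a
support plane through the line `y₁y₂` touches `L` at `p`, then both poles have inner product `1`
with `p`. The points of `k^⊥` are rescaled displacements from `z`. -/
def AreIncrements (L : Set E3) (z k : E3) {ι : Type*} (F : Filter ι)
    (Q : ι → (ℝ ∙ k)ᗮ → E3) : Prop :=
  ∀ ⦃x y : (ℝ ∙ k)ᗮ⦄ ⦃x' y' : ι → (ℝ ∙ k)ᗮ⦄ ⦃n p : E3⦄, x ≠ y → Tendsto x' F (𝓝 x) →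
    Tendsto y' F (𝓝 y) → IsContact L n p → ⟪n, z⟫ = 1 → ⟪n, x⟫ = ⟪n, y⟫ →
    ∃ p' : ι → E3, Tendsto p' F (𝓝 p) ∧ ∀ᶠ i in F, ⟪Q i (x' i) - Q i (y' i), p' i⟫ = 0

namespace AlmostFreePair

variable {K L : Set E3} {Δ : E3 → AffineSubspace ℝ E3} {z k : E3}

lemma poleIncrement_zero (S : AlmostFreePair K L Δ) (hz : z ∈ frontier K) (h c : ℝ) :
    poleIncrement K Δ z h c 0 = 0 := by
  rw [poleIncrement, smul_zero, add_zero,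
    radialProj_of_mem_frontier S.convex_outer S.mem_nhds_zero hz, sub_self, smul_zero]

lemma avoidsLine_gradient (S : AlmostFreePair K L Δ) (hz : z ∈ frontier K)
    (hk : HasGradientAt (gauge K) k z) (x : (ℝ ∙ k)ᗮ) : AvoidsLine L z x :=
  avoidsLine_of_inner_lt (S.inner_gradient_self hz hk)
    (Submodule.mem_orthogonal_singleton_iff_inner_right.mp x.2) fun _ ↦ S.inner_gradient_lt_one hk

lemma areIncrements_poleIncrement (S : AlmostFreePair K L Δ) (hz : z ∈ frontier K)
    (hk : HasGradientAt (gauge K) k z) {ι : Type*} {F : Filter ι} {h : ι → ℝ} (c : ι → ℝ)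
    (hh : Tendsto h F (𝓝[≠] 0)) :
    AreIncrements L z k F fun i x ↦ poleIncrement K Δ z (h i) (c i) x := by
  intro x y x' y' n p hxy hx hy hp hnz hnxy
  have hlim {x : (ℝ ∙ k)ᗮ} {x' : ι → (ℝ ∙ k)ᗮ} (hx : Tendsto x' F (𝓝 x)) :
      Tendsto (fun i ↦ z + h i • (x' i : E3)) F (𝓝 z) := by
    simpa using tendsto_const_nhds.add ((tendsto_nhdsWithin_iff.mp hh).1.smul
      (continuous_subtype_val.continuousAt.tendsto.comp hx))
  have hslope {x : (ℝ ∙ k)ᗮ} {x' : ι → (ℝ ∙ k)ᗮ} (hx : Tendsto x' F (𝓝 x)) :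
      Tendsto (fun i ↦ (h i)⁻¹ • (radialProj K (z + h i • (x' i : E3)) - z)) F (𝓝 x) :=
    tendsto_slope_radialProj hk (S.gauge_eq_one hz) hh
      (continuous_subtype_val.continuousAt.tendsto.comp hx)
      (Submodule.mem_orthogonal_singleton_iff_inner_right.mp x.2)
  have hdir := (hslope hx).sub (hslope hy)
  simp only [← smul_sub, sub_sub_sub_cancel_right] at hdir
  obtain ⟨n', p', hpp, hev⟩ := hp.exists_tendsto S.isCompact_inner S.strictConvex_inner
    S.zero_mem_interior (S.avoidsLine_gradient hz hk (x - y))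
    (by simpa [sub_eq_zero] using hxy) hnz (by simp [inner_sub_right, hnxy])
    (S.tendsto_radialProj hz (hlim hx)) hdir
  refine ⟨p', hpp, ?_⟩
  filter_upwards [hev, (hlim hx).eventually_ne (S.ne_zero hz),
    (hlim hy).eventually_ne (S.ne_zero hz), (tendsto_nhdsWithin_iff.mp hh).2]
    with i ⟨hi, hix, hid⟩ hx0 hy0 (hh0 : h i ≠ 0)
  have hiy : ⟪n' i, radialProj K (z + h i • (y' i : E3))⟫ = 1 := by
    rw [inner_smul_right, mul_eq_zero_iff_left (inv_ne_zero hh0), inner_sub_right, hix,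
      sub_eq_zero] at hid
    exact hid.symm
  rw [poleIncrement, poleIncrement, ← smul_sub, real_inner_smul_left, sub_sub_sub_cancel_right,
    inner_sub_left, S.inner_pole (S.radialProj_mem hx0) ⟨_, hi, hix⟩,
    S.inner_pole (S.radialProj_mem hy0) ⟨_, hi, hiy⟩, sub_self, mul_zero]

/-- A contact point shared by two directions would have the normal `k`, whose plane misses `L`. -/
lemma exists_contact_pair_of_cross_ne_zero (S : AlmostFreePair K L Δ) (hz : z ∈ frontier K)
    (hk : HasGradientAt (gauge K) k z) {u v : (ℝ ∙ k)ᗮ} (huv : cross (u : E3) v ≠ 0) {l r : E3}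
    (hr : IsContact L l r) (hlz : ⟪l, z⟫ = 1) (hlv : ⟪l, v⟫ = 0) :
    ∃ n p m q, IsContact L n p ∧ IsContact L m q ∧ ⟪n, z⟫ = 1 ∧ ⟪n, u⟫ = 0 ∧ ⟪m, z⟫ = 1 ∧
      ⟪m, u⟫ = 0 ∧ ⟪cross p q, r⟫ ≠ 0 := by
  have hu0 : (u : E3) ≠ 0 := by rintro h; simp [h] at huv
  obtain ⟨n, p, m, q, hp, hq, hpq, hnz, hnu, hmz, hmu⟩ :=
    (S.avoidsLine_gradient hz hk u).exists_isContact_pair_dir S.isCompact_inner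
      S.strictConvex_inner.convex S.zero_mem_interior hu0
  have hne {n p : E3} (hp : IsContact L n p) (hnz : ⟪n, z⟫ = 1) (hnu : ⟪n, u⟫ = 0) : p ≠ r := by
    rintro rfl
    obtain rfl := S.normal_unique hp hr
    have hnk : n = k := eq_of_inner_eq_one huv hnu hlv
      (Submodule.mem_orthogonal_singleton_iff_inner_right.mp u.2)
      (Submodule.mem_orthogonal_singleton_iff_inner_right.mp v.2) hnz (S.inner_gradient_self hz hk)
    exact (S.inner_gradient_lt_one hk hp.mem).ne (hnk ▸ hp.inner_eq)
  exact ⟨n, p, m, q, hp, hq, hnz, hnu, hmz, hmu,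
    S.inner_cross_ne_zero hz ⟨n, hp, hnz⟩ ⟨m, hq, hmz⟩ ⟨l, hr, hlz⟩
      (cross_sub_sub_ne_zero_of_isContact S.strictConvex_inner hp hq hr hpq (hne hp hnz hnu)
        (hne hq hmz hmu))⟩

lemma exists_isContact_inner_eq_zero (S : AlmostFreePair K L Δ) (hz : z ∈ frontier K)
    (hk : HasGradientAt (gauge K) k z) {x : (ℝ ∙ k)ᗮ} (hx : x ≠ 0) :
    ∃ n p, IsContact L n p ∧ ⟪n, z⟫ = 1 ∧ ⟪n, x⟫ = 0 := by
  obtain ⟨n, p, -, -, hp, -, -, hnz, hnx, -⟩ :=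
    (S.avoidsLine_gradient hz hk x).exists_isContact_pair_dir S.isCompact_inner
      S.strictConvex_inner.convex S.zero_mem_interior (by simpa using hx)
  exact ⟨n, p, hp, hnz, hnx⟩

end AlmostFreePair

/-- `f` is a first-order variation, over the displacements `k^⊥`, of the pole of the plane of
contact at `z`: it satisfies the limit form of the relation `AreIncrements`. -/
structure IsTangentMap (L : Set E3) (z k : E3) (f : (ℝ ∙ k)ᗮ → E3) : Prop where
  map_zero : f 0 = 0
  inner_sub_eq_zero : ∀ ⦃x y : (ℝ ∙ k)ᗮ⦄ ⦃n p : E3⦄, IsContact L n p → ⟪n, z⟫ = 1 →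
    ⟪n, x⟫ = ⟪n, y⟫ → ⟪f x - f y, p⟫ = 0

lemma IsTangentMap.inner_eq_zero {L : Set E3} {z k n p : E3} {f : (ℝ ∙ k)ᗮ → E3}
    {x : (ℝ ∙ k)ᗮ} (hf : IsTangentMap L z k f) (hp : IsContact L n p) (hnz : ⟪n, z⟫ = 1)
    (hnx : ⟪n, x⟫ = 0) : ⟪f x, p⟫ = 0 := by
  simpa [hf.map_zero] using hf.inner_sub_eq_zero (y := 0) hp hnz (by simpa using hnx)

lemma AreIncrements.inner_sub_eq_zero {L : Set E3} {z k : E3} {ι : Type*} {F : Filter ι} [F.NeBot]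
    {Q : ι → (ℝ ∙ k)ᗮ → E3} (hQ : AreIncrements L z k F Q) {x y : (ℝ ∙ k)ᗮ}
    {x' y' : ι → (ℝ ∙ k)ᗮ} {n p α β : E3} (hxy : x ≠ y) (hx : Tendsto x' F (𝓝 x))
    (hy : Tendsto y' F (𝓝 y)) (hp : IsContact L n p) (hnz : ⟪n, z⟫ = 1) (hnxy : ⟪n, x⟫ = ⟪n, y⟫)
    (hα : Tendsto (fun i ↦ Q i (x' i)) F (𝓝 α)) (hβ : Tendsto (fun i ↦ Q i (y' i)) F (𝓝 β)) :
    ⟪α - β, p⟫ = 0 := by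
  obtain ⟨p', hpp, hev⟩ := hQ hxy hx hy hp hnz hnxy
  exact tendsto_nhds_unique ((hα.sub hβ).inner hpp)
    (tendsto_const_nhds.congr' (hev.mono fun _ h ↦ h.symm))

lemma eq_zero_of_cross_eq_zero {u v x : E3} (huv : cross u v ≠ 0) (hu : cross u x = 0)
    (hv : cross v x = 0) : x = 0 := by
  have hu0 : u ≠ 0 := by rintro rfl; simp at huv
  obtain ⟨t, rfl⟩ := exists_eq_smul_of_cross_eq_zero hu0 hu
  rw [map_smul, cross_swap, smul_neg, neg_eq_zero, smul_eq_zero_iff_left huv] at hv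
  rw [hv, zero_smul]

lemma exists_cross_ne_zero {k : E3} (hk : k ≠ 0) {x : (ℝ ∙ k)ᗮ} (hx : x ≠ 0) :
    ∃ y : (ℝ ∙ k)ᗮ, cross (x : E3) y ≠ 0 := by
  have hkx : ⟪(x : E3), k⟫ = 0 := Submodule.mem_orthogonal_singleton_iff_inner_left.mp x.2
  refine ⟨⟨cross k x, Submodule.mem_orthogonal_singleton_iff_inner_left.mpr (inner_cross_left k x)⟩,
    ?_⟩
  rw [cross_cross_eq, hkx, zero_smul, sub_zero]
  exact smul_ne_zero (inner_self_ne_zero.mpr (by simpa using hx)) hk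

namespace AlmostFreePair

variable {K L : Set E3} {Δ : E3 → AffineSubspace ℝ E3} {z k : E3}

lemma gradient_ne_zero (S : AlmostFreePair K L Δ) (hz : z ∈ frontier K)
    (hk : HasGradientAt (gauge K) k z) : k ≠ 0 := by
  rintro rfl
  simpa using S.inner_gradient_self hz hk

lemma eq_zero_of_isContact (S : AlmostFreePair K L Δ) (hz : z ∈ frontier K)
    (hk : HasGradientAt (gauge K) k z) {u v : (ℝ ∙ k)ᗮ} (huv : cross (u : E3) v ≠ 0) {α l r : E3}
    (hu : ∀ n p, IsContact L n p → ⟪n, z⟫ = 1 → ⟪n, u⟫ = 0 → ⟪α, p⟫ = 0)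
    (hr : IsContact L l r) (hlz : ⟪l, z⟫ = 1) (hlv : ⟪l, v⟫ = 0) (hα : ⟪α, r⟫ = 0) : α = 0 := by
  obtain ⟨n, p, m, q, hp, hq, hnz, hnu, hmz, hmu, hdet⟩ :=
    S.exists_contact_pair_of_cross_ne_zero hz hk huv hr hlz hlv
  exact eq_zero_of_inner_eq_zero hdet (hu n p hp hnz hnu) (hu m q hq hmz hmu) hα

lemma eq_zero_of_forall_isContact (S : AlmostFreePair K L Δ) (hz : z ∈ frontier K)
    (hk : HasGradientAt (gauge K) k z) {u v : (ℝ ∙ k)ᗮ} (huv : cross (u : E3) v ≠ 0) {α : E3}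
    (hu : ∀ n p, IsContact L n p → ⟪n, z⟫ = 1 → ⟪n, u⟫ = 0 → ⟪α, p⟫ = 0)
    (hv : ∀ n p, IsContact L n p → ⟪n, z⟫ = 1 → ⟪n, v⟫ = 0 → ⟪α, p⟫ = 0) : α = 0 := by
  obtain ⟨l, r, hr, hlz, hlv⟩ := S.exists_isContact_inner_eq_zero hz hk (x := v)
    (by rintro rfl; simp at huv)
  exact S.eq_zero_of_isContact hz hk huv hu hr hlz hlv (hv l r hr hlz hlv)

lemma exists_tendsto_increments (S : AlmostFreePair K L Δ) (hz : z ∈ frontier K)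
    (hk : HasGradientAt (gauge K) k z) {ι : Type*} {F : Filter ι} {Q : ι → (ℝ ∙ k)ᗮ → E3}
    (hQ : AreIncrements L z k F Q) (hQ0 : ∀ i, Q i 0 = 0) {x y : (ℝ ∙ k)ᗮ}
    {x' y' : ι → (ℝ ∙ k)ᗮ} (hxy : cross (x : E3) y ≠ 0) (hx : Tendsto x' F (𝓝 x))
    (hy : Tendsto y' F (𝓝 y)) {α : E3} (hα : Tendsto (fun i ↦ Q i (x' i)) F (𝓝 α)) :
    ∃ β, Tendsto (fun i ↦ Q i (y' i)) F (𝓝 β) := by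
  have hne : x ≠ y := by rintro rfl; simp at hxy
  have hy0 : y ≠ 0 := by rintro rfl; simp at hxy
  obtain ⟨l, r, hr, hlz, hlv⟩ := S.exists_isContact_inner_eq_zero hz hk (sub_ne_zero.mpr hne)
  obtain ⟨n, p, m, q, hp, hq, hnz, hnu, hmz, hmu, hdet⟩ :=
    S.exists_contact_pair_of_cross_ne_zero hz hk (u := y) (v := x - y)
      (by simpa [cross_swap (y : E3) x] using hxy) hr hlz hlv
  have hzero {n p : E3} (hp : IsContact L n p) (hnz : ⟪n, z⟫ = 1) (hny : ⟪n, y⟫ = 0) :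
      ∃ p' : ι → E3, Tendsto p' F (𝓝 p) ∧ Tendsto (fun i ↦ ⟪Q i (y' i), p' i⟫) F (𝓝 0) := by
    obtain ⟨p', hpp, hev⟩ := hQ hy0 hy (tendsto_const_nhds (x := 0)) hp hnz (by simpa using hny)
    refine ⟨p', hpp, tendsto_const_nhds.congr' (hev.mono fun i hi ↦ ?_)⟩
    simpa [hQ0] using hi.symm
  obtain ⟨p', hpp, hp'⟩ := hzero hp hnz hnu
  obtain ⟨q', hqq, hq'⟩ := hzero hq hmz hmu
  obtain ⟨r', hrr, hev⟩ := hQ hne hx hy hr hlz (by simpa [inner_sub_right, sub_eq_zero] using hlv)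
  have hr' : Tendsto (fun i ↦ ⟪Q i (y' i), r' i⟫) F (𝓝 ⟪α, r⟫) := by
    refine (hα.inner hrr).congr' (hev.mono fun i hi ↦ ?_)
    rwa [inner_sub_left, sub_eq_zero] at hi
  exact ⟨_, tendsto_of_tendsto_inner hpp hqq hrr hdet hp' hq' hr'⟩

lemma exists_isTangentMap_of_increments (S : AlmostFreePair K L Δ) (hz : z ∈ frontier K)
    (hk : HasGradientAt (gauge K) k z) {ι : Type*} {F : Filter ι} [F.NeBot]
    {Q : ι → (ℝ ∙ k)ᗮ → E3} (hQ : AreIncrements L z k F Q) (hQ0 : ∀ i, Q i 0 = 0)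
    {e : (ℝ ∙ k)ᗮ} {e' : ι → (ℝ ∙ k)ᗮ} (he0 : e ≠ 0) (he : Tendsto e' F (𝓝 e)) {v : E3}
    (hv : Tendsto (fun i ↦ Q i (e' i)) F (𝓝 v)) (hv0 : v ≠ 0) :
    ∃ f, IsTangentMap L z k f ∧ ∃ x, f x ≠ 0 := by
  obtain ⟨g, hg⟩ := exists_cross_ne_zero (S.gradient_ne_zero hz hk) he0
  obtain ⟨β, hβ⟩ := S.exists_tendsto_increments hz hk hQ hQ0 hg he tendsto_const_nhds hv
  have hlim (x : (ℝ ∙ k)ᗮ) : ∃ β, Tendsto (fun i ↦ Q i x) F (𝓝 β) := by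
    by_cases hex : cross (e : E3) x = 0
    · by_cases hgx : cross (g : E3) x = 0
      · obtain rfl : x = 0 := Subtype.ext (eq_zero_of_cross_eq_zero hg hex hgx)
        exact ⟨0, by simpa only [hQ0] using tendsto_const_nhds⟩
      · exact S.exists_tendsto_increments hz hk hQ hQ0 hgx tendsto_const_nhds tendsto_const_nhds hβ
    · exact S.exists_tendsto_increments hz hk hQ hQ0 hex he tendsto_const_nhds hv
  choose f hf using hlim
  have hf0 : f 0 = 0 := tendsto_nhds_unique (hf 0) (by simpa only [hQ0] using tendsto_const_nhds)
  refine ⟨f, ⟨hf0, fun x y n p hp hnz hnxy ↦ ?_⟩, ?_⟩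
  · rcases eq_or_ne x y with rfl | hxy
    · rw [sub_self, inner_zero_left]
    · exact hQ.inner_sub_eq_zero hxy tendsto_const_nhds tendsto_const_nhds hp hnz hnxy (hf x) (hf y)
  · by_contra! hf_zero
    have hinner {y : (ℝ ∙ k)ᗮ} (hey : e ≠ y) {n p : E3} (hp : IsContact L n p) (hnz : ⟪n, z⟫ = 1)
        (hny : ⟪n, e⟫ = ⟪n, y⟫) : ⟪v, p⟫ = 0 := by
      simpa [hf_zero] using hQ.inner_sub_eq_zero hey he tendsto_const_nhds hp hnz hny hv (hf y)
    refine hv0 (S.eq_zero_of_forall_isContact hz hk (u := e) (v := e - g) (by simpa using hg)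
      (fun n p hp hnz hne ↦ hinner he0 hp hnz (by simpa using hne))
      fun n p hp hnz hne ↦ hinner (y := g) ?_ hp hnz ?_)
    · rintro rfl; simp at hg
    · simpa [inner_sub_right, sub_eq_zero] using hne

lemma areIncrements_of_isTangentMap (S : AlmostFreePair K L Δ) (hz : z ∈ frontier K)
    (hk : HasGradientAt (gauge K) k z) {ι : Type*} {F : Filter ι} {f : (ℝ ∙ k)ᗮ → E3}
    (hf : IsTangentMap L z k f) : AreIncrements L z k F fun _ ↦ f := by
  intro x y x' y' n p hxy hx hy hp hnz hnxy
  obtain ⟨n', p', hpp, hev⟩ := hp.exists_tendsto S.isCompact_inner S.strictConvex_inner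
    S.zero_mem_interior (S.avoidsLine_gradient hz hk (x - y)) (by simpa [sub_eq_zero] using hxy) hnz
    (by simp [inner_sub_right, hnxy]) (tendsto_const_nhds (f := F))
    ((continuous_subtype_val.tendsto _).comp (hx.sub hy))
  refine ⟨p', hpp, hev.mono fun i ⟨hi, hiz, hixy⟩ ↦ hf.inner_sub_eq_zero hi hiz ?_⟩
  simpa [inner_sub_right, sub_eq_zero] using hixy

lemma continuousAt_of_isTangentMap (S : AlmostFreePair K L Δ) (hz : z ∈ frontier K)
    (hk : HasGradientAt (gauge K) k z) {f : (ℝ ∙ k)ᗮ → E3} (hf : IsTangentMap L z k f)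
    {x : (ℝ ∙ k)ᗮ} (hx : x ≠ 0) : ContinuousAt f x := by
  obtain ⟨y, hxy⟩ := exists_cross_ne_zero (S.gradient_ne_zero hz hk) hx
  obtain ⟨β, hβ⟩ := S.exists_tendsto_increments hz hk (x := y)
    (S.areIncrements_of_isTangentMap hz hk hf) (fun _ ↦ hf.map_zero)
    (by simpa [cross_swap (y : E3)] using hxy) tendsto_const_nhds tendsto_id
    (tendsto_const_nhds (f := 𝓝 x))
  rwa [ContinuousAt, tendsto_nhds_unique (tendsto_pure_nhds f x) (hβ.mono_left (pure_le_nhds x))]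

lemma map_add_of_cross_ne_zero (S : AlmostFreePair K L Δ) (hz : z ∈ frontier K)
    (hk : HasGradientAt (gauge K) k z) {f : (ℝ ∙ k)ᗮ → E3} (hf : IsTangentMap L z k f)
    {x y : (ℝ ∙ k)ᗮ} (hxy : cross (x : E3) y ≠ 0) : f (x + y) = f x + f y := by
  rw [← sub_eq_zero]
  refine S.eq_zero_of_forall_isContact hz hk hxy (fun n p hp hnz hnx ↦ ?_) fun n p hp hnz hny ↦ ?_
  · rw [← sub_sub, sub_right_comm, inner_sub_left, hf.inner_eq_zero hp hnz hnx,
      hf.inner_sub_eq_zero hp hnz (by simp [inner_add_right, hnx]), sub_zero]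
  · rw [← sub_sub, inner_sub_left, hf.inner_eq_zero hp hnz hny,
      hf.inner_sub_eq_zero hp hnz (by simp [inner_add_right, hny]), sub_zero]

lemma map_add_of_isTangentMap (S : AlmostFreePair K L Δ) (hz : z ∈ frontier K)
    (hk : HasGradientAt (gauge K) k z) {f : (ℝ ∙ k)ᗮ → E3} (hf : IsTangentMap L z k f)
    (x y : (ℝ ∙ k)ᗮ) : f (x + y) = f x + f y := by
  rcases eq_or_ne x 0 with rfl | hx
  · rw [zero_add, hf.map_zero, zero_add]
  by_cases hxy : cross (x : E3) y = 0
  swap; · exact S.map_add_of_cross_ne_zero hz hk hf hxy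
  obtain ⟨g, hg⟩ := exists_cross_ne_zero (S.gradient_ne_zero hz hk) hx
  obtain ⟨t, ht⟩ := exists_eq_smul_of_cross_eq_zero (by simpa using hx) hxy
  obtain rfl : y = t • x := Subtype.ext ht
  have hadd (s : ℝ) : f (s • x + g) = f (s • x) + f g := by
    rcases eq_or_ne s 0 with rfl | hs
    · rw [zero_smul, zero_add, hf.map_zero, zero_add]
    · exact S.map_add_of_cross_ne_zero hz hk hf (by simpa using smul_ne_zero hs hg)
  have hx_add : f (x + (t • x + g)) = f x + f (t • x + g) :=
    S.map_add_of_cross_ne_zero hz hk hf (by simpa using hg)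
  have hsum : f (x + t • x) + f g = f x + f (t • x) + f g := by
    rw [add_assoc, ← hadd, ← hx_add, ← add_assoc, show x + t • x = (1 + t) • x by module, hadd]
  exact add_right_cancel hsum

lemma map_ne_zero_of_isTangentMap (S : AlmostFreePair K L Δ) (hz : z ∈ frontier K)
    (hk : HasGradientAt (gauge K) k z) {f : (ℝ ∙ k)ᗮ → E3} (hf : IsTangentMap L z k f)
    (hf0 : ∃ x, f x ≠ 0) {x : (ℝ ∙ k)ᗮ} (hx : x ≠ 0) : f x ≠ 0 := by
  intro hfx
  have hzero {x y : (ℝ ∙ k)ᗮ} (hxy : cross (x : E3) y ≠ 0) (hfx : f x = 0) : f y = 0 :=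
    S.eq_zero_of_forall_isContact hz hk (u := y) (v := x - y)
      (by simpa [cross_swap (y : E3) x] using hxy)
      (fun n p hp hnz hny ↦ hf.inner_eq_zero hp hnz hny) fun n p hp hnz hnxy ↦ by
        simpa [hfx] using hf.inner_sub_eq_zero (x := x) (y := y) hp hnz
          (by simpa [inner_sub_right, sub_eq_zero] using hnxy)
  obtain ⟨y, hy⟩ := hf0
  obtain ⟨g, hg⟩ := exists_cross_ne_zero (S.gradient_ne_zero hz hk) hx
  have hxy : cross (x : E3) y = 0 := by_contra fun h ↦ hy (hzero h hfx)
  have hgy : cross (g : E3) y = 0 := by_contra fun h ↦ hy (hzero h (hzero hg hfx))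
  obtain rfl : y = 0 := Subtype.ext (eq_zero_of_cross_eq_zero hg hxy hgy)
  exact hy hf.map_zero

end AlmostFreePair

/-- The projection of `ℝ³` onto `k^⊥` along `z`, where `⟪k, z⟫ = 1`. -/
def projAlong (k z : E3) (hkz : ⟪k, z⟫ = 1) : E3 →ₗ[ℝ] (ℝ ∙ k)ᗮ :=
  (LinearMap.id - (innerₛₗ ℝ k).smulRight z).codRestrict _ fun x ↦ by
    rw [Submodule.mem_orthogonal_singleton_iff_inner_right]
    simp [inner_sub_right, inner_smul_right, hkz]

lemma coe_projAlong {k z : E3} (hkz : ⟪k, z⟫ = 1) (x : E3) :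
    (projAlong k z hkz x : E3) = x - ⟪k, x⟫ • z := rfl

lemma exists_tendsto_of_eventually_norm_eq_one {ι E : Type*} [NormedAddCommGroup E] [ProperSpace E]
    (F : Ultrafilter ι) {f : ι → E} (hf : ∀ᶠ i in F, ‖f i‖ = 1) :
    ∃ x, x ≠ 0 ∧ Tendsto f F (𝓝 x) := by
  obtain ⟨x, hx, hlim⟩ := (isCompact_sphere (0 : E) 1).ultrafilter_le_nhds (F.map f)
    (le_principal_iff.mpr (hf.mono fun i hi ↦ mem_sphere_zero_iff_norm.mpr hi))
  exact ⟨x, ne_zero_of_mem_unit_sphere ⟨x, hx⟩, hlim⟩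

namespace AlmostFreePair

variable {K L : Set E3} {Δ : E3 → AffineSubspace ℝ E3} {y z k : E3}

lemma plane_eq_of_pole_eq (S : AlmostFreePair K L Δ) (hz : z ∈ frontier K) (hy : y ∈ frontier K)
    (h : pole (Δ y) = pole (Δ z)) : Δ y = Δ z :=
  SetLike.ext fun p ↦ by rw [S.mem_plane_iff hy, S.mem_plane_iff hz, h]

lemma exists_ultrafilter_plane_ne (S : AlmostFreePair K L Δ) (hz : z ∈ frontier K)
    (hk : HasGradientAt (gauge K) k z) :
    ∃ F : Ultrafilter (ℝ ∙ k)ᗮ, Tendsto (fun w ↦ w) (F : Filter (ℝ ∙ k)ᗮ) (𝓝 0) ∧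
      ∀ᶠ w : (ℝ ∙ k)ᗮ in F, Δ (radialProj K (z + w)) ≠ Δ z := by
  have : (𝓝[frontier K] z ⊓ 𝓟 {y | Δ y ≠ Δ z}).NeBot :=
    frequently_iff_neBot.mp (not_eventually.mp (S.not_eventually_plane_eq hz))
  set F := Ultrafilter.of (𝓝[frontier K] z ⊓ 𝓟 {y | Δ y ≠ Δ z})
  have hF : ↑F ≤ 𝓝[frontier K] z ⊓ 𝓟 {y | Δ y ≠ Δ z} := Ultrafilter.of_le _
  have hFz : Tendsto id F (𝓝 z) := hF.trans (inf_le_left.trans nhdsWithin_le_nhds)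
  have hFK : ∀ᶠ y in F, y ∈ frontier K := hF.trans inf_le_left self_mem_nhdsWithin
  have hFΔ : ∀ᶠ y in F, Δ y ≠ Δ z := hF.trans inf_le_right (mem_principal_self _)
  have hkz := S.inner_gradient_self hz hk
  have hk1 : Tendsto (fun y ↦ ⟪k, y⟫) F (𝓝 1) := hkz ▸ tendsto_const_nhds.inner hFz
  refine ⟨F.map fun y ↦ ⟪k, y⟫⁻¹ • projAlong k z hkz y, ?_, ?_⟩
  · have hproj := ((projAlong k z hkz).continuous_of_finiteDimensional.tendsto z).comp hFz
    have hprojz : projAlong k z hkz z = 0 := Subtype.ext (by simp [coe_projAlong, hkz])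
    rw [hprojz] at hproj
    refine tendsto_map'_iff.mpr ?_
    simpa [Function.comp_def] using (hk1.inv₀ one_ne_zero).smul hproj
  · refine eventually_map.mpr ?_
    filter_upwards [hk1.eventually_const_lt zero_lt_one, hFK, hFΔ] with y hy hyK hΔ
    have hray : z + ((⟪k, y⟫⁻¹ • projAlong k z hkz y : (ℝ ∙ k)ᗮ) : E3) = ⟪k, y⟫⁻¹ • y := by
      rw [Submodule.coe_smul, coe_projAlong, smul_sub, inv_smul_smul₀ hy.ne', add_sub_cancel]
    rwa [hray, radialProj_smul (inv_pos.mpr hy),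
      radialProj_of_mem_frontier S.convex_outer S.mem_nhds_zero hyK]

/-- Blow-up at `z`: the displacement `w` of a boundary point of `K` and the increment of the pole
are both rescaled to unit length. -/
lemma exists_isTangentMap (S : AlmostFreePair K L Δ) (hz : z ∈ frontier K)
    (hk : HasGradientAt (gauge K) k z) : ∃ f, IsTangentMap L z k f ∧ ∃ x, f x ≠ 0 := by
  obtain ⟨F, hF0, hFΔ⟩ := S.exists_ultrafilter_plane_ne hz hk
  set a : (ℝ ∙ k)ᗮ → E3 := fun w ↦ pole (Δ (radialProj K (z + w))) - pole (Δ z)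
  have hw0 : ∀ᶠ w : (ℝ ∙ k)ᗮ in F, w ≠ 0 := by
    filter_upwards [hFΔ] with w hw h0
    refine hw ?_
    rw [h0, ZeroMemClass.coe_zero, add_zero,
      radialProj_of_mem_frontier S.convex_outer S.mem_nhds_zero hz]
  have ha0 : ∀ᶠ w in F, a w ≠ 0 := by
    filter_upwards [hFΔ] with w hw
    refine fun h ↦ hw (S.plane_eq_of_pole_eq hz (S.radialProj_mem fun h0 ↦ ?_) (sub_eq_zero.mp h))
    have hkw : ⟪k, z + w⟫ = 1 := by
      rw [inner_add_right, S.inner_gradient_self hz hk,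
        Submodule.mem_orthogonal_singleton_iff_inner_right.mp w.2, add_zero]
    rw [h0, inner_zero_right] at hkw
    exact zero_ne_one hkw
  obtain ⟨e₀, he₀, he⟩ := exists_tendsto_of_eventually_norm_eq_one F (f := fun w ↦ ‖w‖⁻¹ • w)
    (hw0.mono fun w hw ↦ norm_smul_inv_norm (𝕜 := ℝ) hw)
  have hincr : ∀ᶠ w in F, poleIncrement K Δ z ‖w‖ ‖a w‖⁻¹ (‖w‖⁻¹ • w : (ℝ ∙ k)ᗮ) =
      ‖a w‖⁻¹ • a w := by
    filter_upwards [hw0] with w hw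
    rw [poleIncrement, Submodule.coe_smul, smul_inv_smul₀ (norm_ne_zero_iff.mpr hw)]
  obtain ⟨v, hv, hlim⟩ := exists_tendsto_of_eventually_norm_eq_one F
    (f := fun w ↦ poleIncrement K Δ z ‖w‖ ‖a w‖⁻¹ (‖w‖⁻¹ • w : (ℝ ∙ k)ᗮ)) (by
      filter_upwards [hincr, ha0] with w hw haw
      rw [hw]
      exact norm_smul_inv_norm (𝕜 := ℝ) haw)
  refine S.exists_isTangentMap_of_increments hz hk
    (S.areIncrements_poleIncrement hz hk (fun w ↦ ‖a w‖⁻¹) (h := fun w ↦ ‖w‖) ?_)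
    (fun _ ↦ S.poleIncrement_zero hz _ _) he₀ he hlim hv
  exact tendsto_nhdsWithin_iff.mpr ⟨by simpa using hF0.norm,
    hw0.mono fun w hw ↦ norm_ne_zero_iff.mpr hw⟩

lemma exists_linear_isTangentMap (S : AlmostFreePair K L Δ) (hz : z ∈ frontier K)
    (hk : HasGradientAt (gauge K) k z) :
    ∃ f : (ℝ ∙ k)ᗮ →ₗ[ℝ] E3, IsTangentMap L z k f ∧ ∀ x ≠ 0, f x ≠ 0 := by
  obtain ⟨f, hf, hf0⟩ := S.exists_isTangentMap hz hk
  set g : (ℝ ∙ k)ᗮ →+ E3 := AddMonoidHom.mk' f (S.map_add_of_isTangentMap hz hk hf)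
  obtain ⟨x, hx⟩ := hf0
  have hx0 : x ≠ 0 := by
    rintro rfl
    exact hx hf.map_zero
  have hcont : ContinuousAt f 0 := by
    have hshift : f = fun y ↦ f (x + y) - f x := funext fun y ↦ by
      rw [S.map_add_of_isTangentMap hz hk hf, add_sub_cancel_left]
    rw [hshift]
    refine ContinuousAt.sub (ContinuousAt.comp ?_ (by fun_prop)) continuousAt_const
    rw [add_zero]
    exact S.continuousAt_of_isTangentMap hz hk hf hx0
  exact ⟨(g.toRealLinearMap (continuous_of_continuousAt_zero g hcont)).toLinearMap, hf,
    fun y hy ↦ S.map_ne_zero_of_isTangentMap hz hk hf ⟨x, hx⟩ hy⟩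

/-- The increments of the pole are determined only by their inner products with the contact points
`p`; adding a suitable multiple of the pole turns these into inner products with `p - z`. -/
lemma exists_bilinForm (S : AlmostFreePair K L Δ) (hz : z ∈ frontier K)
    (hk : HasGradientAt (gauge K) k z) :
    ∃ b : LinearMap.BilinForm ℝ E3, ∀ n p, IsContact L n p → ⟪n, z⟫ = 1 →
      (∀ x, ⟪k, x⟫ = 0 → ⟪n, x⟫ = 0 → b x (p - z) = 0) ∧
      ∀ x, ⟪k, x⟫ = 0 → ⟪n, x⟫ ≠ 0 → b x (p - z) ≠ 0 := by
  obtain ⟨f, hf, hf0⟩ := S.exists_linear_isTangentMap hz hk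
  have hkz := S.inner_gradient_self hz hk
  have haz : 1 - ⟪z, pole (Δ z)⟫ ≠ 0 :=
    sub_ne_zero.mpr fun h ↦ S.inner_pole_self_ne_one hz (by rw [real_inner_comm, ← h])
  set A := f ∘ₗ projAlong k z hkz
  set b : LinearMap.BilinForm ℝ E3 := innerₗ E3 ∘ₗ
    (A + ((1 - ⟪z, pole (Δ z)⟫)⁻¹ • innerₗ E3 z ∘ₗ A).smulRight (pole (Δ z))) with hb
  have hbf {x p : E3} (hkx : ⟪k, x⟫ = 0) (hp : p ∈ contactSet L z) : b x (p - z) =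
      ⟪f ⟨x, Submodule.mem_orthogonal_singleton_iff_inner_right.mpr hkx⟩, p⟫ := by
    have hA : A x = f ⟨x, Submodule.mem_orthogonal_singleton_iff_inner_right.mpr hkx⟩ :=
      congrArg f (Subtype.ext (by simp [coe_projAlong, hkx]))
    rw [← hA]
    simp [hb, inner_sub_right, S.inner_pole hz hp, real_inner_comm z]
    field_simp
    ring
  refine ⟨b, fun n p hp hnz ↦ ⟨fun x hkx hnx ↦ ?_, fun x hkx hnx hbx ↦ ?_⟩⟩
  · rw [hbf hkx ⟨n, hp, hnz⟩]
    exact hf.inner_eq_zero hp hnz hnx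
  · rw [hbf hkx ⟨n, hp, hnz⟩] at hbx
    set x' : (ℝ ∙ k)ᗮ := ⟨x, Submodule.mem_orthogonal_singleton_iff_inner_right.mpr hkx⟩
    have hx0 : x' ≠ 0 := fun h ↦
      hnx (by rw [show x = 0 from congrArg Subtype.val h, inner_zero_right])
    obtain ⟨y, hy0, hky, hny⟩ := exists_ne_zero_orthogonal k n
    have hxy : cross x y ≠ 0 := fun h ↦ by
      rw [cross_swap, neg_eq_zero] at h
      obtain ⟨t, rfl⟩ := exists_eq_smul_of_cross_eq_zero hy0 h
      exact hnx (by rw [inner_smul_right, hny, mul_zero])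
    exact hf0 x' hx0 (S.eq_zero_of_isContact hz hk (u := x')
      (v := ⟨y, Submodule.mem_orthogonal_singleton_iff_inner_right.mpr hky⟩) hxy
      (fun m q hq hmz hmx ↦ hf.inner_eq_zero hq hmz hmx) hp hnz hny hbx)

end AlmostFreePair

/-! ### The support cone at a smooth point -/

section Envelope

variable {E : Type*} [NormedAddCommGroup E] [InnerProductSpace ℝ E] {N : Set E} {n u : ℝ → E}
  {u' : E} {t : ℝ}

lemma continuousAt_of_unique_isMaxOn_inner (hN : IsCompact N) (hn : ∀ s, n s ∈ N)
    (hmax : ∀ s, IsMaxOn (fun m ↦ ⟪m, u s⟫) N (n s))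
    (huniq : ∀ m ∈ N, IsMaxOn (fun m ↦ ⟪m, u t⟫) N m → m = n t) (hu : ContinuousAt u t) :
    ContinuousAt n t := by
  refine tendsto_iff_ultrafilter _ _ _ |>.mpr fun F hF ↦ ?_
  obtain ⟨m, hmN, hlim⟩ := hN.ultrafilter_le_nhds (F.map n)
    (le_principal_iff.mpr (Eventually.of_forall (f := (F : Filter ℝ)) hn))
  have hm : IsMaxOn (fun m ↦ ⟪m, u t⟫) N m := fun m' hm' ↦
    le_of_tendsto_of_tendsto' (tendsto_const_nhds.inner (hu.mono_left hF))
      (Tendsto.inner (𝕜 := ℝ) hlim (hu.mono_left hF)) fun s ↦ hmax s hm'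
  exact huniq m hmN hm ▸ hlim

lemma hasDerivAt_inner_of_unique_isMaxOn (hN : IsCompact N) (hn : ∀ s, n s ∈ N)
    (hmax : ∀ s, IsMaxOn (fun m ↦ ⟪m, u s⟫) N (n s))
    (huniq : ∀ m ∈ N, IsMaxOn (fun m ↦ ⟪m, u t⟫) N m → m = n t) (hu : HasDerivAt u u' t) :
    HasDerivAt (fun s ↦ ⟪n s, u s⟫) ⟪n t, u'⟫ t := by
  have hcont : Tendsto (fun s ↦ n s - n t) (𝓝 t) (𝓝 0) := tendsto_sub_nhds_zero_iff.mpr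
    (continuousAt_of_unique_isMaxOn_inner hN hn hmax huniq hu.continuousAt)
  have hsmall : (fun s ↦ ‖n s - n t‖ * ‖u s - u t‖) =o[𝓝 t] fun s ↦ s - t := by
    simpa using ((Asymptotics.isLittleO_one_iff ℝ).mpr hcont).norm_left.mul_isBigO
      hu.isBigO_sub.norm_left
  have herr : (fun s ↦ ⟪n s, u s⟫ - ⟪n t, u s⟫) =o[𝓝 t] fun s ↦ s - t := by
    refine (Asymptotics.isBigO_of_le _ fun s ↦ ?_).trans_isLittleO hsmall
    have hlower : ⟪n t, u s⟫ ≤ ⟪n s, u s⟫ := hmax s (hn t)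
    have hupper : ⟪n s, u t⟫ ≤ ⟪n t, u t⟫ := hmax t (hn s)
    have hcs := real_inner_le_norm (n s - n t) (u s - u t)
    simp only [inner_sub_left, inner_sub_right] at hcs
    rw [Real.norm_of_nonneg (sub_nonneg.mpr hlower), Real.norm_of_nonneg (by positivity)]
    linarith
  have hlin : HasDerivAt (fun s ↦ ⟪n t, u s⟫) ⟪n t, u'⟫ t := by
    simpa using (hasDerivAt_const t (n t)).inner ℝ hu
  rw [hasDerivAt_iff_isLittleO] at hlin ⊢
  refine (herr.add hlin).congr_left fun s ↦ ?_
  ring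

end Envelope

section Conic

variable {V : Type*} [AddCommGroup V] [Module ℝ V]

/-- The point with angular parameter `t` on the ellipse with conjugate semiaxes `e₁`, `e₂`. -/
def ellipsePoint (e₁ e₂ : V) (t : ℝ) : V := Real.cos t • e₁ + Real.sin t • e₂

lemma exists_eq_smul_ellipsePoint (e₁ e₂ : V) (a b : ℝ) :
    ∃ r t : ℝ, 0 ≤ r ∧ a • e₁ + b • e₂ = r • ellipsePoint e₁ e₂ t := by
  refine ⟨‖(⟨a, b⟩ : ℂ)‖, Complex.arg ⟨a, b⟩, norm_nonneg _, ?_⟩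
  rw [ellipsePoint, smul_add, smul_smul, smul_smul, Complex.norm_mul_cos_arg,
    Complex.norm_mul_sin_arg]

lemma hasDerivAt_ellipsePoint {V : Type*} [NormedAddCommGroup V] [NormedSpace ℝ V] (e₁ e₂ : V)
    (t : ℝ) : HasDerivAt (ellipsePoint e₁ e₂) (ellipsePoint e₂ (-e₁) t) t := by
  refine (((Real.hasDerivAt_cos t).smul_const e₁).add
    ((Real.hasDerivAt_sin t).smul_const e₂)).congr_deriv ?_
  rw [ellipsePoint]
  module

lemma ellipsePoint_periodic (e₁ e₂ : V) : (ellipsePoint e₁ e₂).Periodic (2 * Real.pi) :=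
  fun t ↦ by rw [ellipsePoint, ellipsePoint, Real.cos_add_two_pi, Real.sin_add_two_pi]

variable {b : LinearMap.BilinForm ℝ V} {z e₁ e₂ : V} {ρ ρ' : ℝ → ℝ}

/-- Along the curve `y`, the derivative of `b y y - 2 * b y z` is `b y y' - b y' y`, because the
tangent satisfies `b y' (y - z) = 0`. -/
lemma hasDerivAt_conic {t : ℝ} (hρ : HasDerivAt ρ (ρ' t) t)
    (h : b (ρ t • ellipsePoint e₂ (-e₁) t + ρ' t • ellipsePoint e₁ e₂ t)
      (ρ t • ellipsePoint e₁ e₂ t - z) = 0) :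
    HasDerivAt (fun t ↦ b (ρ t • ellipsePoint e₁ e₂ t) (ρ t • ellipsePoint e₁ e₂ t) -
      2 * b (ρ t • ellipsePoint e₁ e₂ t) z) (ρ t ^ 2 * (b e₁ e₂ - b e₂ e₁)) t := by
  have hx := hρ.mul (Real.hasDerivAt_cos t)
  have hy := hρ.mul (Real.hasDerivAt_sin t)
  have hΦ := ((((hx.mul hx).mul_const (b e₁ e₁)).add
    ((hx.mul hy).mul_const (b e₁ e₂ + b e₂ e₁))).add ((hy.mul hy).mul_const (b e₂ e₂))).sub
    (((hx.mul_const (b e₁ z)).add (hy.mul_const (b e₂ z))).const_mul 2)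
  have hsq := Real.cos_sq_add_sin_sq t
  simp only [ellipsePoint, map_add, map_sub, map_smul, map_neg, LinearMap.add_apply,
    LinearMap.smul_apply, LinearMap.neg_apply, smul_eq_mul] at h ⊢
  refine (hΦ.congr_deriv ?_).congr_of_eventuallyEq (Eventually.of_forall fun s ↦ ?_)
  · simp only [Pi.mul_apply]
    linear_combination 2 * h + ρ t ^ 2 * (b e₁ e₂ - b e₂ e₁) * hsq
  · simp only [Pi.mul_apply, Pi.add_apply, Pi.sub_apply]
    ring

lemma conic_eq_of_periodic (hρ : ∀ t, HasDerivAt ρ (ρ' t) t) (hper : ρ.Periodic (2 * Real.pi))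
    (hρ0 : ∀ t, ρ t ≠ 0)
    (h : ∀ t, b (ρ t • ellipsePoint e₂ (-e₁) t + ρ' t • ellipsePoint e₁ e₂ t)
      (ρ t • ellipsePoint e₁ e₂ t - z) = 0) :
    b e₁ e₂ = b e₂ e₁ ∧ ∃ c, ∀ t, b (ρ t • ellipsePoint e₁ e₂ t) (ρ t • ellipsePoint e₁ e₂ t) -
      2 * b (ρ t • ellipsePoint e₁ e₂ t) z = c := by
  set Φ : ℝ → ℝ := fun t ↦ b (ρ t • ellipsePoint e₁ e₂ t) (ρ t • ellipsePoint e₁ e₂ t) -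
    2 * b (ρ t • ellipsePoint e₁ e₂ t) z
  have hΦ (t : ℝ) : HasDerivAt Φ (ρ t ^ 2 * (b e₁ e₂ - b e₂ e₁)) t := hasDerivAt_conic (hρ t) (h t)
  have hends : Φ 0 = Φ (2 * Real.pi) := by
    simp only [Φ]
    rw [hper.eq, (ellipsePoint_periodic e₁ e₂).eq]
  obtain ⟨t, -, ht⟩ := exists_hasDerivAt_eq_zero Real.two_pi_pos
    (fun t _ ↦ (hΦ t).continuousAt.continuousWithinAt) hends fun t _ ↦ hΦ t
  have hb : b e₁ e₂ = b e₂ e₁ :=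
    sub_eq_zero.mp ((mul_eq_zero_iff_left (pow_ne_zero 2 (hρ0 t))).mp ht)
  refine ⟨hb, Φ 0, fun t ↦
    is_const_of_deriv_eq_zero (fun s ↦ (hΦ s).differentiableAt) (fun s ↦ ?_) t 0⟩
  rw [(hΦ s).deriv, hb, sub_self, mul_zero]

end Conic

/-- The normals `n` of the planes `⟪n, ·⟫ = 1` through `z` that do not separate points of `L`
from `O`. -/
def supportNormals (L : Set E3) (z : E3) : Set E3 := {n | ⟪n, z⟫ = 1 ∧ ∀ l ∈ L, ⟪n, l⟫ ≤ 1}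

lemma isCompact_supportNormals {L : Set E3} (h0 : 0 ∈ interior L) (z : E3) :
    IsCompact (supportNormals L z) := by
  obtain ⟨R, hR⟩ := exists_norm_le_of_inner_le_one h0
  refine isCompact_of_isClosed_isBounded ?_ (isBounded_iff_forall_norm_le.mpr
    ⟨R, fun n hn ↦ hR n hn.2⟩)
  simp only [supportNormals, ofPred_and, ofPred_forall]
  exact (isClosed_eq (by fun_prop) (by fun_prop)).inter
    (isClosed_biInter fun l _ ↦ isClosed_le (by fun_prop) (by fun_prop))

lemma AvoidsLine.exists_add_smul_mem_supportNormals {L : Set E3} {z d e : E3} (hL : IsCompact L)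
    (hconv : Convex ℝ L) (h0 : 0 ∈ L) (h : AvoidsLine L z d) (he : ⟪e, z⟫ = 0) :
    ∃ m, ⟪m, z⟫ = 1 ∧ ⟪m, d⟫ = 0 ∧ ∃ ε : ℝ, 0 < ε ∧ m + ε • e ∈ supportNormals L z := by
  obtain ⟨m, hmz, hmd, c, hc, hmL⟩ := h.exists_separating hL hconv h0
  obtain ⟨M, hM⟩ := hL.bddAbove_image (f := fun l ↦ ⟪e, l⟫) (by fun_prop)
  have hM0 : 0 ≤ M := by simpa using hM (mem_image_of_mem _ h0)
  refine ⟨m, hmz, hmd, (1 - c) / (M + 1), div_pos (sub_pos.mpr hc) (by positivity), ?_, ?_⟩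
  · rw [inner_add_left, real_inner_smul_left, hmz, he, mul_zero, add_zero]
  · intro l hl
    rw [inner_add_left, real_inner_smul_left]
    calc ⟪m, l⟫ + (1 - c) / (M + 1) * ⟪e, l⟫ ≤ c + (1 - c) / (M + 1) * (M + 1) := by
          have := sub_pos.mpr hc
          gcongr
          · exact hmL l hl
          · exact (hM (mem_image_of_mem _ hl)).trans (by linarith)
      _ = 1 := by field_simp; ring

namespace AlmostFreePair

variable {K L : Set E3} {Δ : E3 → AffineSubspace ℝ E3} {x z k n m p : E3}

lemma exists_isMaxOn_supportNormals (S : AlmostFreePair K L Δ) (hz : z ∈ frontier K)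
    (hk : HasGradientAt (gauge K) k z) :
    ∃ n : E3 → E3, ∀ x, n x ∈ supportNormals L z ∧
      IsMaxOn (fun m ↦ ⟪m, x⟫) (supportNormals L z) (n x) := by
  have hkN : k ∈ supportNormals L z :=
    ⟨S.inner_gradient_self hz hk, fun l hl ↦ (S.inner_gradient_lt_one hk hl).le⟩
  choose n hn using fun x : E3 ↦ (isCompact_supportNormals S.zero_mem_interior z).exists_isMaxOn
    ⟨k, hkN⟩ (f := fun m ↦ ⟪m, x⟫) (by fun_prop)
  exact ⟨n, hn⟩

lemma exists_inner_gt (S : AlmostFreePair K L Δ) (hkz : ⟪k, z⟫ = 1) (hkx : ⟪k, x⟫ = 0)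
    (hx : x ≠ 0) {d : E3} (hd : AvoidsLine L z d) :
    ∃ m m', ⟪m, z⟫ = 1 ∧ ⟪m, d⟫ = 0 ∧ m' ∈ supportNormals L z ∧ ⟪m, x⟫ < ⟪m', x⟫ := by
  obtain ⟨m, hmz, hmd, ε, hε, hm⟩ := hd.exists_add_smul_mem_supportNormals (e := x - ⟪x, z⟫ • k)
    S.isCompact_inner S.strictConvex_inner.convex (interior_subset S.zero_mem_interior)
    (by rw [inner_sub_left, real_inner_smul_left, hkz, mul_one, sub_self])
  refine ⟨m, _, hmz, hmd, hm, ?_⟩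
  rw [inner_add_left, real_inner_smul_left, inner_sub_left, real_inner_smul_left, hkx, mul_zero,
    sub_zero]
  exact lt_add_of_pos_right _ (mul_pos hε (real_inner_self_pos.mpr hx))

lemma inner_pos_of_isMaxOn (S : AlmostFreePair K L Δ) (hz : z ∈ frontier K)
    (hk : HasGradientAt (gauge K) k z) (hkx : ⟪k, x⟫ = 0) (hx : x ≠ 0)
    (hmax : IsMaxOn (fun m ↦ ⟪m, x⟫) (supportNormals L z) n) : 0 < ⟪n, x⟫ := by
  obtain ⟨m, m', -, hmx, hmem, hlt⟩ := S.exists_inner_gt (S.inner_gradient_self hz hk) hkx hx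
    (S.avoidsLine_gradient hz hk ⟨x, Submodule.mem_orthogonal_singleton_iff_inner_right.mpr hkx⟩)
  exact (hmx ▸ hlt).trans_le (hmax hmem)

/-- Otherwise the support plane could be tilted about the line towards larger values. -/
lemma exists_mem_line_of_isMaxOn (S : AlmostFreePair K L Δ) (hz : z ∈ frontier K)
    (hk : HasGradientAt (gauge K) k z) (hkx : ⟪k, x⟫ = 0) (hx : x ≠ 0)
    (hmax : IsMaxOn (fun m ↦ ⟪m, x⟫) (supportNormals L z) n) :
    ∃ s : ℝ, z + s • (⟪n, x⟫⁻¹ • x - z) ∈ L := by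
  by_contra! hline
  obtain ⟨m, m', hmz, hmx, hm', hlt⟩ := S.exists_inner_gt (S.inner_gradient_self hz hk) hkx hx hline
  rw [inner_sub_right, inner_smul_right, hmz, sub_eq_zero,
    inv_mul_eq_one₀ (S.inner_pos_of_isMaxOn hz hk hkx hx hmax).ne'] at hmx
  exact (hmx ▸ hlt).not_ge (hmax hm')

lemma isContact_of_isMaxOn (S : AlmostFreePair K L Δ) (hz : z ∈ frontier K)
    (hk : HasGradientAt (gauge K) k z) (hkx : ⟪k, x⟫ = 0) (hx : x ≠ 0)
    (hn : n ∈ supportNormals L z) (hmax : IsMaxOn (fun m ↦ ⟪m, x⟫) (supportNormals L z) n)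
    {s : ℝ} (hs : z + s • (⟪n, x⟫⁻¹ • x - z) ∈ L) :
    IsContact L n (z + s • (⟪n, x⟫⁻¹ • x - z)) where
  mem := hs
  inner_eq := by
    rw [inner_add_right, inner_smul_right, inner_sub_right, inner_smul_right, hn.1,
      inv_mul_cancel₀ (S.inner_pos_of_isMaxOn hz hk hkx hx hmax).ne', sub_self, mul_zero, add_zero]
  inner_le := hn.2

lemma eq_of_isMaxOn (S : AlmostFreePair K L Δ) (hz : z ∈ frontier K)
    (hk : HasGradientAt (gauge K) k z) (hkx : ⟪k, x⟫ = 0) (hx : x ≠ 0)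
    (hn : n ∈ supportNormals L z) (hnmax : IsMaxOn (fun m ↦ ⟪m, x⟫) (supportNormals L z) n)
    (hm : m ∈ supportNormals L z) (hmmax : IsMaxOn (fun m ↦ ⟪m, x⟫) (supportNormals L z) m) :
    m = n := by
  obtain ⟨s, hs⟩ := S.exists_mem_line_of_isMaxOn hz hk hkx hx hnmax
  have hmn : ⟪m, x⟫ = ⟪n, x⟫ := le_antisymm (hnmax hm) (hmmax hn)
  refine S.normal_unique ?_ (S.isContact_of_isMaxOn hz hk hkx hx hn hnmax hs)
  exact hmn ▸ S.isContact_of_isMaxOn hz hk hkx hx hm hmmax (hmn ▸ hs)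

lemma isMaxOn_of_isContact (S : AlmostFreePair K L Δ) (hk : HasGradientAt (gauge K) k z)
    (hp : IsContact L n p) (hnz : ⟪n, z⟫ = 1) :
    IsMaxOn (fun m ↦ ⟪m, z + (1 - ⟪k, p⟫)⁻¹ • (p - z)⟫) (supportNormals L z) n := by
  intro m hm
  have hkp := inv_pos.mpr (sub_pos.mpr (S.inner_gradient_lt_one hk hp.mem))
  simp only [mem_ofPred_eq, inner_add_right, inner_smul_right, inner_sub_right, hm.1, hnz,
    hp.inner_eq]
  gcongr
  exact hm.2 p hp.mem

lemma bilinForm_apply_eq_zero (S : AlmostFreePair K L Δ) (hz : z ∈ frontier K)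
    (hk : HasGradientAt (gauge K) k z) {b : LinearMap.BilinForm ℝ E3}
    (hb : ∀ n p, IsContact L n p → ⟪n, z⟫ = 1 → ∀ x, ⟪k, x⟫ = 0 → ⟪n, x⟫ = 0 → b x (p - z) = 0)
    (hkx : ⟪k, x⟫ = 0) (hx : x ≠ 0) (hn : n ∈ supportNormals L z)
    (hmax : IsMaxOn (fun m ↦ ⟪m, x⟫) (supportNormals L z) n) {v : E3} (hkv : ⟪k, v⟫ = 0)
    (hnv : ⟪n, v⟫ = 0) : b v (⟪n, x⟫⁻¹ • x - z) = 0 := by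
  obtain ⟨s, hs⟩ := S.exists_mem_line_of_isMaxOn hz hk hkx hx hmax
  have hs0 : s ≠ 0 := by
    rintro rfl
    exact S.notMem hz (by simpa using hs)
  have hbv := hb n _ (S.isContact_of_isMaxOn hz hk hkx hx hn hmax hs) hn.1 v hkv hnv
  rwa [add_sub_cancel_left, map_smul, smul_eq_mul, mul_eq_zero_iff_left hs0] at hbv

end AlmostFreePair

lemma ellipsePoint_ne_zero {e₁ e₂ : E3} (h : cross e₁ e₂ ≠ 0) (t : ℝ) :
    ellipsePoint e₁ e₂ t ≠ 0 := by
  intro h0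
  have hcos : Real.cos t • cross e₁ e₂ = 0 := by
    simpa [ellipsePoint] using congrArg (fun x ↦ cross x e₂) h0
  have hsin : Real.sin t • cross e₁ e₂ = 0 := by
    simpa [ellipsePoint] using congrArg (cross e₁) h0
  have hone := Real.cos_sq_add_sin_sq t
  rw [(smul_eq_zero_iff_left h).mp hcos, (smul_eq_zero_iff_left h).mp hsin] at hone
  norm_num at hone

lemma inner_ellipsePoint_eq_zero {k e₁ e₂ : E3} (h₁ : ⟪k, e₁⟫ = 0) (h₂ : ⟪k, e₂⟫ = 0) (t : ℝ) :
    ⟪k, ellipsePoint e₁ e₂ t⟫ = 0 := by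
  rw [ellipsePoint, inner_add_right, inner_smul_right, inner_smul_right, h₁, h₂, mul_zero,
    mul_zero, add_zero]

lemma exists_eq_smul_add_smul_of_inner_eq_zero {k u v x : E3} (hk : k ≠ 0) (h : cross u v ≠ 0)
    (hu : ⟪k, u⟫ = 0) (hv : ⟪k, v⟫ = 0) (hx : ⟪k, x⟫ = 0) : ∃ s t : ℝ, x = s • u + t • v := by
  obtain ⟨r, rfl⟩ := exists_eq_smul_cross h hu hv
  rw [real_inner_smul_left, mul_eq_zero_iff_left (left_ne_zero_of_smul hk)] at hx
  exact exists_eq_smul_add_smul h hx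

namespace AlmostFreePair

variable {K L : Set E3} {Δ : E3 → AffineSubspace ℝ E3} {z k e₁ e₂ : E3}
  {b : LinearMap.BilinForm ℝ E3}

lemma hasDerivAt_support (S : AlmostFreePair K L Δ) (hz : z ∈ frontier K)
    (hk : HasGradientAt (gauge K) k z) (h₁ : ⟪k, e₁⟫ = 0) (h₂ : ⟪k, e₂⟫ = 0)
    (h : cross e₁ e₂ ≠ 0) {n : E3 → E3} (hn : ∀ x, n x ∈ supportNormals L z)
    (hmax : ∀ x, IsMaxOn (fun m ↦ ⟪m, x⟫) (supportNormals L z) (n x)) (t : ℝ) :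
    HasDerivAt (fun t ↦ ⟪n (ellipsePoint e₁ e₂ t), ellipsePoint e₁ e₂ t⟫)
      ⟪n (ellipsePoint e₁ e₂ t), ellipsePoint e₂ (-e₁) t⟫ t :=
  hasDerivAt_inner_of_unique_isMaxOn (n := fun t ↦ n (ellipsePoint e₁ e₂ t))
    (isCompact_supportNormals S.zero_mem_interior z) (fun _ ↦ hn _) (fun _ ↦ hmax _)
    (fun _ ↦ S.eq_of_isMaxOn hz hk (inner_ellipsePoint_eq_zero h₁ h₂ t) (ellipsePoint_ne_zero h t)
      (hn _) (hmax _)) (hasDerivAt_ellipsePoint e₁ e₂ t)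

/-- The projection of `L` from `z` to `k^⊥` is bounded by a conic. -/
lemma exists_conic (S : AlmostFreePair K L Δ) (hz : z ∈ frontier K)
    (hk : HasGradientAt (gauge K) k z)
    (hb : ∀ n p, IsContact L n p → ⟪n, z⟫ = 1 → ∀ x, ⟪k, x⟫ = 0 → ⟪n, x⟫ = 0 → b x (p - z) = 0)
    (h₁ : ⟪k, e₁⟫ = 0) (h₂ : ⟪k, e₂⟫ = 0) (h : cross e₁ e₂ ≠ 0) :
    b e₁ e₂ = b e₂ e₁ ∧ ∃ c, ∀ n ∈ supportNormals L z, ∀ x,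
      IsMaxOn (fun m ↦ ⟪m, x⟫) (supportNormals L z) n → ⟪k, x⟫ = 0 → ⟪n, x⟫ = 1 →
      b x x - 2 * b x z = c := by
  obtain ⟨N, hN⟩ := S.exists_isMaxOn_supportNormals hz hk
  set u := ellipsePoint e₁ e₂
  have hku (t : ℝ) : ⟪k, u t⟫ = 0 := inner_ellipsePoint_eq_zero h₁ h₂ t
  have hu0 (t : ℝ) : u t ≠ 0 := ellipsePoint_ne_zero h t
  have hpos (t : ℝ) := S.inner_pos_of_isMaxOn hz hk (hku t) (hu0 t) (hN (u t)).2
  have hσ (t : ℝ) :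
      HasDerivAt (fun t ↦ ⟪N (u t), u t⟫) ⟪N (u t), ellipsePoint e₂ (-e₁) t⟫ t :=
    S.hasDerivAt_support hz hk h₁ h₂ h (fun x ↦ (hN x).1) (fun x ↦ (hN x).2) t
  have htangent (t : ℝ) :
      ⟪N (u t), ⟪N (u t), u t⟫⁻¹ • ellipsePoint e₂ (-e₁) t +
        (-⟪N (u t), ellipsePoint e₂ (-e₁) t⟫ / ⟪N (u t), u t⟫ ^ 2) • u t⟫ = 0 := by
    have hσ0 := (hpos t).ne'
    rw [inner_add_right, inner_smul_right, inner_smul_right]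
    field_simp
    ring
  obtain ⟨hsymm, c, hc⟩ := conic_eq_of_periodic (b := b) (z := z) (e₁ := e₁) (e₂ := e₂)
    (ρ := fun t ↦ ⟪N (u t), u t⟫⁻¹) (fun t ↦ (hσ t).fun_inv (hpos t).ne')
    ((ellipsePoint_periodic e₁ e₂).comp fun v ↦ ⟪N v, v⟫⁻¹) (fun t ↦ inv_ne_zero (hpos t).ne')
    (fun t ↦ S.bilinForm_apply_eq_zero hz hk hb (hku t) (hu0 t) (hN _).1 (hN _).2
      (by simp [inner_add_right, inner_smul_right, ellipsePoint, h₁, h₂]) (htangent t))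
  refine ⟨hsymm, c, fun n hn x hmax hkx hnx ↦ ?_⟩
  obtain ⟨α, β, hαβ⟩ := exists_eq_smul_add_smul_of_inner_eq_zero (S.gradient_ne_zero hz hk) h h₁
    h₂ hkx
  obtain ⟨r, t, hr, hrt⟩ := exists_eq_smul_ellipsePoint e₁ e₂ α β
  obtain rfl : x = r • u t := hαβ.trans hrt
  rw [inner_smul_right] at hnx
  have hr0 : 0 < r := hr.lt_of_ne' (left_ne_zero_of_mul_eq_one hnx)
  have hmaxu : IsMaxOn (fun m ↦ ⟪m, u t⟫) (supportNormals L z) n := fun m hm ↦ by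
    simpa [inner_smul_right, hr0] using hmax hm
  rw [S.eq_of_isMaxOn hz hk (hku t) (hu0 t) (hN _).1 (hN _).2 hn hmaxu] at hnx
  rw [eq_inv_of_mul_eq_one_left hnx]
  exact hc t

end AlmostFreePair

lemma exists_cross_ne_zero_orthogonal {k : E3} (hk : k ≠ 0) :
    ∃ u v : E3, ⟪k, u⟫ = 0 ∧ ⟪k, v⟫ = 0 ∧ cross u v ≠ 0 := by
  obtain ⟨u, hu, hku, -⟩ := exists_ne_zero_orthogonal k k
  obtain ⟨v, hv⟩ := exists_cross_ne_zero hk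
    (x := ⟨u, Submodule.mem_orthogonal_singleton_iff_inner_right.mpr hku⟩) (by simpa using hu)
  exact ⟨u, v, hku, Submodule.mem_orthogonal_singleton_iff_inner_right.mp v.2, hv⟩

section ConicForm

variable {b : LinearMap.BilinForm ℝ E3} {k z x y : E3} {c : ℝ}

/-- The homogenization of the polynomial `b y y - 2 * b y z - c` on `k^⊥`: its value at `y - z`
with `y ∈ k^⊥` is that polynomial, so that its null cone, translated to `z`, is the cone with apex
`z` over the conic. Here `⟪k, z⟫ = 1`. -/
def conicForm (b : LinearMap.BilinForm ℝ E3) (k z : E3) (c : ℝ) : LinearMap.BilinForm ℝ E3 :=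
  LinearMap.mk₂ ℝ (fun x y ↦ b (x - ⟪k, x⟫ • z) (y - ⟪k, y⟫ • z) + ⟪k, y⟫ * b (x - ⟪k, x⟫ • z) z +
      ⟪k, x⟫ * b (y - ⟪k, y⟫ • z) z - c * (⟪k, x⟫ * ⟪k, y⟫))
    (fun x x' y ↦ by simp [inner_add_right]; ring) (fun r x y ↦ by simp [inner_smul_right]; ring)
    (fun x y y' ↦ by simp [inner_add_right]; ring) (fun r x y ↦ by simp [inner_smul_right]; ring)

lemma conicForm_apply (x y : E3) : conicForm b k z c x y =
    b (x - ⟪k, x⟫ • z) (y - ⟪k, y⟫ • z) + ⟪k, y⟫ * b (x - ⟪k, x⟫ • z) z +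
      ⟪k, x⟫ * b (y - ⟪k, y⟫ • z) z - c * (⟪k, x⟫ * ⟪k, y⟫) := rfl

lemma isSymm_conicForm (hkz : ⟪k, z⟫ = 1)
    (hb : ∀ x y, ⟪k, x⟫ = 0 → ⟪k, y⟫ = 0 → b x y = b y x) : (conicForm b k z c).IsSymm := by
  have hproj (x : E3) : ⟪k, x - ⟪k, x⟫ • z⟫ = 0 := by
    rw [inner_sub_right, inner_smul_right, hkz, mul_one, sub_self]
  refine ⟨fun x y ↦ ?_⟩
  rw [conicForm_apply, conicForm_apply, hb _ _ (hproj x) (hproj y)]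
  ring

lemma conicForm_sub_self (hkz : ⟪k, z⟫ = 1) (hky : ⟪k, y⟫ = 0) :
    conicForm b k z c (y - z) (y - z) = b y y - 2 * b y z - c := by
  rw [conicForm_apply, inner_sub_right, hky, hkz, zero_sub, neg_one_smul, sub_neg_eq_add,
    sub_add_cancel]
  ring

lemma conicForm_sub (hkz : ⟪k, z⟫ = 1) (hky : ⟪k, y⟫ = 0) (hkx : ⟪k, x⟫ = 0) :
    conicForm b k z c (y - z) x = b y x - b x z := by
  rw [conicForm_apply, inner_sub_right, hky, hkz, hkx, zero_sub, neg_one_smul, sub_neg_eq_add,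
    sub_add_cancel, zero_smul, sub_zero]
  ring

lemma conicForm_sub_eq_mul_inner {n : E3} (hkz : ⟪k, z⟫ = 1)
    (hb : ∀ x y, ⟪k, x⟫ = 0 → ⟪k, y⟫ = 0 → b x y = b y x) (hnz : ⟪n, z⟫ = 1) (hky : ⟪k, y⟫ = 0)
    (hny : ⟪n, y⟫ = 1) (hy : b y y - 2 * b y z = c)
    (hn : ∀ x, ⟪k, x⟫ = 0 → ⟪n, x⟫ = 0 → b x (y - z) = 0) (u : E3) :
    conicForm b k z c (y - z) u = b y (y - z) * ⟪n, u⟫ := by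
  have horth {v : E3} (hkv : ⟪k, v⟫ = 0) : conicForm b k z c (y - z) v = b v (y - z) := by
    rw [conicForm_sub hkz hky hkv, map_sub, hb y v hky hkv]
  set w := u - ⟪n, u⟫ • y + ⟪k, u⟫ • (y - z) with hw
  have hkw : ⟪k, w⟫ = 0 := by
    simp [hw, inner_add_right, inner_sub_right, inner_smul_right, hky, hkz]
  have hnw : ⟪n, w⟫ = 0 := by
    simp [hw, inner_add_right, inner_sub_right, inner_smul_right, hny, hnz]
  have hu : u = ⟪n, u⟫ • y + w - ⟪k, u⟫ • (y - z) := by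
    rw [hw]
    abel
  calc conicForm b k z c (y - z) u
      = ⟪n, u⟫ * conicForm b k z c (y - z) y + conicForm b k z c (y - z) w -
          ⟪k, u⟫ * conicForm b k z c (y - z) (y - z) := by
        conv_lhs => rw [hu]
        rw [map_sub, map_add, map_smul, map_smul, smul_eq_mul, smul_eq_mul]
    _ = b y (y - z) * ⟪n, u⟫ := by
        rw [horth hky, horth hkw, hn w hkw hnw, conicForm_sub_self hkz hky, hy, sub_self]
        ring

end ConicForm

/-- `B` is a quadratic form for which the cone with apex `z` touching `L` is isotropic: the plane of
support of `L` through `z` touching `L` at `p` has the `B`-polar plane of `p - z` as direction. -/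
structure IsPolarForm (L : Set E3) (z : E3) (B : LinearMap.BilinForm ℝ E3) : Prop where
  isSymm : B.IsSymm
  exists_eq_mul_inner : ∀ ⦃n p⦄, IsContact L n p → ⟪n, z⟫ = 1 →
    ∃ μ ≠ 0, ∀ u, B (p - z) u = μ * ⟪n, u⟫

namespace AlmostFreePair

variable {K L : Set E3} {Δ : E3 → AffineSubspace ℝ E3} {z k : E3}

/-- Every contact point `p` for `z` is recorded by the intersection `y` of the line `zp` with
`k^⊥`. -/
lemma exists_symm_bilinForm (S : AlmostFreePair K L Δ) (hz : z ∈ frontier K)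
    (hk : HasGradientAt (gauge K) k z) :
    ∃ (b : LinearMap.BilinForm ℝ E3) (c : ℝ),
      (∀ x y, ⟪k, x⟫ = 0 → ⟪k, y⟫ = 0 → b x y = b y x) ∧
      ∀ n p, IsContact L n p → ⟪n, z⟫ = 1 → ∃ κ ≠ (0 : ℝ), ∃ y, p - z = κ • (y - z) ∧ ⟪k, y⟫ = 0 ∧
        ⟪n, y⟫ = 1 ∧ b y y - 2 * b y z = c ∧ b y (y - z) ≠ 0 ∧
        ∀ x, ⟪k, x⟫ = 0 → ⟪n, x⟫ = 0 → b x (y - z) = 0 := by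
  obtain ⟨b, hb⟩ := S.exists_bilinForm hz hk
  have hkz := S.inner_gradient_self hz hk
  have hk0 := S.gradient_ne_zero hz hk
  obtain ⟨e₁, e₂, h₁, h₂, h⟩ := exists_cross_ne_zero_orthogonal hk0
  obtain ⟨hb₁₂, c, hc⟩ := S.exists_conic hz hk (fun n p hp hnz ↦ (hb n p hp hnz).1) h₁ h₂ h
  refine ⟨b, c, fun x y hx hy ↦ ?_, fun n p hp hnz ↦ ?_⟩
  · obtain ⟨s, t, rfl⟩ := exists_eq_smul_add_smul_of_inner_eq_zero hk0 h h₁ h₂ hx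
    obtain ⟨s', t', rfl⟩ := exists_eq_smul_add_smul_of_inner_eq_zero hk0 h h₁ h₂ hy
    simp only [map_add, map_smul, LinearMap.add_apply, LinearMap.smul_apply, smul_eq_mul, hb₁₂]
    ring
  set κ := 1 - ⟪k, p⟫
  have hκ : κ ≠ 0 := (sub_pos.mpr (S.inner_gradient_lt_one hk hp.mem)).ne'
  set y := z + κ⁻¹ • (p - z) with hy
  have hyz : y - z = κ⁻¹ • (p - z) := add_sub_cancel_left _ _
  have hky : ⟪k, y⟫ = 0 := by
    rw [hy, inner_add_right, inner_smul_right, inner_sub_right, hkz, ← neg_sub 1, mul_neg,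
      inv_mul_cancel₀ hκ, add_neg_cancel]
  have hny : ⟪n, y⟫ = 1 := by
    rw [hy, inner_add_right, inner_smul_right, inner_sub_right, hnz, hp.inner_eq, sub_self,
      mul_zero, add_zero]
  obtain ⟨hzero, hne⟩ := hb n p hp hnz
  refine ⟨κ, hκ, y, by rw [hyz, smul_inv_smul₀ hκ], hky, hny,
    hc n ⟨hnz, hp.inner_le⟩ y (S.isMaxOn_of_isContact hk hp hnz) hky hny, ?_, fun x hkx hnx ↦ ?_⟩
  · rw [hyz, map_smul]
    exact smul_ne_zero (inv_ne_zero hκ) (hne y hky (by rw [hny]; exact one_ne_zero))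
  · rw [hyz, map_smul, hzero x hkx hnx, smul_zero]

lemma exists_isPolarForm (S : AlmostFreePair K L Δ) (hz : z ∈ frontier K)
    (hk : HasGradientAt (gauge K) k z) : ∃ B, IsPolarForm L z B := by
  obtain ⟨b, c, hsymm, hb⟩ := S.exists_symm_bilinForm hz hk
  have hkz := S.inner_gradient_self hz hk
  refine ⟨conicForm b k z c, isSymm_conicForm hkz hsymm, fun n p hp hnz ↦ ?_⟩
  obtain ⟨κ, hκ, y, hpz, hky, hny, hyc, hne, hzero⟩ := hb n p hp hnz
  refine ⟨κ * b y (y - z), mul_ne_zero hκ hne, fun u ↦ ?_⟩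
  rw [hpz, map_smul, LinearMap.smul_apply,
    conicForm_sub_eq_mul_inner hkz hsymm hnz hky hny hyc hzero, smul_eq_mul, mul_assoc]

end AlmostFreePair

/-! ### Symmetry -/

namespace IsPolarForm

variable {L : Set E3} {B : LinearMap.BilinForm ℝ E3} {z n m p q v : E3}

lemma apply_sub_apex_eq_zero (hB : IsPolarForm L z B) (hp : IsContact L n p) (hnz : ⟪n, z⟫ = 1)
    (hnv : ⟪n, v⟫ = 0) : B (p - z) v = 0 := by
  obtain ⟨μ, -, hμ⟩ := hB.exists_eq_mul_inner hp hnz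
  rw [hμ, hnv, mul_zero]

lemma apply_sub_eq_zero (hB : IsPolarForm L z B) (hp : IsContact L n p) (hq : IsContact L m q)
    (hnz : ⟪n, z⟫ = 1) (hmz : ⟪m, z⟫ = 1) (hnv : ⟪n, v⟫ = 0) (hmv : ⟪m, v⟫ = 0) :
    B (p - q) v = 0 := by
  rw [← sub_sub_sub_cancel_right p q z, map_sub, LinearMap.sub_apply,
    hB.apply_sub_apex_eq_zero hp hnz hnv, hB.apply_sub_apex_eq_zero hq hmz hmv, sub_self]

lemma apply_sub_self_ne_zero (hB : IsPolarForm L z B) (hL : StrictConvex ℝ L)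
    (hp : IsContact L n p) (hq : IsContact L m q) (hnz : ⟪n, z⟫ = 1) (hmz : ⟪m, z⟫ = 1)
    (hpq : p ≠ q) : B (p - q) (p - q) ≠ 0 := by
  obtain ⟨μ, hμ0, hμ⟩ := hB.exists_eq_mul_inner hp hnz
  have hpp : B (p - z) (p - z) = 0 := hB.apply_sub_apex_eq_zero hp hnz
    (by rw [inner_sub_right, hp.inner_eq, hnz, sub_self])
  have hqq : B (q - z) (q - z) = 0 := hB.apply_sub_apex_eq_zero hq hmz
    (by rw [inner_sub_right, hq.inner_eq, hmz, sub_self])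
  have hcross : B (p - z) (q - z) ≠ 0 := by
    rw [hμ, inner_sub_right, hnz]
    exact mul_ne_zero hμ0 (sub_ne_zero.mpr fun h ↦
      hpq (hp.eq_of_inner_eq hL hq.mem h).symm)
  have hexpand : B (p - q) (p - q) = -(2 * B (p - z) (q - z)) := by
    rw [← sub_sub_sub_cancel_right p q z, map_sub B (p - z), LinearMap.sub_apply,
      map_sub (B (p - z)) (p - z), map_sub (B (q - z)) (p - z), hpp, hqq,
      hB.isSymm.eq (p - z) (q - z)]
    ring
  rw [hexpand]
  exact neg_ne_zero.mpr (mul_ne_zero two_ne_zero hcross)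

end IsPolarForm

namespace AlmostFreePair

variable {K L : Set E3} {Δ : E3 → AffineSubspace ℝ E3} {w z : E3} {B : LinearMap.BilinForm ℝ E3}

lemma pole_ne_zero (S : AlmostFreePair K L Δ) (hz : z ∈ frontier K) : pole (Δ z) ≠ 0 :=
  fun h ↦ S.inner_pole_self_ne_zero hz (by rw [h, inner_zero_left])

lemma cross_pole_ne_zero (S : AlmostFreePair K L Δ) (hz : z ∈ frontier K) (hw : w ∈ frontier K)
    (hzw : w ∈ (Δ z).direction) : cross (pole (Δ z)) (pole (Δ w)) ≠ 0 := by
  intro h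
  obtain ⟨t, ht⟩ := exists_eq_smul_of_cross_eq_zero (S.pole_ne_zero hz) h
  refine S.inner_pole_self_ne_zero hw ?_
  rw [ht, real_inner_smul_left, (S.mem_direction_iff hz).mp hzw, mul_zero]

lemma inner_pole_eq_neg_one {n p : E3} (S : AlmostFreePair K L Δ) (hw : w ∈ frontier K)
    (hp : IsContact L n p) (hn : ⟪n, -w⟫ = 1) : ⟪pole (Δ w), p⟫ = -1 := by
  have h := S.inner_pole hw ⟨-n, hp.neg S.symm_inner, by rwa [inner_neg_left, ← inner_neg_right]⟩
  rwa [inner_neg_right, neg_eq_iff_eq_neg] at h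

lemma exists_sub_eq_smul_cross {n m p q : E3} (S : AlmostFreePair K L Δ) (hz : z ∈ frontier K)
    (hw : w ∈ frontier K) (hzw : w ∈ (Δ z).direction) (hp : IsContact L n p)
    (hq : IsContact L m q) (hpq : p ≠ q) (hnz : ⟪n, z⟫ = 1) (hmz : ⟪m, z⟫ = 1)
    (h : ⟪pole (Δ w), p⟫ = ⟪pole (Δ w), q⟫) :
    ∃ s : ℝ, s ≠ 0 ∧ p - q = s • cross (pole (Δ z)) (pole (Δ w)) := by
  obtain ⟨s, hs⟩ := exists_eq_smul_cross (S.cross_pole_ne_zero hz hw hzw) (x := p - q)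
    (by rw [real_inner_comm, inner_sub_right, S.inner_pole hz ⟨n, hp, hnz⟩,
      S.inner_pole hz ⟨m, hq, hmz⟩, sub_self])
    (by rw [real_inner_comm, inner_sub_right, h, sub_self])
  refine ⟨s, ?_, hs⟩
  rintro rfl
  exact hpq (sub_eq_zero.mp (by rw [hs, zero_smul]))

/-- The contact chords of the lines through `z` in the directions `w - z` and `w + z` are parallel,
so their common direction `d` is conjugate to both `w - z` and `w + z`. -/
lemma exists_conjugate_chord (S : AlmostFreePair K L Δ) (hz : z ∈ frontier K)
    (hB : IsPolarForm L z B) (hw : w ∈ frontier K) (hzw : w ∈ (Δ z).direction) :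
    ∃ d, ⟪pole (Δ z), d⟫ = 0 ∧ ⟪pole (Δ w), d⟫ = 0 ∧ B d z = 0 ∧ B d w = 0 ∧ B d d ≠ 0 := by
  obtain ⟨n, p, m, q, hp, hq, hpq, hnz, hnw, hmz, hmw⟩ := S.exists_isContact_pair hz hw hzw
  obtain ⟨n', p', m', q', hp', hq', hpq', hnz', hnw', hmz', hmw'⟩ :=
    S.exists_isContact_pair hz (neg_mem_frontier S.symm_outer hw) ((Δ z).direction.neg_mem hzw)
  obtain ⟨s, hs0, hs⟩ := S.exists_sub_eq_smul_cross hz hw hzw hp hq hpq hnz hmz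
    ((S.inner_pole hw ⟨n, hp, hnw⟩).trans (S.inner_pole hw ⟨m, hq, hmw⟩).symm)
  obtain ⟨t, ht0, ht⟩ := S.exists_sub_eq_smul_cross hz hw hzw hp' hq' hpq' hnz' hmz'
    ((S.inner_pole_eq_neg_one hw hp' hnw').trans (S.inner_pole_eq_neg_one hw hq' hmw').symm)
  have hsub : B (p - q) (w - z) = 0 := hB.apply_sub_eq_zero hp hq hnz hmz
    (by rw [inner_sub_right, hnw, hnz, sub_self]) (by rw [inner_sub_right, hmw, hmz, sub_self])
  have hadd : B (p' - q') (-w - z) = 0 := hB.apply_sub_eq_zero hp' hq' hnz' hmz'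
    (by rw [inner_sub_right, hnw', hnz', sub_self]) (by rw [inner_sub_right, hmw', hmz', sub_self])
  have hself := hB.apply_sub_self_ne_zero S.strictConvex_inner hp hq hnz hmz hpq
  rw [hs, map_smul, LinearMap.smul_apply, smul_eq_mul, mul_eq_zero_iff_left hs0, map_sub] at hsub
  rw [ht, map_smul, LinearMap.smul_apply, smul_eq_mul, mul_eq_zero_iff_left ht0, map_sub,
    map_neg] at hadd
  refine ⟨_, (real_inner_comm _ _).trans (inner_cross_left _ _),
    (real_inner_comm _ _).trans (inner_cross_right _ _), by linarith, by linarith,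
    fun h0 ↦ hself ?_⟩
  rw [hs, map_smul, map_smul, LinearMap.smul_apply, h0, smul_zero, smul_zero]

/-- Iterating `exists_conjugate_chord` from `d` returns to the direction of `w`, so `w` and `d` are
conjugate to each other and to `z`. -/
lemma exists_conjugate_direction (S : AlmostFreePair K L Δ) (hz : z ∈ frontier K)
    (hB : IsPolarForm L z B) (hw : w ∈ frontier K) (hzw : w ∈ (Δ z).direction) :
    ∃ d, ⟪pole (Δ w), d⟫ = 0 ∧ B d z = 0 ∧ B d w = 0 ∧ B w z = 0 ∧ B w w ≠ 0 ∧
      ∀ x, ⟪pole (Δ z), x⟫ = 0 → ∃ s t : ℝ, x = s • d + t • w := by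
  obtain ⟨d, hzd, hwd, hBdz, hBdw, hBdd⟩ := S.exists_conjugate_chord hz hB hw hzw
  have hd0 : d ≠ 0 := by
    rintro rfl
    exact hBdd (map_zero _)
  have hcross : cross d w ≠ 0 := by
    intro h
    obtain ⟨t, rfl⟩ := exists_eq_smul_of_cross_eq_zero hd0 h
    rw [map_smul, smul_eq_mul, mul_eq_zero_iff_right hBdd] at hBdw
    exact S.ne_zero hw (by rw [hBdw, zero_smul])
  have hspan {x : E3} (hx : ⟪pole (Δ z), x⟫ = 0) : ∃ s t : ℝ, x = s • d + t • w :=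
    exists_eq_smul_add_smul_of_inner_eq_zero (S.pole_ne_zero hz) hcross hzd
      ((S.mem_direction_iff hz).mp hzw) hx
  have hdfr := S.radialProj_mem hd0
  obtain ⟨e, hze, -, hBez, hBed, hBee⟩ := S.exists_conjugate_chord hz hB hdfr
    ((Δ z).direction.smul_mem _ ((S.mem_direction_iff hz).mpr hzd))
  have hBed' : B e d = 0 := by
    rw [radialProj, map_smul, smul_eq_mul, mul_eq_zero] at hBed
    exact hBed.resolve_left fun h ↦ S.ne_zero hdfr (by rw [radialProj, h, zero_smul])
  obtain ⟨s, t, rfl⟩ := hspan hze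
  have hs : s = 0 := by
    simpa [hB.isSymm.eq w d, hBdw, hBdd] using hBed'
  subst hs
  simp only [zero_smul, zero_add, map_smul, LinearMap.smul_apply, smul_eq_mul, mul_eq_zero,
    ne_eq, not_or] at hBez hBee
  exact ⟨d, hwd, hBdz, hBdw, hBez.resolve_left hBee.1, hBee.2.2, fun _ ↦ hspan⟩

lemma inner_pole_eq_zero_of_isPolarForm (S : AlmostFreePair K L Δ) (hz : z ∈ frontier K)
    (hB : IsPolarForm L z B) (hw : w ∈ frontier K) (hzw : w ∈ (Δ z).direction) :
    ⟪pole (Δ w), z⟫ = 0 := by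
  obtain ⟨d, hwd, hBdz, hBdw, hBwz, hBww, hspan⟩ := S.exists_conjugate_direction hz hB hw hzw
  obtain ⟨n, p, -, -, hp, -, -, hnz, hnw, -⟩ := S.exists_isContact_pair hz hw hzw
  obtain ⟨n', p', -, -, hp', -, -, hnz', hnw', -⟩ :=
    S.exists_isContact_pair hz (neg_mem_frontier S.symm_outer hw) ((Δ z).direction.neg_mem hzw)
  have hzz := S.inner_pole_self_ne_zero hz
  have hzp := S.inner_pole hz ⟨n, hp, hnz⟩
  have hzp' := S.inner_pole hz ⟨n', hp', hnz'⟩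
  have htangent : B (p - z) (w - z) = 0 := hB.apply_sub_apex_eq_zero hp hnz
    (by rw [inner_sub_right, hnw, hnz, sub_self])
  have htangent' : B (p' - z) (-w - z) = 0 := hB.apply_sub_apex_eq_zero hp' hnz'
    (by rw [inner_sub_right, hnw', hnz', sub_self])
  have hsub : B (p - p') z = 0 := by
    obtain ⟨s, t, hst⟩ := hspan (p - p') (by rw [inner_sub_right, hzp, hzp', sub_self])
    simp [hst, hBdz, hBwz]
  set x := p + p' - (2 * ⟪pole (Δ z), z⟫⁻¹) • z with hx
  have hBxw : B x w = 0 := by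
    simp only [hx, map_add, map_sub, map_neg, map_smul, LinearMap.add_apply, LinearMap.sub_apply,
      LinearMap.smul_apply, smul_zero, hB.isSymm.eq w z ▸ hBwz] at htangent htangent' hsub ⊢
    linarith
  obtain ⟨s, t, hst⟩ := hspan x (by
    rw [hx, inner_sub_right, inner_add_right, inner_smul_right, hzp, hzp', mul_assoc,
      inv_mul_cancel₀ hzz]
    norm_num)
  have ht : t = 0 := by simpa [hst, hBdw, hBww] using hBxw
  have hwx : ⟪pole (Δ w), x⟫ = 0 := by
    rw [hst, ht, zero_smul, add_zero, inner_smul_right, hwd, mul_zero]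
  rw [hx, inner_sub_right, inner_add_right, inner_smul_right, S.inner_pole hw ⟨n, hp, hnw⟩,
    S.inner_pole_eq_neg_one hw hp' hnw', add_neg_cancel, zero_sub, neg_eq_zero] at hwx
  exact (mul_eq_zero.mp hwx).resolve_left (mul_ne_zero two_ne_zero (inv_ne_zero hzz))

/-- Smooth points of `K` are dense in its boundary and the poles vary continuously, so it suffices
to treat smooth `z`, where a polar form exists. -/
theorem mem_direction_symm (S : AlmostFreePair K L Δ) (hz : z ∈ frontier K) (hw : w ∈ frontier K)
    (hzw : w ∈ (Δ z).direction) : z ∈ (Δ w).direction := by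
  rw [S.mem_direction_iff hw]
  obtain ⟨y, hy, hyz⟩ := mem_closure_iff_seq_limit.mp (S.mem_closure_differentiableAt hz)
  have hpole := S.tendsto_pole hz hyz (.of_forall fun i ↦ (hy i).1)
  set x : ℕ → E3 := fun i ↦ w - (⟪pole (Δ (y i)), w⟫ / ⟪pole (Δ (y i)), y i⟫) • y i
  have hx : Tendsto x atTop (𝓝 w) := by
    have h := (tendsto_const_nhds (x := w)).sub (((hpole.inner (tendsto_const_nhds (x := w))).div
      (hpole.inner hyz) (S.inner_pole_self_ne_zero hz)).smul hyz)
    rwa [(S.mem_direction_iff hz).mp hzw, zero_div, zero_smul, sub_zero] at h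
  have hxfr : ∀ᶠ i in atTop, radialProj K (x i) ∈ frontier K :=
    (hx.eventually_ne (S.ne_zero hw)).mono fun _ ↦ S.radialProj_mem
  have hpole' := S.tendsto_pole hw (S.tendsto_radialProj hw hx) hxfr
  refine tendsto_nhds_unique ((hpole'.inner hyz).congr' ?_) tendsto_const_nhds
  filter_upwards [hxfr] with i hi
  obtain ⟨B, hB⟩ := S.exists_isPolarForm (hy i).1 (hy i).2.hasGradientAt
  refine S.inner_pole_eq_zero_of_isPolarForm (hy i).1 hB hi
    ((Δ (y i)).direction.smul_mem _ ((S.mem_direction_iff (hy i).1).mpr ?_))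
  rw [inner_sub_right, inner_smul_right, div_mul_cancel₀ _ (S.inner_pole_self_ne_zero (hy i).1),
    sub_self]

end AlmostFreePair

lemma zero_mem_interior_of_convex_of_eq_neg {E : Type*} [AddCommGroup E] [Module ℝ E]
    [TopologicalSpace E] [IsTopologicalAddGroup E] [ContinuousConstSMul ℝ E] {s : Set E}
    (hs : Convex ℝ s) (hsymm : s = -s) (hne : (interior s).Nonempty) : 0 ∈ interior s := by
  obtain ⟨x, hx⟩ := hne
  have hneg : -x ∈ s := by
    rw [hsymm, Set.neg_mem_neg]
    exact interior_subset hx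
  exact hs.openSegment_interior_self_subset_interior hx hneg
    ⟨1 / 2, 1 / 2, by norm_num, by norm_num, by norm_num, by module⟩

namespace AlmostFreePair

variable {K L : Set E3} {Δ : E3 → AffineSubspace ℝ E3}

lemma radialProj_mem_submodule_iff (S : AlmostFreePair K L Δ) {x : E3} (hx : x ≠ 0)
    (V : Submodule ℝ E3) : radialProj K x ∈ V ↔ x ∈ V :=
  V.smul_mem_iff fun h ↦ S.ne_zero (S.radialProj_mem hx) (by rw [radialProj, h, zero_smul])

/-- Take `z` on the intersection of the planes through the origin parallel to `Δ e₁` and `Δ e₂` for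
two independent directions `e₁`, `e₂` of `u^⊥`. By symmetry the plane through the origin parallel to
`Δ z` is `u^⊥`, and by symmetry again `z` is parallel to `Δ x` for all `x ∈ u^⊥ ∩ bd K`. -/
theorem exists_mem_direction_of_orthogonal (S : AlmostFreePair K L Δ) {u : E3} (hu : u ≠ 0) :
    ∃ z ∈ frontier K, ∀ x ∈ frontier K, ⟪u, x⟫ = 0 → z ∈ (Δ x).direction := by
  obtain ⟨e₁, e₂, h₁, h₂, hcross⟩ := exists_cross_ne_zero_orthogonal hu
  have h₁0 : e₁ ≠ 0 := by
    rintro rfl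
    exact hcross (by rw [map_zero, LinearMap.zero_apply])
  have h₂0 : e₂ ≠ 0 := by
    rintro rfl
    exact hcross (map_zero _)
  obtain ⟨v, hv0, hv₁, hv₂⟩ := exists_ne_zero_orthogonal
    (pole (Δ (radialProj K e₁))) (pole (Δ (radialProj K e₂)))
  have hz := S.radialProj_mem hv0
  have hmem {e : E3} (he : e ≠ 0) (hve : ⟪pole (Δ (radialProj K e)), v⟫ = 0) :
      e ∈ (Δ (radialProj K v)).direction := by
    rw [← S.radialProj_mem_submodule_iff he]
    refine S.mem_direction_symm (S.radialProj_mem he) hz ?_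
    rwa [S.radialProj_mem_submodule_iff hv0, S.mem_direction_iff (S.radialProj_mem he)]
  refine ⟨_, hz, fun x hx hux ↦ S.mem_direction_symm hz hx ?_⟩
  obtain ⟨s, t, rfl⟩ := exists_eq_smul_add_smul_of_inner_eq_zero hu hcross h₁ h₂ hux
  exact add_mem (Submodule.smul_mem _ _ (hmem h₁0 hv₁)) (Submodule.smul_mem _ _ (hmem h₂0 hv₂))

end AlmostFreePair

theorem statement6
    (K L : Set E3)
    (hKcomp : IsCompact K) (hKconv : Convex ℝ K) (hKint : (interior K).Nonempty)
    (hKsym : K = -K)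
    (hLcomp : IsCompact L) (hLconv : Convex ℝ L) (hLint : (interior L).Nonempty)
    (hLsym : L = -L) (hLstrict : StrictConvex ℝ L)
    (hLK : L ⊆ interior K)
    (Δ : E3 → AffineSubspace ℝ E3)
    (hΔ : ∀ z ∈ frontier K, IsPlane (Δ z) ∧ graze L z ⊆ (Δ z : Set E3))
    (hAF : AlmostFree K L Δ) :
    ∀ u : E3, ‖u‖ = 1 → ∃ v : E3, ‖v‖ = 1 ∧
      ∀ x ∈ ((ℝ ∙ u)ᗮ : Submodule ℝ E3).carrier ∩ frontier K,
        v ∈ (Δ x).direction := by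
  intro u hu
  have S : AlmostFreePair K L Δ :=
    { isCompact_outer := hKcomp
      convex_outer := hKconv
      symm_outer := hKsym
      isCompact_inner := hLcomp
      strictConvex_inner := hLstrict
      symm_inner := hLsym
      zero_mem_interior := zero_mem_interior_of_convex_of_eq_neg hLconv hLsym hLint
      subset_interior := hLK
      isPlane := fun z hz ↦ (hΔ z hz).1
      graze_subset := fun z hz ↦ (hΔ z hz).2
      almostFree := hAF }
  obtain ⟨z, hz, hzmem⟩ := S.exists_mem_direction_of_orthogonal (u := u) (by
    rintro rfl
    simp at hu)
  exact ⟨‖z‖⁻¹ • z, norm_smul_inv_norm (S.ne_zero hz), fun x hx ↦ (Δ x).direction.smul_mem _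
    (hzmem x hx.2 (Submodule.mem_orthogonal_singleton_iff_inner_right.mp hx.1))⟩

end
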